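/- arXiv:1310.2777 — 2 statements merged into one kernel-verified Lean document; each statement's English description precedes it below -/
import Mathlib

section
/- Strongly derived unboundedness is invariant under derived equivalence: if A and B are derived equivalent finite-dimensional algebras and A is strongly derived unbounded, then so is B. -/
/-!
STATEMENT 13: Strongly derived unboundedness is invariant under derived equivalence:
if `A` and `B` are derived equivalent finite-dimensional algebras and `A` is strongly
derived unbounded, then so is `B`.
-/

open CategoryTheory Limits

universe u
variable (k : Type u) [Field k] [IsAlgClosed k]

section Defs

variable (R : Type u) [Ring R] [Algebra k R] [FiniteDimensional k R]
  [HasDerivedCategory.{u} (ModuleCat.{u} R)]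

/-- The `i`-th cohomology of an object of the derived category. -/
noncomputable def Hobj (i : ℤ) (X : DerivedCategory (ModuleCat.{u} R)) : ModuleCat R :=
  (DerivedCategory.homologyFunctor (ModuleCat R) i).obj X

/-- `dim_k H^i(X)`. -/
noncomputable def hdim (i : ℤ) (X : DerivedCategory (ModuleCat.{u} R)) : ℕ :=
  Module.finrank k ((ModuleCat.restrictScalars (algebraMap k R)).obj (Hobj R i X))

/-- The cohomological length `hl(X) = max_i dim_k H^i(X)`. -/
noncomputable def hl (X : DerivedCategory (ModuleCat.{u} R)) : ℕ :=
  sSup (Set.range fun i : ℤ => hdim k R i X)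

/-- The cohomological width `hw(X) = max { j - i + 1 | H^i(X) ≠ 0 ≠ H^j(X) }`. -/
noncomputable def hw (X : DerivedCategory (ModuleCat.{u} R)) : ℕ :=
  sSup {n : ℕ | ∃ i j : ℤ, ¬ IsZero (Hobj R i X) ∧ ¬ IsZero (Hobj R j X) ∧ (n : ℤ) = j - i + 1}

/-- The cohomological range `hr(X) = hw(X) · hl(X)`. -/
noncomputable def hr (X : DerivedCategory (ModuleCat.{u} R)) : ℕ := hw R X * hl k R X

/-- An object of an additive category is indecomposable iff it is nonzero and its only
idempotent endomorphisms are `0` and the identity. -/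
def Indec {D : Type*} [Category D] [Limits.HasZeroMorphisms D] (X : D) : Prop :=
  ¬ IsZero X ∧ ∀ e : X ⟶ X, e ≫ e = e → e = 0 ∨ e = 𝟙 X

/-- `X` has bounded cohomology, i.e. `X` lies in `D^b`. -/
def Bdd (X : DerivedCategory (ModuleCat.{u} R)) : Prop :=
  ∃ a b : ℤ, ∀ i : ℤ, (i < a ∨ b < i) → IsZero (Hobj R i X)

/-- All cohomologies of `X` are finite dimensional over `k`, i.e. `X` lies in the
bounded derived category of finite-dimensional modules. -/
def FinCoh (X : DerivedCategory (ModuleCat.{u} R)) : Prop :=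
  ∀ i : ℤ, FiniteDimensional k
    ((ModuleCat.restrictScalars (algebraMap k R)).obj (Hobj R i X))

/-- Objects of `D^b(mod R)` (bounded, finite-dimensional cohomology). -/
def InDb (X : DerivedCategory (ModuleCat.{u} R)) : Prop := Bdd R X ∧ FinCoh k R X

/-- The global cohomological length `gl.hl R`, as a value in `ℕ∞`. -/
noncomputable def glhl : ℕ∞ :=
  ⨆ X : {X : DerivedCategory (ModuleCat.{u} R) // Indec X ∧ InDb k R X}, (hl k R X.1 : ℕ∞)

/-- The global cohomological width `gl.hw R`, as a value in `ℕ∞`. -/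
noncomputable def glhw : ℕ∞ :=
  ⨆ X : {X : DerivedCategory (ModuleCat.{u} R) // Indec X ∧ InDb k R X}, (hw R X.1 : ℕ∞)

/-- The global cohomological range `gl.hr R`, as a value in `ℕ∞`. -/
noncomputable def glhr : ℕ∞ :=
  ⨆ X : {X : DerivedCategory (ModuleCat.{u} R) // Indec X ∧ InDb k R X}, (hr k R X.1 : ℕ∞)

/-- `R` is strongly derived unbounded: there is an infinite strictly increasing sequence
`(rᵢ)` such that for each `i` there are infinitely many indecomposable objects of
`D^b(mod R)` of cohomological range `rᵢ`, pairwise distinct up to shift and isomorphism. -/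
def StronglyDerivedUnbounded : Prop :=
  ∃ r : ℕ → ℕ, StrictMono r ∧ ∀ i : ℕ, ∃ X : ℕ → DerivedCategory (ModuleCat.{u} R),
    (∀ j : ℕ, Indec (X j) ∧ InDb k R (X j) ∧ hr k R (X j) = r i) ∧
    (∀ j j' : ℕ, j ≠ j' → ∀ n : ℤ, IsEmpty (X j ≅ (X j')⟦n⟧))

end Defs

/-!
Let `F : D(A) ⥤ D(B)` be the equivalence and `T = A ⧸ rad A`. Being an equivalence, `F` preserves
products and coproducts, and so does `Hⁱ ∘ F`. For a basis `(b_j)` of `𝕜ᴵ` and a finite-dimensional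
module `V`, the matrix `(b_j i)` is an isomorphism `⨁_J V ≅ ∏_I V`, and likewise
`⨁ₙ T[n] ≅ ∏ₙ T[n]`. Applying `H⁰ ∘ F`, where elements of a coproduct are finite sums, shows that
each `Hⁿ(F T)` is finitely generated over `B` and that almost all of them vanish.

Every simple `A`-module is a retract of `T`, so dévissage along truncations and composition series
gives `dim Hⁱ(F X) ≤ ∑ₘ dim Hⁱ⁺ᵐ(X) · d m`, where `d m` is the dimension of `H⁰(F (T[-m]))`, a
function of finite support. Hence `hl`, `hw`, and so `hr`, grow at most by a constant factor under
`F`, and by symmetry under its inverse. Infinitely many objects of range `r` then go to objects of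
range at most `N r`, infinitely many of which share the same range `s`, and `r ≤ N' s` makes these
values `s` unbounded.
-/

namespace DerivedUnbounded

/-! ### Products and coproducts in the derived category -/

section HomologyOfLimits

lemma homologyMap_mapNatTrans_comp_mapHomologyIso_hom {C D : Type*} [Category* C] [Category* D]
    [HasZeroMorphisms C] [HasZeroMorphisms D] {F G : C ⥤ D} (τ : F ⟶ G) (S : ShortComplex C)
    [F.PreservesZeroMorphisms] [G.PreservesZeroMorphisms] [S.HasHomology]
    [F.PreservesLeftHomologyOf S] [G.PreservesLeftHomologyOf S]
    [F.PreservesRightHomologyOf S] [G.PreservesRightHomologyOf S] :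
    ShortComplex.homologyMap (S.mapNatTrans τ) ≫ (S.mapHomologyIso G).hom =
      (S.mapHomologyIso F).hom ≫ τ.app S.homology := by
  rw [NatTrans.app_homology, Iso.hom_inv_id_assoc]

variable {C J ι : Type*} [Category* C] [Abelian C] [Category* J]
  (c : ComplexShape ι) (n : ι)

section Colimits

variable [HasColimitsOfShape J C]

instance preservesColimitsOfShape_shortComplexHomologyFunctor [HasExactColimitsOfShape J C] :
    PreservesColimitsOfShape J (ShortComplex.homologyFunctor C) where
  preservesColimit {K} := by
    let S := (ShortComplex.FunctorEquivalence.inverse J C).obj K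
    let ι (j : J) : (evaluation J C).obj j ⟶ colim :=
      { app G := colimit.ι G j
        naturality _ _ f := (ι_colimMap f j).symm }
    let s : Cocone K :=
      { pt := S.map colim
        ι :=
          { app j := S.mapNatTrans (ι j)
            naturality _ _ f := ShortComplex.hom_ext _ _
              ((colimit.cocone S.X₁).ι.naturality f) ((colimit.cocone S.X₂).ι.naturality f)
              ((colimit.cocone S.X₃).ι.naturality f) } }
    have hs : IsColimit s := ShortComplex.isColimitOfIsColimitπ s
      (colimit.isColimit S.X₁) (colimit.isColimit S.X₂) (colimit.isColimit S.X₃)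
    let e : K ⋙ ShortComplex.homologyFunctor C ≅ S.homology :=
      NatIso.ofComponents (fun j => S.mapHomologyIso ((evaluation J C).obj j)) fun f =>
        homologyMap_mapNatTrans_comp_mapHomologyIso_hom ((evaluation J C).map f) S
    refine preservesColimit_of_preserves_colimit_cocone hs <|
      (IsColimit.equivOfNatIsoOfIso e ((ShortComplex.homologyFunctor C).mapCocone s)
        (colimit.cocone S.homology) (Cocone.ext (S.mapHomologyIso colim) fun j => ?_)).symm
        (colimit.isColimit S.homology)
    exact (Category.assoc _ _ _).trans <| (Iso.inv_comp_eq _).2 <|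
      homologyMap_mapNatTrans_comp_mapHomologyIso_hom (ι j) S

instance preservesColimitsOfShape_shortComplexFunctor :
    PreservesColimitsOfShape J (HomologicalComplex.shortComplexFunctor C c n) where
  preservesColimit := ⟨fun hs => ⟨ShortComplex.isColimitOfIsColimitπ _
    (isColimitOfPreserves (HomologicalComplex.eval C c (c.prev n)) hs)
    (isColimitOfPreserves (HomologicalComplex.eval C c n) hs)
    (isColimitOfPreserves (HomologicalComplex.eval C c (c.next n)) hs)⟩⟩

instance preservesColimitsOfShape_homologyFunctor [HasExactColimitsOfShape J C] :
    PreservesColimitsOfShape J (HomologicalComplex.homologyFunctor C c n) :=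
  preservesColimitsOfShape_of_natIso (HomologicalComplex.homologyFunctorIso C c n).symm

end Colimits

section Limits

variable [HasLimitsOfShape J C]

instance preservesLimitsOfShape_shortComplexHomologyFunctor [HasExactLimitsOfShape J C] :
    PreservesLimitsOfShape J (ShortComplex.homologyFunctor C) where
  preservesLimit {K} := by
    let S := (ShortComplex.FunctorEquivalence.inverse J C).obj K
    let π (j : J) : lim ⟶ (evaluation J C).obj j :=
      { app G := limit.π G j
        naturality _ _ f := limMap_π f j }
    let s : Cone K :=
      { pt := S.map lim
        π :=
          { app j := S.mapNatTrans (π j)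
            naturality _ _ f := ShortComplex.hom_ext _ _
              ((limit.cone S.X₁).π.naturality f) ((limit.cone S.X₂).π.naturality f)
              ((limit.cone S.X₃).π.naturality f) } }
    have hs : IsLimit s := ShortComplex.isLimitOfIsLimitπ s
      (limit.isLimit S.X₁) (limit.isLimit S.X₂) (limit.isLimit S.X₃)
    let e : K ⋙ ShortComplex.homologyFunctor C ≅ S.homology :=
      NatIso.ofComponents (fun j => S.mapHomologyIso ((evaluation J C).obj j)) fun f =>
        homologyMap_mapNatTrans_comp_mapHomologyIso_hom ((evaluation J C).map f) S
    exact preservesLimit_of_preserves_limit_cone hs <|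
      (IsLimit.equivOfNatIsoOfIso e ((ShortComplex.homologyFunctor C).mapCone s)
        (limit.cone S.homology) (Cone.ext (S.mapHomologyIso lim) fun j =>
          homologyMap_mapNatTrans_comp_mapHomologyIso_hom (π j) S)).symm
        (limit.isLimit S.homology)

instance preservesLimitsOfShape_shortComplexFunctor :
    PreservesLimitsOfShape J (HomologicalComplex.shortComplexFunctor C c n) where
  preservesLimit := ⟨fun hs => ⟨ShortComplex.isLimitOfIsLimitπ _
    (isLimitOfPreserves (HomologicalComplex.eval C c (c.prev n)) hs)
    (isLimitOfPreserves (HomologicalComplex.eval C c n) hs)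
    (isLimitOfPreserves (HomologicalComplex.eval C c (c.next n)) hs)⟩⟩

instance preservesLimitsOfShape_homologyFunctor [HasExactLimitsOfShape J C] :
    PreservesLimitsOfShape J (HomologicalComplex.homologyFunctor C c n) :=
  preservesLimitsOfShape_of_natIso (HomologicalComplex.homologyFunctorIso C c n).symm

end Limits

end HomologyOfLimits

section IsoOfLimits

variable {C D J : Type*} [Category* C] [Category* D] [Category* J] (F : C ⥤ D) {X Y : J ⥤ C}

lemma isIso_map_colimMap (α : X ⟶ Y) [HasColimit X] [HasColimit Y] [PreservesColimit X F]
    [PreservesColimit Y F] (hα : ∀ j, IsIso (F.map (α.app j))) :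
    IsIso (F.map (colimMap α)) := by
  have : ∀ j, IsIso ((Functor.whiskerRight α F).app j) := hα
  have := NatIso.isIso_of_isIso_app (Functor.whiskerRight α F)
  let hX := isColimitOfPreserves F (colimit.isColimit X)
  let hY := isColimitOfPreserves F (colimit.isColimit Y)
  have h : F.map (colimMap α) =
      (hX.coconePointsIsoOfNatIso hY (asIso (Functor.whiskerRight α F))).hom :=
    hX.hom_ext fun j => by
      rw [IsColimit.comp_coconePointsIsoOfNatIso_hom]
      simp only [Functor.mapCocone_ι_app, ← F.map_comp, ι_colimMap, asIso_hom,
        Functor.whiskerRight_app, colimit.cocone_ι]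
  rw [h]
  infer_instance

lemma isIso_map_limMap (α : X ⟶ Y) [HasLimit X] [HasLimit Y] [PreservesLimit X F]
    [PreservesLimit Y F] (hα : ∀ j, IsIso (F.map (α.app j))) :
    IsIso (F.map (limMap α)) := by
  have : ∀ j, IsIso ((Functor.whiskerRight α F).app j) := hα
  have := NatIso.isIso_of_isIso_app (Functor.whiskerRight α F)
  let hX := isLimitOfPreserves F (limit.isLimit X)
  let hY := isLimitOfPreserves F (limit.isLimit Y)
  have h : F.map (limMap α) =
      (hX.conePointsIsoOfNatIso hY (asIso (Functor.whiskerRight α F))).hom :=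
    hY.hom_ext fun j => by
      rw [IsLimit.conePointsIsoOfNatIso_hom_comp]
      simp only [Functor.mapCone_π_app, ← F.map_comp, limMap_π, asIso_hom,
        Functor.whiskerRight_app, limit.cone_π]
  rw [h]
  infer_instance

end IsoOfLimits

section EssSurj

variable {C D E J : Type*} [Category* C] [Category* D] [Category* E]

lemma preservesColimitsOfShape_of_essSurj (L : C ⥤ D) (G : D ⥤ E) [L.EssSurj]
    [HasCoproductsOfShape J C] [PreservesColimitsOfShape (Discrete J) L]
    [PreservesColimitsOfShape (Discrete J) (L ⋙ G)] :
    PreservesColimitsOfShape (Discrete J) G where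
  preservesColimit {Y} := by
    let K : Discrete J ⥤ C := Discrete.functor fun j => L.objPreimage (Y.obj ⟨j⟩)
    let e : K ⋙ L ≅ Y := Discrete.natIso fun j => L.objObjPreimageIso (Y.obj j)
    have : PreservesColimit (K ⋙ L) G := preservesColimit_of_preserves_colimit_cocone
      (isColimitOfPreserves L (colimit.isColimit K))
      (isColimitOfPreserves (L ⋙ G) (colimit.isColimit K))
    exact preservesColimit_of_iso_diagram G e

lemma preservesLimitsOfShape_of_essSurj (L : C ⥤ D) (G : D ⥤ E) [L.EssSurj]
    [HasProductsOfShape J C] [PreservesLimitsOfShape (Discrete J) L]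
    [PreservesLimitsOfShape (Discrete J) (L ⋙ G)] :
    PreservesLimitsOfShape (Discrete J) G where
  preservesLimit {Y} := by
    let K : Discrete J ⥤ C := Discrete.functor fun j => L.objPreimage (Y.obj ⟨j⟩)
    let e : K ⋙ L ≅ Y := Discrete.natIso fun j => L.objObjPreimageIso (Y.obj j)
    have : PreservesLimit (K ⋙ L) G := preservesLimit_of_preserves_limit_cone
      (isLimitOfPreserves L (limit.isLimit K)) (isLimitOfPreserves (L ⋙ G) (limit.isLimit K))
    exact preservesLimit_of_iso_diagram G e

end EssSurj

section WeakCoproducts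

open Pretriangulated

variable {D J : Type*} [Category* D] [Preadditive D] [HasZeroObject D] [HasShift D ℤ]
  [∀ n : ℤ, (shiftFunctor D n).Additive] [Pretriangulated D] {X : J → D}

-- If `g` kills all the injections, they factor through the fibre of `g`.
lemma nonempty_isColimit_of_weakCoproduct (c : Cofan X)
    (hdesc : ∀ {Y : D} (f : ∀ j, X j ⟶ Y), ∃ g : c.pt ⟶ Y, ∀ j, c.inj j ≫ g = f j)
    (hepi : ∀ u : c.pt ⟶ c.pt, (∀ j, c.inj j ≫ u = c.inj j) → Epi u) :
    Nonempty (IsColimit c) := by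
  have hzero {Y : D} (g : c.pt ⟶ Y) (hg : ∀ j, c.inj j ≫ g = 0) : g = 0 := by
    obtain ⟨W, v, δ, hT⟩ := distinguished_cocone_triangle₁ g
    have hfac (j : J) : ∃ a : X j ⟶ W, c.inj j = a ≫ v := Triangle.coyoneda_exact₂ _ hT _ (hg j)
    choose a ha using hfac
    obtain ⟨b, hb⟩ := hdesc a
    have : Epi (b ≫ v) := hepi _ fun j => by rw [reassoc_of% hb, ← ha]
    have hvg : v ≫ g = 0 := comp_distTriang_mor_zero₁₂ _ hT
    rw [← cancel_epi (b ≫ v), Category.assoc, hvg, comp_zero, comp_zero]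
  choose desc hdesc using @hdesc
  exact ⟨Cofan.IsColimit.mk c (fun s => desc s.inj) (fun s => hdesc s.inj) fun s g hg =>
    sub_eq_zero.1 <| hzero _ fun j => by rw [Preadditive.comp_sub, hg, hdesc, sub_self]⟩

lemma nonempty_isLimit_of_weakProduct (c : Fan X)
    (hlift : ∀ {Y : D} (f : ∀ j, Y ⟶ X j), ∃ g : Y ⟶ c.pt, ∀ j, g ≫ c.proj j = f j)
    (hmono : ∀ u : c.pt ⟶ c.pt, (∀ j, u ≫ c.proj j = c.proj j) → Mono u) :
    Nonempty (IsLimit c) := by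
  have hzero {Y : D} (g : Y ⟶ c.pt) (hg : ∀ j, g ≫ c.proj j = 0) : g = 0 := by
    obtain ⟨W, v, δ, hT⟩ := distinguished_cocone_triangle g
    have hfac (j : J) : ∃ a : W ⟶ X j, c.proj j = v ≫ a := Triangle.yoneda_exact₂ _ hT _ (hg j)
    choose a ha using hfac
    obtain ⟨b, hb⟩ := hlift a
    have : Mono (v ≫ b) := hmono _ fun j => by rw [Category.assoc, hb, ← ha]
    have hgv : g ≫ v = 0 := comp_distTriang_mor_zero₁₂ _ hT
    rw [← cancel_mono (v ≫ b), reassoc_of% hgv, zero_comp, zero_comp]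
  choose lift hlift using @hlift
  exact ⟨Fan.IsLimit.mk c (fun s => lift s.proj) (fun s => hlift s.proj) fun s g hg =>
    sub_eq_zero.1 <| hzero _ fun j => by rw [Preadditive.sub_comp, hg, hlift, sub_self]⟩

end WeakCoproducts

section DerivedCategory

open DerivedCategory

variable {C J : Type*} [Category* C] [Abelian C] [HasDerivedCategory C]

section Coproducts

variable [HasCoproductsOfShape J C] [HasExactColimitsOfShape (Discrete J) C]

lemma exists_desc_Q_map_ι (K : J → CochainComplex C ℤ) {Y : DerivedCategory C}
    (f : ∀ j, Q.obj (K j) ⟶ Y) :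
    ∃ g : Q.obj (∐ K) ⟶ Y, ∀ j, Q.map (Sigma.ι K j) ≫ g = f j := by
  choose K' s hs g hg using fun j => right_fac (f j ≫ (Q.objObjPreimageIso Y).inv)
  have : IsIso (Q.map (Limits.Sigma.map s)) := by
    simp only [isIso_Q_map_iff_quasiIso, quasiIso_iff, quasiIsoAt_iff_isIso_homologyMap] at hs ⊢
    intro n
    exact isIso_map_colimMap (HomologicalComplex.homologyFunctor C _ n) _ fun j => hs j.as n
  have hι (j : J) : Q.map (Sigma.ι K j) ≫ inv (Q.map (Limits.Sigma.map s)) =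
      inv (Q.map (s j)) ≫ Q.map (Sigma.ι K' j) := by
    rw [IsIso.comp_inv_eq, Category.assoc, IsIso.eq_inv_comp, ← Q.map_comp, ← Q.map_comp,
      Sigma.ι_map]
  refine ⟨inv (Q.map (Limits.Sigma.map s)) ≫ Q.map (Sigma.desc g) ≫ (Q.objObjPreimageIso Y).hom,
    fun j => ?_⟩
  rw [reassoc_of% hι, ← Q.map_comp_assoc, Sigma.ι_desc, ← Category.assoc, ← hg,
    Category.assoc, Iso.inv_hom_id, Category.comp_id]

instance preservesColimitsOfShape_Q_comp_homologyFunctor (n : ℤ) :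
    PreservesColimitsOfShape (Discrete J) (Q ⋙ homologyFunctor C n) :=
  preservesColimitsOfShape_of_natIso (homologyFunctorFactors C n).symm

instance preservesColimitsOfShape_Q : PreservesColimitsOfShape (Discrete J) (Q (C := C)) := by
  suffices ∀ K : J → CochainComplex C ℤ, PreservesColimit (Discrete.functor K) Q from
    preservesColimitsOfShape_of_discrete _
  intro K
  let c : Cofan fun j => Q.obj (K j) := Cofan.mk (Q.obj (∐ K)) fun j => Q.map (Sigma.ι K j)
  have hmap (u : c.pt ⟶ c.pt) (hu : ∀ j, c.inj j ≫ u = c.inj j) (n : ℤ) :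
      (homologyFunctor C n).map u = 𝟙 _ :=
    (isColimitOfPreserves (Q ⋙ homologyFunctor C n) (coproductIsCoproduct K)).hom_ext fun j => by
      refine Eq.trans ?_ (Category.comp_id _).symm
      exact ((homologyFunctor C n).map_comp _ _).symm.trans (congrArg _ (hu j.as))
  refine preservesColimit_of_preserves_colimit_cocone (coproductIsCoproduct K) <|
    (isColimitMapCoconeCofanMkEquiv Q K _).symm <| Classical.choice <|
    nonempty_isColimit_of_weakCoproduct c (exists_desc_Q_map_ι K) fun u hu => ?_
  have : IsIso u := (DerivedCategory.isIso_iff C u).2 fun n => by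
    rw [hmap u hu]
    infer_instance
  infer_instance

end Coproducts

section Products

variable [HasProductsOfShape J C] [HasExactLimitsOfShape (Discrete J) C]

lemma exists_lift_Q_map_π (K : J → CochainComplex C ℤ) {Y : DerivedCategory C}
    (f : ∀ j, Y ⟶ Q.obj (K j)) :
    ∃ g : Y ⟶ Q.obj (∏ᶜ K), ∀ j, g ≫ Q.map (Pi.π K j) = f j := by
  choose K' g s hs hg using fun j => left_fac ((Q.objObjPreimageIso Y).hom ≫ f j)
  have : IsIso (Q.map (Limits.Pi.map s)) := by
    simp only [isIso_Q_map_iff_quasiIso, quasiIso_iff, quasiIsoAt_iff_isIso_homologyMap] at hs ⊢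
    intro n
    exact isIso_map_limMap (HomologicalComplex.homologyFunctor C _ n) _ fun j => hs j.as n
  have hπ (j : J) : inv (Q.map (Limits.Pi.map s)) ≫ Q.map (Pi.π K j) =
      Q.map (Pi.π K' j) ≫ inv (Q.map (s j)) := by
    rw [IsIso.inv_comp_eq, ← Category.assoc, IsIso.eq_comp_inv, ← Q.map_comp, ← Q.map_comp,
      Pi.map_π]
  refine ⟨(Q.objObjPreimageIso Y).inv ≫ Q.map (Pi.lift g) ≫ inv (Q.map (Limits.Pi.map s)),
    fun j => ?_⟩
  rw [Category.assoc, Category.assoc, hπ, ← Q.map_comp_assoc, Pi.lift_π, ← hg,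
    Iso.inv_hom_id_assoc]

instance preservesLimitsOfShape_Q_comp_homologyFunctor (n : ℤ) :
    PreservesLimitsOfShape (Discrete J) (Q ⋙ homologyFunctor C n) :=
  preservesLimitsOfShape_of_natIso (homologyFunctorFactors C n).symm

instance preservesLimitsOfShape_Q : PreservesLimitsOfShape (Discrete J) (Q (C := C)) := by
  suffices ∀ K : J → CochainComplex C ℤ, PreservesLimit (Discrete.functor K) Q from
    preservesLimitsOfShape_of_discrete _
  intro K
  let c : Fan fun j => Q.obj (K j) := Fan.mk (Q.obj (∏ᶜ K)) fun j => Q.map (Pi.π K j)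
  have hmap (u : c.pt ⟶ c.pt) (hu : ∀ j, u ≫ c.proj j = c.proj j) (n : ℤ) :
      (homologyFunctor C n).map u = 𝟙 _ :=
    (isLimitOfPreserves (Q ⋙ homologyFunctor C n) (productIsProduct K)).hom_ext fun j => by
      refine Eq.trans ?_ (Category.id_comp _).symm
      exact ((homologyFunctor C n).map_comp _ _).symm.trans (congrArg _ (hu j.as))
  refine preservesLimit_of_preserves_limit_cone (productIsProduct K) <|
    (isLimitMapConeFanMkEquiv Q K _).symm <| Classical.choice <|
    nonempty_isLimit_of_weakProduct c (exists_lift_Q_map_π K) fun u hu => ?_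
  have : IsIso u := (DerivedCategory.isIso_iff C u).2 fun n => by
    rw [hmap u hu]
    infer_instance
  infer_instance

end Products

instance preservesColimitsOfShape_derivedCategoryHomologyFunctor [HasCoproductsOfShape J C]
    [HasExactColimitsOfShape (Discrete J) C] (n : ℤ) :
    PreservesColimitsOfShape (Discrete J) (homologyFunctor C n) :=
  preservesColimitsOfShape_of_essSurj Q _

instance preservesLimitsOfShape_derivedCategoryHomologyFunctor [HasProductsOfShape J C]
    [HasExactLimitsOfShape (Discrete J) C] (n : ℤ) :
    PreservesLimitsOfShape (Discrete J) (homologyFunctor C n) :=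
  preservesLimitsOfShape_of_essSurj Q _

end DerivedCategory

/-! ### Isomorphisms from coproducts to products -/

section SigmaToPi

variable {C D I J : Type*} [Category* C] [Category* D] {X : J → C} {Y : I → C}
  [HasCoproduct X] [HasProduct Y]

/-- The morphism from a coproduct to a product whose matrix of components is `w`. When it is
invertible, families indexed by `I` are finite sums of columns of `w`. -/
noncomputable def sigmaToPi (w : ∀ j i, X j ⟶ Y i) : ∐ X ⟶ ∏ᶜ Y :=
  Sigma.desc fun j => Pi.lift (w j)

lemma ι_sigmaToPi_π (w : ∀ j i, X j ⟶ Y i) (j : J) (i : I) :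
    Sigma.ι X j ≫ sigmaToPi w ≫ Pi.π Y i = w j i := by
  simp [sigmaToPi]

lemma isIso_map_sigmaToPi_iff (F : C ⥤ D) [HasCoproduct fun j => F.obj (X j)]
    [HasProduct fun i => F.obj (Y i)] [PreservesColimit (Discrete.functor X) F]
    [PreservesLimit (Discrete.functor Y) F] (w : ∀ j i, X j ⟶ Y i) :
    IsIso (F.map (sigmaToPi w)) ↔ IsIso (sigmaToPi fun j i => F.map (w j i)) := by
  have h : sigmaComparison F X ≫ F.map (sigmaToPi w) ≫ piComparison F Y =
      sigmaToPi fun j i => F.map (w j i) :=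
    Sigma.hom_ext _ _ fun j => Pi.hom_ext _ _ fun i => by
      simp only [Category.assoc, piComparison_comp_π, ι_comp_sigmaComparison_assoc,
        ι_sigmaToPi_π, ← F.map_comp]
  rw [← h, isIso_comp_left_iff, isIso_comp_right_iff]

lemma isIso_sigmaToPi_of_isZero [HasZeroMorphisms C] (X Y : J → C) [HasCoproduct X]
    [HasProduct Y] (w : ∀ j i, X j ⟶ Y i) (j₀ : J) [IsIso (w j₀ j₀)]
    (hX : ∀ j ≠ j₀, IsZero (X j)) (hY : ∀ j ≠ j₀, IsZero (Y j)) : IsIso (sigmaToPi w) := by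
  classical
  have hι : IsIso (Sigma.ι X j₀) := by
    refine ⟨Sigma.desc fun j => if h : j = j₀ then eqToHom (by rw [h]) else 0, by simp, ?_⟩
    refine Sigma.hom_ext _ _ fun j => ?_
    by_cases h : j = j₀
    · subst h; simp
    · exact (hX j h).eq_of_src _ _
  have hπ : IsIso (Pi.π Y j₀) := by
    refine ⟨Pi.lift fun j => if h : j₀ = j then eqToHom (by rw [h]) else 0, ?_, by simp⟩
    refine Pi.hom_ext _ _ fun j => ?_
    by_cases h : j₀ = j
    · subst h; simp
    · exact (hY j (Ne.symm h)).eq_of_tgt _ _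
  rw [← isIso_comp_right_iff _ (Pi.π Y j₀), ← isIso_comp_left_iff (Sigma.ι X j₀), ι_sigmaToPi_π]
  infer_instance

lemma isIso_sigmaToPi_of_eval {ι : Type*} {c : ComplexShape ι} [HasZeroMorphisms C]
    [HasCoproductsOfShape J C] [HasProductsOfShape I C] {X : J → HomologicalComplex C c}
    {Y : I → HomologicalComplex C c} (w : ∀ j i, X j ⟶ Y i)
    (h : ∀ n, IsIso (sigmaToPi fun j i => (w j i).f n)) : IsIso (sigmaToPi w) := by
  have : ∀ n, IsIso ((sigmaToPi w).f n) := fun n =>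
    (isIso_map_sigmaToPi_iff (HomologicalComplex.eval C c n) w).2 (h n)
  exact HomologicalComplex.Hom.isIso_of_components _

end SigmaToPi

section ModuleCat

variable {S : Type u} [Ring S] {I J : Type u}

lemma iSup_range_ι_eq_top (M : J → ModuleCat.{u} S) :
    ⨆ j, LinearMap.range (Sigma.ι M j).hom = ⊤ := by
  have h : ModuleCat.ofHom (⨆ j, LinearMap.range (Sigma.ι M j).hom).mkQ = 0 :=
    Sigma.hom_ext _ _ fun j => by
      ext x
      exact (Submodule.Quotient.mk_eq_zero _).2 (Submodule.mem_iSup_of_mem j ⟨x, rfl⟩)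
  rw [← Submodule.ker_mkQ (⨆ j, _), LinearMap.ker_eq_top]
  exact congrArg ModuleCat.Hom.hom h

lemma exists_finset_eq_sum_ι (M : J → ModuleCat.{u} S) (x : ↑(∐ M)) :
    ∃ (s : Finset J) (u : ∀ j, M j), x = ∑ j ∈ s, Sigma.ι M j (u j) := by
  obtain ⟨f, hf, rfl⟩ := (Submodule.mem_iSup_iff_exists_finsupp _ x).1
    ((iSup_range_ι_eq_top M).symm ▸ Submodule.mem_top)
  choose u hu using hf
  exact ⟨f.support, u, Finset.sum_congr rfl fun j _ => (hu j).symm⟩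

lemma sigmaToPi_apply_π {M : J → ModuleCat.{u} S} {N : I → ModuleCat.{u} S}
    (w : ∀ j i, M j ⟶ N i) (s : Finset J) (u : ∀ j, M j) (i : I) :
    Pi.π N i (sigmaToPi w (∑ j ∈ s, Sigma.ι M j (u j))) = ∑ j ∈ s, w j i (u j) := by
  simp only [map_sum, ← ι_sigmaToPi_π w, ModuleCat.comp_apply]

lemma exists_finset_eq_sum_of_isIso_sigmaToPi {M : J → ModuleCat.{u} S}
    {N : I → ModuleCat.{u} S} (w : ∀ j i, M j ⟶ N i) [IsIso (sigmaToPi w)] (y : ∀ i, N i) :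
    ∃ (s : Finset J) (u : ∀ j, M j), ∀ i, y i = ∑ j ∈ s, w j i (u j) := by
  obtain ⟨z, hz⟩ := (Concrete.productEquiv N).surjective y
  obtain ⟨x, rfl⟩ := ((ConcreteCategory.isIso_iff_bijective (sigmaToPi w)).1 inferInstance).2 z
  obtain ⟨s, u, rfl⟩ := exists_finset_eq_sum_ι M x
  exact ⟨s, u, fun i => by rw [← hz, Concrete.productEquiv_apply_apply, sigmaToPi_apply_π]⟩

end ModuleCat

section LinearAlgebra

variable {𝕜 V I J : Type*} [Field 𝕜] [AddCommGroup V] [Module 𝕜 V]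

lemma eq_zero_of_sum_smul_eq_zero {b : J → I → 𝕜} (hb : LinearIndependent 𝕜 b) (s : Finset J)
    (u : J → V) (h : ∀ i, ∑ j ∈ s, b j i • u j = 0) : ∀ j ∈ s, u j = 0 := by
  intro j hj
  rw [← Module.forall_dual_apply_eq_zero_iff 𝕜]
  intro l
  refine linearIndependent_iff'.1 hb s (fun j => l (u j)) ?_ j hj
  ext i
  simpa [mul_comm] using congrArg l (h i)

lemma exists_finset_eq_sum_smul [FiniteDimensional 𝕜 V] (b : Module.Basis J 𝕜 (I → 𝕜)) (y : I → V) :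
    ∃ (s : Finset J) (u : J → V), ∀ i, y i = ∑ j ∈ s, b j i • u j := by
  classical
  let v := Module.finBasis 𝕜 V
  let a c := b.repr fun i => v.repr (y i) c
  let s := Finset.univ.biUnion fun c => (a c).support
  have ha (c) (i : I) : v.repr (y i) c = ∑ j ∈ s, a c j * b j i := by
    have h : ∑ j ∈ s, a c j • b j = fun i => v.repr (y i) c := by
      rw [← b.linearCombination_repr fun i => v.repr (y i) c, Finsupp.linearCombination_apply]
      exact (Finsupp.sum_of_support_subset (a c)
        (Finset.subset_biUnion_of_mem (fun c => (a c).support) (Finset.mem_univ c))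
        (fun j t => t • b j) fun j _ => zero_smul 𝕜 (b j)).symm
    simpa using congrFun h.symm i
  refine ⟨s, fun j => ∑ c, a c j • v c, fun i => ?_⟩
  calc y i = ∑ c, v.repr (y i) c • v c := (v.sum_repr (y i)).symm
    _ = ∑ c, ∑ j ∈ s, b j i • a c j • v c := by
      simp only [ha, Finset.sum_smul]
      exact Finset.sum_congr rfl fun c _ => Finset.sum_congr rfl fun j _ => by
        rw [mul_comm, mul_smul]
    _ = ∑ j ∈ s, b j i • ∑ c, a c j • v c := by
      rw [Finset.sum_comm]
      simp only [Finset.smul_sum]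

end LinearAlgebra

section ScalarMatrix

open ModuleCat

variable {𝕜 R : Type u} [Field 𝕜] [Ring R] [Algebra 𝕜 R] {I J : Type u}

lemma isIso_sigmaToPi_basis_smul_id (b : Module.Basis J 𝕜 (I → 𝕜)) (V : ModuleCat.{u} R)
    [FiniteDimensional 𝕜 V] : IsIso (sigmaToPi fun j i => b j i • 𝟙 V) := by
  rw [ConcreteCategory.isIso_iff_bijective]
  refine ⟨(injective_iff_map_eq_zero _).2 fun x hx => ?_, fun z => ?_⟩
  · obtain ⟨s, u, rfl⟩ := exists_finset_eq_sum_ι _ x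
    have hu : ∀ j ∈ s, u j = 0 := eq_zero_of_sum_smul_eq_zero b.linearIndependent s u fun i => by
      have h := sigmaToPi_apply_π (fun j i => b j i • 𝟙 V) s u i
      rw [hx, map_zero] at h
      exact h.symm
    exact Finset.sum_eq_zero fun j hj => by rw [hu j hj, map_zero]
  · obtain ⟨s, u, hu⟩ := exists_finset_eq_sum_smul b fun i => Pi.π (fun _ => V) i z
    refine ⟨∑ j ∈ s, Sigma.ι (fun _ => V) j (u j), (Concrete.productEquiv _).injective ?_⟩
    funext i
    rw [Concrete.productEquiv_apply_apply, Concrete.productEquiv_apply_apply, sigmaToPi_apply_π, hu]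
    rfl

end ScalarMatrix

/-! ### Finiteness of functors preserving products and coproducts -/

section NaturalEndomorphisms

open DerivedCategory

lemma exists_single_hom_homologyMap_eq {C ι : Type*} [Category* C] [Abelian C] [DecidableEq ι]
    {c : ComplexShape ι} (K : HomologicalComplex C c) (n : ι) {P : C} [Projective P]
    (φ : P ⟶ K.homology n) :
    ∃ f : (HomologicalComplex.single C c n).obj P ⟶ K,
      (HomologicalComplex.singleObjHomologySelfIso c n P).inv ≫
        HomologicalComplex.homologyMap f n = φ := by
  let g : P ⟶ K.cycles n := Projective.factorThru φ (K.homologyπ n)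
  let f : (HomologicalComplex.single C c n).obj P ⟶ K :=
    HomologicalComplex.mkHomFromSingle (g ≫ K.iCycles n) fun i _ => by simp
  have hf : (HomologicalComplex.singleObjCyclesSelfIso c n P).inv ≫
      HomologicalComplex.cyclesMap f n = g := by
    rw [← cancel_mono (K.iCycles n), Category.assoc, HomologicalComplex.cyclesMap_i,
      HomologicalComplex.singleObjCyclesSelfIso_inv_iCycles_assoc,
      HomologicalComplex.mkHomFromSingle_f, Iso.inv_hom_id_assoc]
  refine ⟨f, ?_⟩
  rw [← HomologicalComplex.singleObjCyclesSelfIso_inv_homologyπ, Category.assoc,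
    HomologicalComplex.homologyπ_naturality, reassoc_of% hf, Projective.factorThru_comp]

lemma exists_iso_comp_homologyFunctor_map_eq {C : Type*} [Category* C] [Abelian C]
    [HasDerivedCategory C] (n : ℤ) (X : DerivedCategory C) {P : C} [Projective P]
    (φ : P ⟶ (homologyFunctor C n).obj X) :
    ∃ (Y : DerivedCategory C) (e : P ≅ (homologyFunctor C n).obj Y) (f : Y ⟶ X),
      e.hom ≫ (homologyFunctor C n).map f = φ := by
  let H := HomologicalComplex.homologyFunctor C (.up ℤ) n
  let a : Q ⋙ homologyFunctor C n ≅ H := homologyFunctorFactors C n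
  let i := Q.objObjPreimageIso X
  let P' := (HomologicalComplex.single C (.up ℤ) n).obj P
  let e₀ : P ≅ H.obj P' := (HomologicalComplex.singleObjHomologySelfIso _ n P).symm
  let e₁ : H.obj P' ≅ (homologyFunctor C n).obj (Q.obj P') := (a.app P').symm
  obtain ⟨f, hf⟩ : ∃ f : P' ⟶ Q.objPreimage X,
      e₀.hom ≫ H.map f = φ ≫ (homologyFunctor C n).map i.inv ≫ a.hom.app _ :=
    exists_single_hom_homologyMap_eq (Q.objPreimage X) n _
  have ha : e₁.hom ≫ (homologyFunctor C n).map (Q.map f) = H.map f ≫ a.inv.app _ :=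
    (a.inv.naturality f).symm
  refine ⟨Q.obj P', e₀ ≪≫ e₁, Q.map f ≫ i.hom, ?_⟩
  rw [Iso.trans_hom, Functor.map_comp, Category.assoc, reassoc_of% ha, reassoc_of% hf,
    a.hom_inv_id_app_assoc, ← Functor.map_comp, i.inv_hom_id, CategoryTheory.Functor.map_id,
    Category.comp_id]

variable {D E : Type*} [Category* D] [Category* E] {S : Type u} [Ring S]

lemma exists_iso_comp_map_eq_of_full {C : Type*} [Category* C] (F : D ⥤ E) [F.Full] [F.EssSurj]
    (H : E ⥤ C) {P : C}
    (hH : ∀ (X : E) (φ : P ⟶ H.obj X),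
      ∃ (Y : E) (e : P ≅ H.obj Y) (f : Y ⟶ X), e.hom ≫ H.map f = φ)
    (X : D) (φ : P ⟶ (F ⋙ H).obj X) :
    ∃ (Y : D) (e : P ≅ (F ⋙ H).obj Y) (f : Y ⟶ X), e.hom ≫ (F ⋙ H).map f = φ := by
  obtain ⟨Y, e, f, rfl⟩ := hH (F.obj X) φ
  let i := F.objObjPreimageIso Y
  refine ⟨F.objPreimage Y, e ≪≫ H.mapIso i.symm, F.preimage (i.hom ≫ f), ?_⟩
  simp only [Iso.trans_hom, Functor.mapIso_hom, Iso.symm_hom, Functor.comp_map, F.map_preimage,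
    Category.assoc, ← H.map_comp, i.inv_hom_id_assoc]

-- On a copy `e` of the free module `S`, an endomorphism is a right multiplication.
lemma exists_natTrans_app_eq_smul (G : D ⥤ ModuleCat.{u} S)
    (hG : ∀ (X : D) (φ : ModuleCat.of S S ⟶ G.obj X),
      ∃ (Y : D) (e : ModuleCat.of S S ≅ G.obj Y) (f : Y ⟶ X), e.hom ≫ G.map f = φ)
    (α : G ⟶ G) (X : D) (x : G.obj X) : ∃ s : S, α.app X x = s • x := by
  obtain ⟨Y, e, f, h⟩ := hG X (ModuleCat.ofHom (LinearMap.toSpanSingleton S _ x))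
  have hx : G.map f (e.hom (1 : S)) = x :=
    (ConcreteCategory.congr_hom h (1 : S)).trans (one_smul S x)
  let s : S := e.inv (α.app Y (e.hom (1 : S)))
  refine ⟨s, ?_⟩
  have hs : α.app Y (e.hom (1 : S)) = s • e.hom (1 : S) := by
    rw [← map_smul, smul_eq_mul, mul_one]
    exact (e.inv_hom_id_apply _).symm
  rw [← hx, NatTrans.naturality_apply, hs, map_smul]

lemma exists_map_smul_id_eq_smul {𝕜 : Type*} [Semiring 𝕜] [Preadditive D] [Linear 𝕜 D]
    (G : D ⥤ ModuleCat.{u} S)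
    (hG : ∀ (X : D) (φ : ModuleCat.of S S ⟶ G.obj X),
      ∃ (Y : D) (e : ModuleCat.of S S ≅ G.obj Y) (f : Y ⟶ X), e.hom ≫ G.map f = φ)
    (c : 𝕜) (X : D) (x : G.obj X) : ∃ s : S, G.map (c • 𝟙 X) x = s • x :=
  exists_natTrans_app_eq_smul G hG
    { app Y := G.map (c • 𝟙 Y)
      naturality Y Z f := by simp [← G.map_comp] } X x

end NaturalEndomorphisms

section Finiteness

open DerivedCategory ModuleCat

variable {R S : Type u} [Ring R] [Ring S] [HasDerivedCategory.{u} (ModuleCat.{u} R)]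
  (G : DerivedCategory (ModuleCat.{u} R) ⥤ ModuleCat.{u} S)
  [∀ J : Type u, PreservesColimitsOfShape (Discrete J) G]
  [∀ J : Type u, PreservesLimitsOfShape (Discrete J) G]

lemma exists_finset_obj_Q_eq_sum {I J : Type u} {X : J → CochainComplex (ModuleCat.{u} R) ℤ}
    {Y : I → CochainComplex (ModuleCat.{u} R) ℤ} (w : ∀ j i, X j ⟶ Y i)
    (hw : ∀ n, IsIso (sigmaToPi fun j i => (w j i).f n)) (y : ∀ i, G.obj (Q.obj (Y i))) :
    ∃ (s : Finset J) (u : ∀ j, G.obj (Q.obj (X j))),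
      ∀ i, y i = ∑ j ∈ s, G.map (Q.map (w j i)) (u j) := by
  have := isIso_sigmaToPi_of_eval w hw
  have : IsIso (sigmaToPi fun j i => (Q ⋙ G).map (w j i)) :=
    (isIso_map_sigmaToPi_iff (Q ⋙ G) w).1 inferInstance
  exact exists_finset_eq_sum_of_isIso_sigmaToPi (fun j i => (Q ⋙ G).map (w j i)) y

lemma finite_obj_Q {𝕜 : Type u} [Field 𝕜] [Algebra 𝕜 R]
    (hG : ∀ (X : DerivedCategory (ModuleCat.{u} R)) (φ : ModuleCat.of S S ⟶ G.obj X),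
      ∃ (Y : _) (e : ModuleCat.of S S ≅ G.obj Y) (f : Y ⟶ X), e.hom ≫ G.map f = φ)
    (K : CochainComplex (ModuleCat.{u} R) ℤ) (hK : ∀ n, FiniteDimensional 𝕜 (K.X n)) :
    Module.Finite S (G.obj (Q.obj K)) := by
  classical
  let b := Module.Basis.ofVectorSpace 𝕜 (G.obj (Q.obj K) → 𝕜)
  -- The tautological family of all elements is a finite combination of images of `b j x • 𝟙 K`,
  -- and these act on each single element as scalars from `S`.
  obtain ⟨s, u, hu⟩ := exists_finset_obj_Q_eq_sum G (fun j i => b j i • 𝟙 K)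
    (fun n => isIso_sigmaToPi_basis_smul_id b (K.X n)) fun x => x
  refine ⟨s.image u, eq_top_iff.2 fun x _ => ?_⟩
  rw [hu x]
  refine Submodule.sum_mem _ fun j hj => ?_
  obtain ⟨c, hc⟩ := exists_map_smul_id_eq_smul G hG (b j x) (Q.obj K) (u j)
  rw [Functor.map_smul, CategoryTheory.Functor.map_id, hc]
  exact Submodule.smul_mem _ _ (Submodule.subset_span (Finset.mem_image_of_mem u hj))

lemma exists_finset_isZero_obj_Q [G.PreservesZeroMorphisms] {J : Type u}
    (K : J → CochainComplex (ModuleCat.{u} R) ℤ)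
    (hK : ∀ n, ∃ j₀, ∀ j ≠ j₀, IsZero ((K j).X n)) :
    ∃ s : Finset J, ∀ j ∉ s, IsZero (G.obj (Q.obj (K j))) := by
  classical
  have hy (M : ModuleCat.{u} S) : ∃ y : M, y = 0 → IsZero M := by
    by_cases hM : Subsingleton M
    · exact ⟨0, fun _ => ModuleCat.isZero_of_subsingleton M⟩
    · have := not_subsingleton_iff_nontrivial.1 hM
      obtain ⟨y, hy⟩ := exists_ne (0 : M)
      exact ⟨y, fun h => (hy h).elim⟩
  -- In each degree only one `K j` lives, so the coproduct of the `K j` is also their product, and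
  -- a family of nonzero elements has finite support.
  choose y hy using fun j => hy (G.obj (Q.obj (K j)))
  let w (j i : J) : K j ⟶ K i := if h : j = i then eqToHom (by rw [h]) else 0
  obtain ⟨s, u, hu⟩ := exists_finset_obj_Q_eq_sum G w (fun n => by
    obtain ⟨j₀, hj₀⟩ := hK n
    have : IsIso ((w j₀ j₀).f n) := by simp only [w, dite_true]; infer_instance
    exact isIso_sigmaToPi_of_isZero _ _ _ j₀ hj₀ hj₀) y
  refine ⟨s, fun i hi => hy i ?_⟩
  rw [hu]
  refine Finset.sum_eq_zero fun j hj => ?_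
  have hw : w j i = 0 := dif_neg (by rintro rfl; exact hi hj)
  rw [hw, Functor.map_zero, Functor.map_zero]
  rfl

end Finiteness

/-! ### Dévissage -/

section Devissage

variable {R S : Type u} [Ring R] [Ring S]

lemma length_le_add_of_exact {T : ShortComplex (ModuleCat.{u} S)} (hT : T.Exact) :
    Module.length S T.X₂ ≤ Module.length S T.X₁ + Module.length S T.X₃ := by
  have h := (ShortComplex.ShortExact.moduleCat_exact_iff_function_exact T).1 hT
  have hg := Module.length_eq_add_of_exact (LinearMap.ker T.g.hom).subtype T.g.hom.rangeRestrict
    (Submodule.subtype_injective _) T.g.hom.surjective_rangeRestrict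
    (LinearMap.exact_iff.2 (by rw [LinearMap.ker_rangeRestrict, Submodule.range_subtype]))
  rw [hg, h.linearMap_ker_eq]
  exact add_le_add
    (Module.length_le_of_surjective _ T.f.hom.surjective_rangeRestrict)
    (Module.length_le_of_injective _ (Submodule.subtype_injective _))

lemma exists_retraction_quotient_jacobson [IsArtinianRing R] (M : ModuleCat.{u} R)
    [IsSimpleModule R M] :
    Nonempty (Retract M (ModuleCat.of R (R ⧸ Ring.jacobson R))) := by
  have hR : IsSemisimpleModule R (R ⧸ Ring.jacobson R) :=
    (IsArtinian.isSemisimpleModule_iff_jacobson R _).2 (Module.jacobson_quotient_jacobson R R)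
  have := IsSimpleModule.nontrivial R M
  obtain ⟨m, hm⟩ := exists_ne (0 : M)
  let q : (R ⧸ Ring.jacobson R) →ₗ[R] M :=
    Submodule.liftQ _ (LinearMap.toSpanSingleton R M m)
      (IsSemisimpleModule.jacobson_le_ker _ _ _ _ _)
  have hq : Function.Surjective q := fun x => by
    obtain ⟨r, hr⟩ := IsSimpleModule.toSpanSingleton_surjective R hm x
    exact ⟨Submodule.Quotient.mk r, hr⟩
  obtain ⟨i, hi⟩ := IsSemisimpleModule.lifting_property q hq LinearMap.id
  exact ⟨⟨ModuleCat.ofHom i, ModuleCat.ofHom q, ModuleCat.hom_ext hi⟩⟩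

lemma length_obj_le_of_retract {C : Type*} [Category* C] (G : C ⥤ ModuleCat.{u} S) {X Y : C}
    (h : Retract X Y) : Module.length S (G.obj X) ≤ Module.length S (G.obj Y) :=
  Module.length_le_of_injective (G.map h.i).hom
    ((ModuleCat.mono_iff_injective _).1 (inferInstanceAs (Mono (h.map G).i)))

lemma length_obj_le_length_mul [IsArtinianRing R] (G : ModuleCat.{u} R ⥤ ModuleCat.{u} S)
    [G.PreservesZeroMorphisms]
    (hG : ∀ T : ShortComplex (ModuleCat.{u} R), T.ShortExact → (T.map G).Exact)
    (M : ModuleCat.{u} R) (hM : IsFiniteLength R M) :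
    Module.length S (G.obj M) ≤
      Module.length R M * Module.length S (G.obj (ModuleCat.of R (R ⧸ Ring.jacobson R))) := by
  suffices ∀ (M : Type u) [AddCommGroup M] [Module R M], IsFiniteLength R M →
      Module.length S (G.obj (ModuleCat.of R M)) ≤ Module.length R M *
        Module.length S (G.obj (ModuleCat.of R (R ⧸ Ring.jacobson R))) from this M hM
  intro M _ _ hM
  induction hM with
  | @of_subsingleton M _ _ _ =>
    have hGM := G.map_isZero (ModuleCat.isZero_of_subsingleton (ModuleCat.of R M))
    rw [Module.length_eq_zero_iff.2 (ModuleCat.subsingleton_of_isZero hGM)]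
    exact zero_le
  | @of_simple_quotient M _ _ N _ _ ih =>
    let T := ModuleCat.shortComplexOfCompEqZero N.subtype N.mkQ
      (LinearMap.exact_subtype_mkQ N).linearMap_comp_eq_zero
    have hT : T.ShortExact := ModuleCat.shortComplex_shortExact T
      (LinearMap.exact_subtype_mkQ N) N.injective_subtype N.mkQ_surjective
    have hlen := Module.length_eq_add_of_exact N.subtype N.mkQ N.injective_subtype
      N.mkQ_surjective (LinearMap.exact_subtype_mkQ N)
    obtain ⟨ret⟩ := exists_retraction_quotient_jacobson (ModuleCat.of R (M ⧸ N))
    rw [hlen, Module.length_eq_one R (M ⧸ N), add_mul, one_mul]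
    exact (length_le_add_of_exact (hG T hT)).trans
      (add_le_add ih (length_obj_le_of_retract G ret))

end Devissage

section Truncation

open DerivedCategory Pretriangulated

variable {C : Type*} [Category* C] [Abelian C] [HasDerivedCategory C]

open ZeroObject in
lemma isZero_of_isZero_homologyFunctor_obj {X : DerivedCategory C}
    (h : ∀ n, IsZero ((homologyFunctor C n).obj X)) : IsZero X := by
  have : IsIso (0 : X ⟶ 0) := (DerivedCategory.isIso_iff C _).2 fun n =>
    ⟨0, (h n).eq_of_src _ _, ((homologyFunctor C n).map_isZero (isZero_zero _)).eq_of_src _ _⟩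
  exact (isZero_zero _).of_iso (asIso (0 : X ⟶ 0))

lemma isIso_homologyFunctor_map_mor₁ {T : Triangle (DerivedCategory C)} (hT : T ∈ distTriang _)
    {n : ℤ} (h : ∀ m ≤ n, IsZero ((homologyFunctor C m).obj T.obj₃)) :
    IsIso ((homologyFunctor C n).map T.mor₁) := by
  have := (HomologySequence.mono_homologyMap_mor₁_iff T hT (n - 1) n).2
    ((h (n - 1) (by lia)).eq_of_src _ _)
  have := (HomologySequence.epi_homologyMap_mor₁_iff T hT n).2 ((h n le_rfl).eq_of_tgt _ _)
  exact isIso_of_mono_of_epi _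

lemma isIso_homologyFunctor_map_mor₂ {T : Triangle (DerivedCategory C)} (hT : T ∈ distTriang _)
    {n : ℤ} (h : ∀ m ≥ n, IsZero ((homologyFunctor C m).obj T.obj₁)) :
    IsIso ((homologyFunctor C n).map T.mor₂) := by
  have := (HomologySequence.mono_homologyMap_mor₂_iff T hT n).2 ((h n le_rfl).eq_of_src _ _)
  have := (HomologySequence.epi_homologyMap_mor₂_iff T hT n (n + 1)).2
    ((h (n + 1) (by lia)).eq_of_tgt _ _)
  exact isIso_of_mono_of_epi _

lemma nonempty_iso_singleFunctor_obj {X : DerivedCategory C} {n : ℤ}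
    (h : ∀ m ≠ n, IsZero ((homologyFunctor C m).obj X)) :
    Nonempty (X ≅ (singleFunctor C n).obj ((homologyFunctor C n).obj X)) := by
  have : X.IsGE n := (DerivedCategory.isGE_iff _ _).2 fun m hm => h m hm.ne
  have : X.IsLE n := (DerivedCategory.isLE_iff _ _).2 fun m hm => h m hm.ne'
  obtain ⟨M, ⟨e⟩⟩ := exists_iso_singleFunctor_obj_of_isGE_of_isLE X n
  exact ⟨e ≪≫ (singleFunctor C n).mapIso
    (((singleFunctorCompHomologyFunctorIso C n).app M).symm ≪≫
      ((homologyFunctor C n).mapIso e).symm)⟩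

lemma exists_truncation_triangle (X : DerivedCategory C) (b : ℤ) :
    ∃ (Y Z : DerivedCategory C) (f : Y ⟶ X) (g : X ⟶ Z) (h : Z ⟶ Y⟦(1 : ℤ)⟧),
      Triangle.mk f g h ∈ distTriang _ ∧
      (∀ n ≥ b, IsZero ((homologyFunctor C n).obj Y)) ∧
      (∀ n < b, IsZero ((homologyFunctor C n).obj Z)) ∧
      (∀ n < b, IsIso ((homologyFunctor C n).map f)) ∧
      ∀ n ≥ b, IsIso ((homologyFunctor C n).map g) := by
  obtain ⟨Y, Z, hY, hZ, f, g, h, hT⟩ := TStructure.t.exists_triangle X (b - 1) b (by lia)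
  have hY' (n : ℤ) (hn : n ≥ b) : IsZero ((homologyFunctor C n).obj Y) :=
    (DerivedCategory.isLE_iff Y (b - 1)).1 ⟨hY⟩ n (by lia)
  have hZ' (n : ℤ) (hn : n < b) : IsZero ((homologyFunctor C n).obj Z) :=
    (DerivedCategory.isGE_iff Z b).1 ⟨hZ⟩ n hn
  exact ⟨Y, Z, f, g, h, hT, hY', hZ',
    fun n hn => isIso_homologyFunctor_map_mor₁ hT fun m (hm : m ≤ n) => hZ' m (by lia),
    fun n hn => isIso_homologyFunctor_map_mor₂ hT fun m (hm : m ≥ n) => hY' m (by lia)⟩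

lemma length_obj_le_sum_singleFunctor {S : Type u} [Ring S]
    (G : DerivedCategory C ⥤ ModuleCat.{u} S) [G.IsHomological] (X : DerivedCategory C)
    (s : Finset ℤ) (hX : ∀ n ∉ s, IsZero ((homologyFunctor C n).obj X)) :
    Module.length S (G.obj X) ≤ ∑ n ∈ s,
      Module.length S (G.obj ((singleFunctor C n).obj ((homologyFunctor C n).obj X))) := by
  induction s using Finset.induction_on_max generalizing X with
  | empty =>
    have hGX := G.map_isZero (isZero_of_isZero_homologyFunctor_obj fun n => hX n (by simp))
    simp [Module.length_eq_zero_iff.2 (ModuleCat.subsingleton_of_isZero hGX)]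
  | insert b s hb ih =>
    obtain ⟨Y, Z, f, g, h, hT, hY, hZ, hf, hg⟩ := exists_truncation_triangle X b
    have hYs : Module.length S (G.obj Y) ≤ ∑ n ∈ s,
        Module.length S (G.obj ((singleFunctor C n).obj ((homologyFunctor C n).obj Y))) := by
      refine ih Y fun n hn => ?_
      rcases lt_or_ge n b with hnb | hnb
      · have := hf n hnb
        exact (hX n (by simp [hn, hnb.ne])).of_iso (asIso ((homologyFunctor C n).map f))
      · exact hY n hnb
    obtain ⟨eZ⟩ : Nonempty (Z ≅ (singleFunctor C b).obj ((homologyFunctor C b).obj Z)) := by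
      refine nonempty_iso_singleFunctor_obj fun n hn => ?_
      rcases hn.lt_or_gt with hnb | hnb
      · exact hZ n hnb
      · have := hg n hnb.le
        have hns : n ∉ insert b s := by
          simpa [hn] using fun hs => (hb n hs).not_gt hnb
        exact (hX n hns).of_iso (asIso ((homologyFunctor C n).map g)).symm
    rw [Finset.sum_insert fun hs => (hb b hs).false, add_comm]
    refine (length_le_add_of_exact (G.map_distinguished_exact _ hT)).trans (add_le_add ?_ ?_)
    · refine hYs.trans_eq (Finset.sum_congr rfl fun n hn => ?_)
      have := hf n (hb n hn)
      exact ((singleFunctor C n ⋙ G).mapIso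
        (asIso ((homologyFunctor C n).map f))).toLinearEquiv.length_eq
    · have := hg b le_rfl
      exact (G.mapIso (eZ ≪≫ (singleFunctor C b).mapIso
        (asIso ((homologyFunctor C b).map g)).symm)).toLinearEquiv.length_eq.le

lemma exact_map_singleFunctor_comp {A : Type*} [Category* A] [Abelian A]
    (G : DerivedCategory C ⥤ A) [G.IsHomological] (n : ℤ) {T : ShortComplex C}
    (hT : T.ShortExact) : (T.map (singleFunctor C n ⋙ G)).Exact :=
  ShortComplex.exact_of_iso
    (T.mapNatIso (Functor.isoWhiskerRight (singleFunctorIsoCompQ C n).symm G))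
    (G.map_distinguished_exact _
      (triangleOfSES_distinguished (hT.map_of_exact (HomologicalComplex.single C (.up ℤ) n))))

lemma length_obj_le_sum {R S : Type u} [Ring R] [IsArtinianRing R] [Ring S]
    [HasDerivedCategory (ModuleCat.{u} R)]
    (G : DerivedCategory (ModuleCat.{u} R) ⥤ ModuleCat.{u} S) [G.IsHomological]
    (X : DerivedCategory (ModuleCat.{u} R)) (s : Finset ℤ)
    (hX : ∀ n ∉ s, IsZero ((homologyFunctor (ModuleCat.{u} R) n).obj X))
    (hlen : ∀ n, IsFiniteLength R ((homologyFunctor (ModuleCat.{u} R) n).obj X)) :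
    Module.length S (G.obj X) ≤
      ∑ n ∈ s, Module.length R ((homologyFunctor (ModuleCat.{u} R) n).obj X) *
        Module.length S
          (G.obj ((singleFunctor _ n).obj (ModuleCat.of R (R ⧸ Ring.jacobson R)))) :=
  (length_obj_le_sum_singleFunctor G X s hX).trans <| Finset.sum_le_sum fun n _ =>
    length_obj_le_length_mul (singleFunctor _ n ⋙ G)
      (fun _ hT => exact_map_singleFunctor_comp G n hT) _ (hlen n)

end Truncation

/-! ### Cohomological range under an equivalence -/

section Equivalence

open DerivedCategory ModuleCat

variable {A B : Type u} [Ring A] [Ring B] [HasDerivedCategory.{u} (ModuleCat.{u} A)]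
  [HasDerivedCategory.{u} (ModuleCat.{u} B)]
  (F : DerivedCategory (ModuleCat.{u} A) ⥤ DerivedCategory (ModuleCat.{u} B))

lemma nonempty_homology_obj_single_iso [F.CommShift ℤ] (M : ModuleCat.{u} A) (n i : ℤ) :
    Nonempty ((F ⋙ homologyFunctor _ i).obj ((singleFunctor _ n).obj M) ≅
      (F ⋙ homologyFunctor _ 0).obj ((singleFunctor _ (n - i)).obj M)) := by
  let e : ((singleFunctor _ n).obj M)⟦i⟧ ≅ (singleFunctor (ModuleCat.{u} A) (n - i)).obj M :=
    ((singleFunctors (ModuleCat.{u} A)).shiftIso i (n - i) n (by lia)).app M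
  exact ⟨((homologyFunctor (ModuleCat.{u} B) 0).shiftIso i 0 i (by lia)).symm.app _ ≪≫
    (homologyFunctor _ 0).mapIso ((F.commShiftIso i).symm.app _ ≪≫ F.mapIso e)⟩

variable [F.IsEquivalence]

lemma finite_homology_obj_single {𝕜 : Type u} [Field 𝕜] [Algebra 𝕜 A] (M : ModuleCat.{u} A)
    [FiniteDimensional 𝕜 M] (n : ℤ) :
    Module.Finite B ((F ⋙ homologyFunctor _ 0).obj ((singleFunctor _ n).obj M)) := by
  let K := (HomologicalComplex.single (ModuleCat.{u} A) (.up ℤ) n).obj M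
  have hK (m : ℤ) : FiniteDimensional 𝕜 (K.X m) := by
    by_cases hm : m = n
    · subst hm
      let e := (HomologicalComplex.singleObjXSelf (.up ℤ) m M).symm.toLinearEquiv
      exact Module.Finite.equiv (e.restrictScalars 𝕜)
    · have := ModuleCat.subsingleton_of_isZero
        (HomologicalComplex.isZero_single_obj_X (.up ℤ) n M m hm)
      infer_instance
  have := finite_obj_Q (F ⋙ homologyFunctor (ModuleCat.{u} B) 0)
    (exists_iso_comp_map_eq_of_full F _
      fun X φ => exists_iso_comp_homologyFunctor_map_eq 0 X φ) K hK
  let e : (F ⋙ homologyFunctor _ 0).obj (Q.obj K) ≅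
      (F ⋙ homologyFunctor _ 0).obj ((singleFunctor _ n).obj M) :=
    (F ⋙ homologyFunctor _ 0).mapIso ((singleFunctorIsoCompQ _ n).app M).symm
  exact Module.Finite.equiv e.toLinearEquiv

lemma exists_finset_isZero_homology_obj_single (M : ModuleCat.{u} A) :
    ∃ s : Finset ℤ, ∀ n ∉ s,
      IsZero ((F ⋙ homologyFunctor _ 0).obj ((singleFunctor _ n).obj M)) := by
  classical
  obtain ⟨s, hs⟩ := exists_finset_isZero_obj_Q (F ⋙ homologyFunctor (ModuleCat.{u} B) 0)
    (fun n : ULift.{u} ℤ => (HomologicalComplex.single (ModuleCat.{u} A) (.up ℤ) n.down).obj M)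
    fun n => ⟨⟨n⟩, fun m hm => HomologicalComplex.isZero_single_obj_X _ _ _ _ fun h =>
      hm (ULift.ext _ _ h.symm)⟩
  refine ⟨s.image ULift.down, fun n hn => (hs ⟨n⟩ fun h => hn ?_).of_iso ?_⟩
  · exact Finset.mem_image_of_mem ULift.down h
  · exact (F ⋙ homologyFunctor _ 0).mapIso ((singleFunctorIsoCompQ _ n).app M)

end Equivalence

section VectorHomology

open DerivedCategory ModuleCat

lemma finite_restrictScalars_obj (𝕜 : Type u) {R : Type u} [Field 𝕜] [Ring R] [Algebra 𝕜 R]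
    [FiniteDimensional 𝕜 R] (M : ModuleCat.{u} R) [Module.Finite R M] :
    Module.Finite 𝕜 ((restrictScalars (algebraMap 𝕜 R)).obj M) :=
  have h : Module.Finite 𝕜 M := Module.Finite.trans R M
  h

variable (𝕜 R : Type u) [Field 𝕜] [Ring R] [Algebra 𝕜 R] [HasDerivedCategory.{u} (ModuleCat.{u} R)]

/-- The functor `Hⁱ` with values in vector spaces over the ground field; `hdim` is the dimension
of its values. -/
noncomputable def vectorHomologyFunctor (i : ℤ) :
    DerivedCategory (ModuleCat.{u} R) ⥤ ModuleCat.{u} 𝕜 :=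
  homologyFunctor _ i ⋙ restrictScalars (algebraMap 𝕜 R)

instance (i : ℤ) : (vectorHomologyFunctor 𝕜 R i).IsHomological where
  map_zero X Y :=
    (congrArg (restrictScalars (algebraMap 𝕜 R)).map ((homologyFunctor _ i).map_zero X Y)).trans
      ((restrictScalars (algebraMap 𝕜 R)).map_zero _ _)
  exact T hT := by
    have h := (homologyFunctor _ i).map_distinguished_exact T hT
    rw [ShortComplex.moduleCat_exact_iff] at h ⊢
    exact h

variable {R} (i : ℤ) {X : DerivedCategory (ModuleCat.{u} R)}

lemma isZero_vectorHomologyFunctor_obj_iff :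
    IsZero ((vectorHomologyFunctor 𝕜 R i).obj X) ↔ IsZero (Hobj R i X) := by
  rw [ModuleCat.isZero_iff_subsingleton, ModuleCat.isZero_iff_subsingleton]
  rfl

lemma length_homology_le_length_vectorHomology :
    Module.length R (Hobj R i X) ≤ Module.length 𝕜 ((vectorHomologyFunctor 𝕜 R i).obj X) := by
  have h := Submodule.length_le_length_restrictScalars (R := R) (M := Hobj R i X) 𝕜 ⊤
  rwa [Submodule.restrictScalars_top, Module.length_top, Module.length_top] at h

variable {𝕜}

lemma length_vectorHomologyFunctor_obj (hX : FinCoh 𝕜 R X) :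
    Module.length 𝕜 ((vectorHomologyFunctor 𝕜 R i).obj X) = hdim 𝕜 R i X :=
  have : Module.Finite 𝕜 ((vectorHomologyFunctor 𝕜 R i).obj X) := hX i
  Module.length_eq_finrank 𝕜 _

lemma finCoh_of_length_ne_top
    (h : ∀ i, Module.length 𝕜 ((vectorHomologyFunctor 𝕜 R i).obj X) ≠ ⊤) : FinCoh 𝕜 R X := fun i =>
  have := (isFiniteLength_iff_isNoetherian_isArtinian.1 (Module.length_ne_top_iff.1 (h i))).1
  inferInstanceAs (Module.Finite 𝕜 ((vectorHomologyFunctor 𝕜 R i).obj X))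

lemma length_homology_le_hdim (hX : FinCoh 𝕜 R X) :
    Module.length R (Hobj R i X) ≤ hdim 𝕜 R i X :=
  (length_homology_le_length_vectorHomology 𝕜 i).trans_eq (length_vectorHomologyFunctor_obj i hX)

lemma isFiniteLength_Hobj (hX : FinCoh 𝕜 R X) : IsFiniteLength R (Hobj R i X) :=
  Module.length_ne_top_iff.1
    (ne_top_of_le_ne_top (ENat.natCast_ne_top _) (length_homology_le_hdim i hX))

lemma hdim_eq_zero_iff (hX : FinCoh 𝕜 R X) : hdim 𝕜 R i X = 0 ↔ IsZero (Hobj R i X) := by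
  have := hX i
  exact Module.finrank_zero_iff.trans
    (ModuleCat.isZero_iff_subsingleton.symm.trans (isZero_vectorHomologyFunctor_obj_iff 𝕜 i))

end VectorHomology

section LinearBound

open DerivedCategory ModuleCat

variable {𝕜 𝕂 A B : Type u} [Field 𝕜] [Field 𝕂] [Ring A] [Algebra 𝕜 A] [Ring B] [Algebra 𝕂 B]
  [HasDerivedCategory.{u} (ModuleCat.{u} A)] [HasDerivedCategory.{u} (ModuleCat.{u} B)]

lemma hdim_le_hl {X : DerivedCategory (ModuleCat.{u} A)} (hX : InDb 𝕜 A X) (i : ℤ) :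
    hdim 𝕜 A i X ≤ hl 𝕜 A X := by
  obtain ⟨a, b, hab⟩ := hX.1
  refine le_csSup (((Set.finite_Icc a b).image (hdim 𝕜 A · X) |>.insert 0).subset ?_).bddAbove
    ⟨i, rfl⟩
  rintro _ ⟨j, rfl⟩
  by_cases hj : j < a ∨ b < j
  · exact Or.inl ((hdim_eq_zero_iff j hX.2).2 (hab j hj))
  · exact Or.inr ⟨j, by simpa using hj, rfl⟩

lemma sub_add_one_le_hw {X : DerivedCategory (ModuleCat.{u} A)} (hX : Bdd A X) {i j : ℤ}
    (hi : ¬ IsZero (Hobj A i X)) (hj : ¬ IsZero (Hobj A j X)) : j - i + 1 ≤ hw A X := by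
  by_cases hij : j - i + 1 < 0
  · lia
  obtain ⟨n, hn⟩ := Int.eq_ofNat_of_zero_le (not_lt.1 hij)
  rw [hn]
  refine Nat.cast_le.2 (le_csSup ?_ ⟨i, j, hi, hj, hn.symm⟩)
  obtain ⟨a, b, hab⟩ := hX
  refine ⟨(b - a + 1).toNat, ?_⟩
  rintro m ⟨i', j', hi', hj', h⟩
  have := mt (hab i') hi'
  have := mt (hab j') hj'
  lia

lemma sum_mul_sub_le_sum_add_mul (f : ℤ → ℕ) (d : ℤ →₀ ℕ) (s : Finset ℤ) (i : ℤ) :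
    ∑ n ∈ s, f n * d (n - i) ≤ d.sum fun m c => f (i + m) * c := by
  have h : (d.sum fun m c => f (i + m) * c) =
      ∑ n ∈ d.support.map (addLeftEmbedding i), f n * d (n - i) := by
    simp [Finsupp.sum]
  rw [h]
  refine Finset.sum_le_sum_of_ne_zero fun n _ hn => Finset.mem_map.2 ⟨n - i, ?_, by simp⟩
  exact Finsupp.mem_support_iff.2 (right_ne_zero_of_mul hn)

section Dominated

variable {X : DerivedCategory (ModuleCat.{u} A)} {Y : DerivedCategory (ModuleCat.{u} B)}
  (d : ℤ →₀ ℕ)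

lemma exists_mem_support_not_isZero (hX : FinCoh 𝕜 A X) (hY : FinCoh 𝕂 B Y)
    (h : ∀ i, hdim 𝕂 B i Y ≤ d.sum fun m c => hdim 𝕜 A (i + m) X * c) {i : ℤ}
    (hi : ¬ IsZero (Hobj B i Y)) : ∃ m ∈ d.support, ¬ IsZero (Hobj A (i + m) X) := by
  by_contra! hm
  refine hi ((hdim_eq_zero_iff i hY).1 (Nat.le_zero.1 ((h i).trans_eq ?_)))
  exact Finset.sum_eq_zero fun m hmd =>
    mul_eq_zero_of_left ((hdim_eq_zero_iff _ hX).2 (hm m hmd)) _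

lemma hl_le_of_hdim_le (hX : InDb 𝕜 A X)
    (h : ∀ i, hdim 𝕂 B i Y ≤ d.sum fun m c => hdim 𝕜 A (i + m) X * c) :
    hl 𝕂 B Y ≤ (d.sum fun _ c => c) * hl 𝕜 A X := by
  refine csSup_le' ?_
  rintro _ ⟨i, rfl⟩
  refine (h i).trans ?_
  rw [mul_comm, Finsupp.mul_sum]
  exact Finset.sum_le_sum fun m _ => Nat.mul_le_mul_right _ (hdim_le_hl hX _)

lemma bdd_of_hdim_le (hX : InDb 𝕜 A X) (hY : FinCoh 𝕂 B Y)
    (h : ∀ i, hdim 𝕂 B i Y ≤ d.sum fun m c => hdim 𝕜 A (i + m) X * c) : Bdd B Y := by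
  obtain ⟨a, b, hab⟩ := hX.1
  let c := d.support.sup Int.natAbs
  refine ⟨a - c, b + c, fun i hi => ?_⟩
  by_contra hz
  obtain ⟨m, hm, hmX⟩ := exists_mem_support_not_isZero d hX.2 hY h hz
  have : m.natAbs ≤ c := Finset.le_sup hm
  have := mt (hab (i + m)) hmX
  lia

lemma hw_le_of_hdim_le (hX : InDb 𝕜 A X) (hY : FinCoh 𝕂 B Y)
    (h : ∀ i, hdim 𝕂 B i Y ≤ d.sum fun m c => hdim 𝕜 A (i + m) X * c) :
    hw B Y ≤ (2 * d.support.sup Int.natAbs + 1) * hw A X := by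
  refine csSup_le' ?_
  rintro n ⟨i, j, hi, hj, hn⟩
  obtain ⟨p, hp, hpX⟩ := exists_mem_support_not_isZero d hX.2 hY h hi
  obtain ⟨q, hq, hqX⟩ := exists_mem_support_not_isZero d hX.2 hY h hj
  have hp' : p.natAbs ≤ d.support.sup Int.natAbs := Finset.le_sup hp
  have hq' : q.natAbs ≤ d.support.sup Int.natAbs := Finset.le_sup hq
  have hpq := sub_add_one_le_hw hX.1 hpX hqX
  have hpos := sub_add_one_le_hw hX.1 hpX hpX
  calc n ≤ 2 * d.support.sup Int.natAbs + hw A X := by lia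
    _ ≤ (2 * d.support.sup Int.natAbs + 1) * hw A X := by nlinarith

end Dominated

variable (F : DerivedCategory (ModuleCat.{u} A) ⥤ DerivedCategory (ModuleCat.{u} B))
  [F.CommShift ℤ]

lemma length_vectorHomology_obj_le [F.IsTriangulated] [IsArtinianRing A] (d : ℤ →₀ ℕ)
    (hd : ∀ n i, Module.length 𝕂 ((F ⋙ vectorHomologyFunctor 𝕂 B i).obj
      ((singleFunctor _ n).obj (.of A (A ⧸ Ring.jacobson A)))) ≤ d (n - i))
    {X : DerivedCategory (ModuleCat.{u} A)} (hX : InDb 𝕜 A X) (i : ℤ) :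
    Module.length 𝕂 ((vectorHomologyFunctor 𝕂 B i).obj (F.obj X)) ≤
      (d.sum fun m c => hdim 𝕜 A (i + m) X * c : ℕ) := by
  obtain ⟨a, b, hab⟩ := hX.1
  calc Module.length 𝕂 ((vectorHomologyFunctor 𝕂 B i).obj (F.obj X))
    _ ≤ _ := length_obj_le_sum (F ⋙ vectorHomologyFunctor 𝕂 B i) X (Finset.Icc a b)
        (fun n hn => hab n (by simpa [or_iff_not_imp_left] using hn))
        (fun n => isFiniteLength_Hobj n hX.2)
    _ ≤ ∑ n ∈ Finset.Icc a b, (hdim 𝕜 A n X * d (n - i) : ℕ∞) :=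
        Finset.sum_le_sum fun n _ => mul_le_mul' (length_homology_le_hdim n hX.2) (hd n i)
    _ ≤ _ := mod_cast sum_mul_sub_le_sum_add_mul (hdim 𝕜 A · X) d (Finset.Icc a b) i

variable [FiniteDimensional 𝕂 B] [F.IsEquivalence]

lemma length_vectorHomology_obj_single_eq_hdim (M : ModuleCat.{u} A) [FiniteDimensional 𝕜 M]
    (n i : ℤ) :
    Module.length 𝕂 ((F ⋙ vectorHomologyFunctor 𝕂 B i).obj ((singleFunctor _ n).obj M)) =
      hdim 𝕂 B 0 (F.obj ((singleFunctor _ (n - i)).obj M)) := by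
  obtain ⟨e⟩ := nonempty_homology_obj_single_iso F M n i
  have : Module.Finite B (Hobj B 0 (F.obj ((singleFunctor _ (n - i)).obj M))) :=
    finite_homology_obj_single F (𝕜 := 𝕜) M (n - i)
  have : Module.Finite 𝕂
      ((vectorHomologyFunctor 𝕂 B 0).obj (F.obj ((singleFunctor _ (n - i)).obj M))) :=
    finite_restrictScalars_obj 𝕂 (Hobj B 0 (F.obj ((singleFunctor _ (n - i)).obj M)))
  let e' : (vectorHomologyFunctor 𝕂 B i).obj (F.obj ((singleFunctor _ n).obj M)) ≅
      (vectorHomologyFunctor 𝕂 B 0).obj (F.obj ((singleFunctor _ (n - i)).obj M)) :=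
    (restrictScalars (algebraMap 𝕂 B)).mapIso e
  exact e'.toLinearEquiv.length_eq.trans (Module.length_eq_finrank 𝕂 _)

lemma exists_length_vectorHomology_obj_single_eq [FiniteDimensional 𝕜 A] (M : ModuleCat.{u} A)
    [Module.Finite A M] :
    ∃ d : ℤ →₀ ℕ, ∀ n i, Module.length 𝕂 ((F ⋙ vectorHomologyFunctor 𝕂 B i).obj
      ((singleFunctor _ n).obj M)) = d (n - i) := by
  have : FiniteDimensional 𝕜 M := Module.Finite.trans A M
  obtain ⟨s, hs⟩ := exists_finset_isZero_homology_obj_single F M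
  refine ⟨Finsupp.onFinset s (fun m => hdim 𝕂 B 0 (F.obj ((singleFunctor _ m).obj M))) ?_,
    length_vectorHomology_obj_single_eq_hdim (𝕜 := 𝕜) F M⟩
  intro m hm
  by_contra hms
  have := ModuleCat.isZero_iff_subsingleton.1
    ((isZero_vectorHomologyFunctor_obj_iff 𝕂 0).2 (hs m hms))
  exact hm (Module.finrank_zero_of_subsingleton (R := 𝕂)
    (M := (vectorHomologyFunctor 𝕂 B 0).obj (F.obj ((singleFunctor _ m).obj M))))

lemma exists_hdim_obj_le [FiniteDimensional 𝕜 A] [F.IsTriangulated] :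
    ∃ d : ℤ →₀ ℕ, ∀ X, InDb 𝕜 A X → FinCoh 𝕂 B (F.obj X) ∧
      ∀ i, hdim 𝕂 B i (F.obj X) ≤ d.sum fun m c => hdim 𝕜 A (i + m) X * c := by
  have : IsArtinianRing A := IsArtinianRing.of_finite 𝕜 A
  have : Module.Finite A (ModuleCat.of A (A ⧸ Ring.jacobson A)) :=
    inferInstanceAs (Module.Finite A (A ⧸ Ring.jacobson A))
  obtain ⟨d, hd⟩ := exists_length_vectorHomology_obj_single_eq (𝕜 := 𝕜) (𝕂 := 𝕂) F
    (.of A (A ⧸ Ring.jacobson A))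
  refine ⟨d, fun X hX => ?_⟩
  have hle := length_vectorHomology_obj_le F d (fun n i => (hd n i).le) hX
  have hfin := finCoh_of_length_ne_top fun i => ne_top_of_le_ne_top (ENat.natCast_ne_top _) (hle i)
  exact ⟨hfin, fun i =>
    Nat.cast_le.1 ((length_vectorHomologyFunctor_obj i hfin).symm.trans_le (hle i))⟩

lemma exists_hr_obj_le [FiniteDimensional 𝕜 A] [F.IsTriangulated] :
    ∃ N : ℕ, ∀ X, InDb 𝕜 A X →
      InDb 𝕂 B (F.obj X) ∧ hr 𝕂 B (F.obj X) ≤ N * hr 𝕜 A X := by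
  obtain ⟨d, hd⟩ := exists_hdim_obj_le (𝕜 := 𝕜) (𝕂 := 𝕂) F
  refine ⟨(2 * d.support.sup Int.natAbs + 1) * d.sum fun _ c => c, fun X hX => ?_⟩
  obtain ⟨hfin, hle⟩ := hd X hX
  refine ⟨⟨bdd_of_hdim_le d hX hfin hle, hfin⟩, ?_⟩
  exact (Nat.mul_le_mul (hw_le_of_hdim_le d hX hfin hle) (hl_le_of_hdim_le d hX hle)).trans_eq
    (mul_mul_mul_comm _ _ _ _)

end LinearBound

section Invariance

open DerivedCategory ModuleCat

lemma exists_embedding_comp_eq_of_le {f : ℕ → ℕ} {b : ℕ} (h : ∀ j, f j ≤ b) :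
    ∃ (s : ℕ) (φ : ℕ ↪ ℕ), ∀ j, f (φ j) = s := by
  obtain ⟨s, hs⟩ := Finite.exists_infinite_fiber fun j => (⟨f j, Nat.lt_succ_of_le (h j)⟩ : Fin _)
  let φ := (Set.infinite_coe_iff.1 hs).natEmbedding
  exact ⟨s, φ.trans (.subtype _), fun j => congrArg Fin.val (φ j).2⟩

variable (𝕜 R : Type u) [Field 𝕜] [Ring R] [Algebra 𝕜 R] [HasDerivedCategory.{u} (ModuleCat.{u} R)]

/-- The number `r` is the cohomological range of infinitely many indecomposable objects of
`Dᵇ(mod R)`, pairwise distinct up to shift and isomorphism. -/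
def IsInfiniteRange (r : ℕ) : Prop :=
  ∃ X : ℕ → DerivedCategory (ModuleCat.{u} R),
    (∀ j, Indec (X j) ∧ InDb 𝕜 R (X j) ∧ hr 𝕜 R (X j) = r) ∧
    ∀ j j', j ≠ j' → ∀ n : ℤ, IsEmpty (X j ≅ (X j')⟦n⟧)

lemma stronglyDerivedUnbounded_iff_infinite :
    StronglyDerivedUnbounded 𝕜 R ↔ {r | IsInfiniteRange 𝕜 R r}.Infinite := by
  constructor
  · rintro ⟨r, hr, h⟩
    exact Set.infinite_of_injective_forall_mem hr.injective h
  · exact fun h => ⟨_, Nat.nth_strictMono h, Nat.nth_mem_of_infinite h⟩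

variable {R}

lemma hr_eq_of_iso {X Y : DerivedCategory (ModuleCat.{u} R)} (e : X ≅ Y) :
    hr 𝕜 R X = hr 𝕜 R Y := by
  have hzero (i : ℤ) : IsZero (Hobj R i X) ↔ IsZero (Hobj R i Y) :=
    ((homologyFunctor _ i).mapIso e).isZero_iff
  have hdim_eq (i : ℤ) : hdim 𝕜 R i X = hdim 𝕜 R i Y :=
    ((vectorHomologyFunctor 𝕜 R i).mapIso e).toLinearEquiv.finrank_eq
  simp only [hr, hw, hl, hzero, hdim_eq]

variable {𝕜} {𝕂 A B : Type u} [Field 𝕂] [Ring A] [Algebra 𝕜 A] [Ring B] [Algebra 𝕂 B]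
  [HasDerivedCategory.{u} (ModuleCat.{u} A)] [HasDerivedCategory.{u} (ModuleCat.{u} B)]

lemma indec_obj (F : DerivedCategory (ModuleCat.{u} A) ⥤ DerivedCategory (ModuleCat.{u} B))
    [F.IsEquivalence] {X : DerivedCategory (ModuleCat.{u} A)} (hX : Indec X) :
    Indec (F.obj X) := by
  refine ⟨fun hz => hX.1 ((F.asEquivalence.inverse.map_isZero hz).of_iso
    (F.asEquivalence.unitIso.app X)), fun e he => ?_⟩
  obtain ⟨g, rfl⟩ := F.map_surjective e
  have hg : g ≫ g = g := F.map_injective (by rw [F.map_comp, he])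
  rcases hX.2 g hg with rfl | rfl
  · exact Or.inl (F.map_zero _ _)
  · exact Or.inr (F.map_id _)

variable [FiniteDimensional 𝕜 A] [FiniteDimensional 𝕂 B]

lemma exists_hr_inverse_obj_le
    (E : DerivedCategory (ModuleCat.{u} A) ≌ DerivedCategory (ModuleCat.{u} B))
    [E.functor.CommShift ℤ] [E.functor.IsTriangulated] :
    ∃ N : ℕ, ∀ Y, InDb 𝕂 B Y → hr 𝕜 A (E.inverse.obj Y) ≤ N * hr 𝕂 B Y := by
  let _ : E.inverse.CommShift ℤ := E.commShiftInverse ℤ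
  have : E.CommShift ℤ := E.commShift_of_functor ℤ
  have : E.inverse.IsTriangulated := E.toAdjunction.isTriangulated_rightAdjoint
  obtain ⟨N, hN⟩ := exists_hr_obj_le (𝕜 := 𝕂) (𝕂 := 𝕜) E.inverse
  exact ⟨N, fun Y hY => (hN Y hY).2⟩

variable (F : DerivedCategory (ModuleCat.{u} A) ⥤ DerivedCategory (ModuleCat.{u} B))
  [F.CommShift ℤ] [F.IsTriangulated] [F.IsEquivalence]

lemma exists_hr_le_hr_obj :
    ∃ N : ℕ, ∀ X, InDb 𝕂 B (F.obj X) → hr 𝕜 A X ≤ N * hr 𝕂 B (F.obj X) := by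
  let _ : F.asEquivalence.functor.CommShift ℤ := inferInstanceAs (F.CommShift ℤ)
  have : F.asEquivalence.functor.IsTriangulated := inferInstanceAs F.IsTriangulated
  obtain ⟨N, hN⟩ := exists_hr_inverse_obj_le (𝕜 := 𝕜) (𝕂 := 𝕂) F.asEquivalence
  exact ⟨N, fun X hX => (hr_eq_of_iso 𝕜 (F.asEquivalence.unitIso.app X)).le.trans (hN _ hX)⟩

include F in
lemma exists_isInfiniteRange_le_mul :
    ∃ N : ℕ, ∀ r, IsInfiniteRange 𝕜 A r → ∃ s, IsInfiniteRange 𝕂 B s ∧ r ≤ N * s := by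
  obtain ⟨M, hM⟩ := exists_hr_obj_le (𝕜 := 𝕜) (𝕂 := 𝕂) F
  obtain ⟨N, hN⟩ := exists_hr_le_hr_obj (𝕜 := 𝕜) (𝕂 := 𝕂) F
  refine ⟨N, fun r ⟨X, hX, hdistinct⟩ => ?_⟩
  have hbound (j : ℕ) : hr 𝕂 B (F.obj (X j)) ≤ M * r :=
    (hX j).2.2 ▸ (hM (X j) (hX j).2.1).2
  obtain ⟨s, φ, hs⟩ := exists_embedding_comp_eq_of_le hbound
  have hFX (j : ℕ) : InDb 𝕂 B (F.obj (X (φ j))) := (hM _ (hX _).2.1).1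
  refine ⟨s, ⟨fun j => F.obj (X (φ j)), fun j => ⟨indec_obj F (hX _).1, hFX j, hs j⟩,
    fun j j' hj n => ⟨fun e => ?_⟩⟩, ?_⟩
  · exact (hdistinct _ _ (φ.injective.ne hj) n).false
      (F.preimageIso (e ≪≫ ((F.commShiftIso n).app _).symm))
  · exact (hX (φ 0)).2.2 ▸ hs 0 ▸ hN (X (φ 0)) (hFX 0)

end Invariance

end DerivedUnbounded

theorem stronglyDerivedUnbounded_of_derived_equivalence_general
    {𝕜 𝕂 A B : Type u} [Field 𝕜] [Field 𝕂] [Ring A] [Algebra 𝕜 A] [FiniteDimensional 𝕜 A]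
    [HasDerivedCategory.{u} (ModuleCat.{u} A)] [Ring B] [Algebra 𝕂 B] [FiniteDimensional 𝕂 B]
    [HasDerivedCategory.{u} (ModuleCat.{u} B)]
    (F : DerivedCategory (ModuleCat.{u} A) ⥤ DerivedCategory (ModuleCat.{u} B))
    [F.CommShift ℤ] [F.IsTriangulated] [F.IsEquivalence]
    (hA : StronglyDerivedUnbounded 𝕜 A) :
    StronglyDerivedUnbounded 𝕂 B := by
  rw [DerivedUnbounded.stronglyDerivedUnbounded_iff_infinite] at hA ⊢
  obtain ⟨N, hN⟩ := DerivedUnbounded.exists_isInfiniteRange_le_mul (𝕜 := 𝕜) (𝕂 := 𝕂) F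
  refine Set.infinite_of_forall_exists_gt fun b => ?_
  obtain ⟨r, hr, hbr⟩ := hA.exists_gt (N * b)
  obtain ⟨s, hs, hrs⟩ := hN r hr
  exact ⟨s, hs, lt_of_mul_lt_mul_left' (hbr.trans_le hrs)⟩

theorem stronglyDerivedUnbounded_of_derived_equivalence
    (A : Type u) [Ring A] [Algebra k A] [FiniteDimensional k A]
    [HasDerivedCategory.{u} (ModuleCat.{u} A)]
    (B : Type u) [Ring B] [Algebra k B] [FiniteDimensional k B]
    [HasDerivedCategory.{u} (ModuleCat.{u} B)]
    (F : DerivedCategory (ModuleCat.{u} A) ⥤ DerivedCategory (ModuleCat.{u} B))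
    [F.CommShift ℤ] [F.IsTriangulated] [F.IsEquivalence]
    (hA : StronglyDerivedUnbounded k A) :
    StronglyDerivedUnbounded k B :=
  stronglyDerivedUnbounded_of_derived_equivalence_general F hA
end

section
/- Let A be a finite-dimensional algebra that is representation-finite (e.g., because it is not strongly derived unbounded). Then for every primitive idempotent e of A, the local algebra eAe is uniserial, hence isomorphic to k[x]/(x^m) for some m ≥ 1; and if additionally A embeds the truncated path algebra situation via the cleaving functor A_n^m → A (sending each vertex to the object a and each arrow to x), then m ≤ 2, i.e., eAe ≅ k or eAe ≅ k[x]/(x²). -/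
/-!
STATEMENT 19: Let `A` be a representation-finite finite-dimensional algebra over an
algebraically closed field (e.g. because it is not strongly derived unbounded).  Then
for every primitive idempotent `e` of `A` the local algebra `eAe` is uniserial, hence
isomorphic to `k[x]/(x^m)` for some `m ≥ 1` (expressed by: there is `x = e*x*e` with
`x^m = 0` such that `e, x, …, x^{m-1}` is a `k`-basis of `eAe`); and if moreover `A` is
not strongly derived unbounded (via the cleaving functors `A_n^m → A`), then `m ≤ 2`,
i.e. `eAe ≅ k` or `eAe ≅ k[x]/(x²)`.
-/

open CategoryTheory Limits

universe u
variable (k : Type u) [Field k] [IsAlgClosed k]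

section

variable (A : Type u) [Ring A] [Algebra k A] [FiniteDimensional k A]
  [HasDerivedCategory.{u} (ModuleCat.{u} A)]

/-- A primitive idempotent. -/
def IsPrimitiveIdem (a : A) : Prop :=
  a * a = a ∧ a ≠ 0 ∧
  ∀ f g : A, f * f = f → g * g = g → f * g = 0 → g * f = 0 → f + g = a →
    f = 0 ∨ g = 0

/-- `A` is representation-finite: there are only finitely many finite-dimensional
indecomposable `A`-modules up to isomorphism. -/
def IsRepFinite : Prop :=
  ∃ (ι : Type u) (_ : Finite ι) (rep : ι → ModuleCat.{u} A),
    ∀ M : ModuleCat.{u} A,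
      FiniteDimensional k ((ModuleCat.restrictScalars (algebraMap k A)).obj M) →
      Indec M → ∃ i : ι, Nonempty (M ≅ rep i)

/-!
Coinduction `L ↦ Hom_{eAe}(eA, L)` embeds the `eAe`-modules fully faithfully into the `A`-modules,
so `B = eAe` is representation-finite as well. It is local with residue field `k` and radical `J`.
Every ideal between `J²` and `J` is two-sided, hence is the annihilator of the indecomposable module
`B ⧸ I`; two independent directions in `J / J²` would give infinitely many of them. So `J` is
generated by some `x`, and `B ≅ k[x]/(xᵐ)`.

The opposite of `B` is the endomorphism algebra of the projective module `P = Ae`. Given matrices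
`G`, `S` over `k` with `G² = 0`, the matrix `xG + xᵐ⁻¹S` is a square-zero differential on copies of
`P` (this replaces the push-down along the cleaving functor). For `m ≥ 3`, comparing the
coefficients of `x` and of `xᵐ⁻¹` shows that the constant term `F` of a chain map satisfies
`GF = FG` and `GF' + S_t F = F'G + F S_s` for some `F'`. The family of pairs `(G, S_t)` used here is
such that every solution `F` of degree zero is a scalar plus a square-zero matrix, the scalar being
zero for `s ≠ t`. The complexes therefore have local endomorphism rings and are pairwise
non-isomorphic, while their widths are unbounded and their lengths are bounded for a given width.
-/

/-! ### Local algebras with residue field `k` -/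

section SplitLocal

theorem isNilpotent_or_isUnit_of_isIdempotentElem (k : Type*) {B : Type*} [Field k] [Ring B]
    [Algebra k B] [FiniteDimensional k B]
    (hB : ∀ f : B, IsIdempotentElem f → f = 0 ∨ f = 1) (y : B) :
    IsNilpotent y ∨ IsUnit y := by
  let C := Algebra.adjoin k {y}
  let x : C := ⟨y, Algebra.self_mem_adjoin_singleton k y⟩
  have : IsArtinianRing C := IsArtinianRing.of_finite k C
  obtain ⟨n, z, hz⟩ := IsArtinian.exists_pow_succ_smul_dvd x (1 : C)
  have hx : x ^ n * (x * z) = x ^ n := by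
    simpa only [smul_eq_mul, mul_one, pow_succ, mul_assoc] using hz
  have hxf (i : ℕ) : x ^ n * (x * z) ^ i = x ^ n := by
    induction i with
    | zero => rw [pow_zero, mul_one]
    | succ i ih => rw [pow_succ, ← mul_assoc, ih, hx]
  have hf : IsIdempotentElem ((x * z) ^ (n + 1)) :=
    calc (x * z) ^ (n + 1) * (x * z) ^ (n + 1)
      _ = x * z ^ (n + 1) * (x ^ n * (x * z) ^ (n + 1)) := by ring
      _ = (x * z) ^ (n + 1) := by rw [hxf]; ring
  rcases hB _ (hf.map C.val) with h0 | h1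
  · have h0 : (x * z) ^ (n + 1) = 0 := Subtype.ext h0
    have hxn : IsNilpotent x := ⟨n, by rw [← hxf (n + 1), h0, mul_zero]⟩
    exact .inl (hxn.map C.val)
  · have h1 : (x * z) ^ (n + 1) = 1 := Subtype.ext h1
    exact .inr ((isUnit_of_mul_isUnit_left (.of_pow_eq_one h1 n.succ_ne_zero)).map C.val)

theorem isLocalRing_of_isNilpotent_or_isUnit {B : Type*} [Ring B] [Nontrivial B]
    (hB : ∀ y : B, IsNilpotent y ∨ IsUnit y) : IsLocalRing B :=
  .of_isUnit_or_isUnit_one_sub_self fun y ↦ (hB y).symm.imp_right IsNilpotent.isUnit_one_sub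

theorem isNilpotent_of_mem_jacobson {B : Type*} [Ring B] [IsArtinianRing B] {x : B}
    (hx : x ∈ Ring.jacobson B) : IsNilpotent x := by
  obtain ⟨n, hn⟩ := IsArtinianRing.isNilpotent_jacobson_bot (R := B)
  have hxn : x ^ n ∈ (⊥ : Ideal B).jacobson ^ n :=
    Ideal.pow_mem_pow (Ideal.jacobson_bot (R := B) ▸ hx) n
  rw [hn] at hxn
  exact ⟨n, hxn⟩

theorem mem_jacobson_of_isNilpotent {B : Type*} [Ring B] [Nontrivial B]
    (hB : ∀ y : B, IsNilpotent y ∨ IsUnit y) {y : B} (hy : IsNilpotent y) :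
    y ∈ Ring.jacobson B := by
  rw [← Ideal.jacobson_bot, Ideal.mem_jacobson_iff]
  intro b
  have hby : IsNilpotent (b * y) := by
    refine (hB (b * y)).resolve_right fun ⟨u, hu⟩ ↦ ?_
    obtain ⟨n, hn⟩ := hy
    have hreg : IsLeftRegular y :=
      isLeftRegular_of_mul_eq_one (b := ↑u⁻¹ * b) (by rw [mul_assoc, ← hu, u.inv_mul])
    exact (hreg.pow n).ne_zero hn
  obtain ⟨u, hu⟩ := hby.isUnit_add_one
  refine ⟨↑u⁻¹, ?_⟩
  rw [Ideal.mem_bot, mul_assoc, ← mul_add_one, ← hu, u.inv_mul, sub_self]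

/-- Every element of the `k`-algebra `B` is a scalar modulo the Jacobson radical. For nontrivial
`B` this says that `B` is local with residue field `k`. -/
def IsSplitLocal (k B : Type*) [Field k] [Ring B] [Algebra k B] : Prop :=
  ∀ y : B, ∃ c : k, y - algebraMap k B c ∈ Ring.jacobson B

variable {k B : Type*} [Field k] [Ring B] [Algebra k B]

theorem isSplitLocal_of_isNilpotent_or_isUnit [IsAlgClosed k] [Nontrivial B]
    [FiniteDimensional k B] (hB : ∀ y : B, IsNilpotent y ∨ IsUnit y) : IsSplitLocal k B := by
  intro y
  obtain ⟨c, hc⟩ := spectrum.nonempty_of_isAlgClosed_of_finiteDimensional k y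
  refine ⟨c, mem_jacobson_of_isNilpotent hB ?_⟩
  rw [← neg_sub]
  exact ((hB _).resolve_right (spectrum.mem_iff.mp hc)).neg

namespace IsSplitLocal

theorem isTwoSided (hB : IsSplitLocal k B) {I : Ideal B}
    (hI : Ring.jacobson B * Ring.jacobson B ≤ I) (hI' : I ≤ Ring.jacobson B) : I.IsTwoSided where
  mul_mem_of_left {a} b ha := by
    obtain ⟨c, hc⟩ := hB b
    rw [← sub_add_cancel b (algebraMap k B c), mul_add, ← Algebra.commutes]
    exact I.add_mem (hI (Ideal.mul_mem_mul (hI' ha) hc)) (I.mul_mem_left _ ha)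

theorem exists_smul_add_of_mem_span_sup (hB : IsSplitLocal k B) {v w : B}
    (hv : v ∈ Ring.jacobson B)
    (hw : w ∈ Ideal.span {v} ⊔ Ring.jacobson B * Ring.jacobson B) :
    ∃ c : k, w - c • v ∈ Ring.jacobson B * Ring.jacobson B := by
  obtain ⟨_, hbv, z, hz, rfl⟩ := Submodule.mem_sup.mp hw
  obtain ⟨b, rfl⟩ := Ideal.mem_span_singleton'.mp hbv
  obtain ⟨c, hc⟩ := hB b
  refine ⟨c, ?_⟩
  rw [Algebra.smul_def, add_sub_right_comm, ← sub_mul]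
  exact Ideal.add_mem _ (Ideal.mul_mem_mul hc hv) hz

/-- If `x` and `y` are linearly independent modulo the square of the radical, the lines spanned by
`y + t x` give pairwise different ideals between the radical and its square. -/
theorem exists_jacobson_le_span_sup [Infinite k] (hB : IsSplitLocal k B)
    (hfin : {I : Ideal B | I.IsTwoSided ∧ I ≤ Ring.jacobson B}.Finite) :
    ∃ x ∈ Ring.jacobson B,
      Ring.jacobson B ≤ Ideal.span {x} ⊔ Ring.jacobson B * Ring.jacobson B := by
  set J := Ring.jacobson B
  by_contra! hJ
  have hJJ : J * J ≤ J := Ideal.mul_le_left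
  obtain ⟨x, hx, hx'⟩ := SetLike.not_le_iff_exists.mp (hJ 0 J.zero_mem)
  obtain ⟨y, hy, hy'⟩ := SetLike.not_le_iff_exists.mp (hJ x hx)
  let v (t : k) : B := y + t • x
  have hv (t : k) : v t ∈ J := J.add_mem hy (Submodule.smul_of_tower_mem J t hx)
  let I (t : k) : Ideal B := Ideal.span {v t} ⊔ J * J
  have hvI (t : k) : v t ∈ I t := Ideal.mem_sup_left (Ideal.mem_span_singleton_self _)
  have hIJ (t : k) : I t ≤ J := sup_le ((Ideal.span_singleton_le_iff_mem _).mpr (hv t)) hJJ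
  refine Set.infinite_univ (α := k) ((hfin.subset ?_).of_finite_image (f := I) ?_)
  · rintro _ ⟨t, -, rfl⟩
    exact ⟨hB.isTwoSided le_sup_right (hIJ t), hIJ t⟩
  · intro s _ t _ hst
    by_contra hne
    have hxI : x ∈ I s := by
      have hsub : (s - t)⁻¹ • (v s - v t) ∈ I s :=
        Submodule.smul_of_tower_mem _ _ (sub_mem (hvI s) (hst ▸ hvI t))
      rwa [add_sub_add_left_eq_sub, ← sub_smul, inv_smul_smul₀ (sub_ne_zero.mpr hne)] at hsub
    obtain ⟨c, hc⟩ := hB.exists_smul_add_of_mem_span_sup (hv s) hxI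
    rcases eq_or_ne c 0 with rfl | hc0
    · exact hx' (Ideal.mem_sup_right (by simpa only [zero_smul, sub_zero] using hc))
    · have hyx : y = (c⁻¹ - s) • x - c⁻¹ • (x - c • v s) := by
        rw [smul_sub, inv_smul_smul₀ hc0, sub_smul, sub_sub_sub_cancel_left]
        exact (add_sub_cancel_right y (s • x)).symm
      rw [hyx] at hy'
      exact hy' (sub_mem
        (Submodule.smul_of_tower_mem _ _ (Ideal.mem_sup_left (Ideal.mem_span_singleton_self x)))
        (Submodule.smul_of_tower_mem _ _ (Ideal.mem_sup_right hc)))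

theorem adjoin_singleton_eq_top (hB : IsSplitLocal k B) {x : B} (hx : IsNilpotent x)
    (hJ : Ring.jacobson B = Ideal.span {x}) : Algebra.adjoin k {x} = ⊤ := by
  have approx (n : ℕ) (y : B) : ∃ a ∈ Algebra.adjoin k {x}, ∃ b, y = a + b * x ^ n := by
    induction n generalizing y with
    | zero => exact ⟨0, zero_mem _, y, by simp⟩
    | succ n ih =>
      obtain ⟨a, ha, b, rfl⟩ := ih y
      obtain ⟨c, hc⟩ := hB b
      obtain ⟨b', hb'⟩ := Ideal.mem_span_singleton'.mp (hJ ▸ hc)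
      have hxa : x ∈ Algebra.adjoin k {x} := Algebra.self_mem_adjoin_singleton k x
      refine ⟨a + c • x ^ n, add_mem ha (Subalgebra.smul_mem _ (pow_mem hxa n) c), b', ?_⟩
      rw [pow_succ', ← mul_assoc, hb', sub_mul, Algebra.smul_def]
      abel
  obtain ⟨n, hn⟩ := hx
  refine eq_top_iff.mpr fun y _ ↦ ?_
  obtain ⟨a, ha, b, rfl⟩ := approx n y
  rwa [hn, mul_zero, add_zero]

end IsSplitLocal

theorem le_of_le_sup_jacobson_smul {R M : Type*} [Ring R] [AddCommGroup M] [Module R M]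
    {N P : Submodule R M} (hP : P.FG) (h : P ≤ N ⊔ Ring.jacobson R • P) : P ≤ N := by
  rw [← N.ker_mkQ, LinearMap.le_ker_iff_map]
  refine (hP.map N.mkQ).eq_bot_of_le_jacobson_smul ?_
  calc P.map N.mkQ ≤ (N ⊔ Ring.jacobson R • P).map N.mkQ := Submodule.map_mono h
    _ = Ring.jacobson R • P.map N.mkQ := by
      rw [Submodule.map_sup, Submodule.mkQ_map_self, bot_sup_eq, Submodule.map_smul'']

/-- A power basis whose generator satisfies `gen ^ dim = 0`, that is, a presentation of `B` as
the truncated polynomial algebra `k[x]/(x ^ dim)`. -/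
structure TruncatedPowerBasis (k B : Type*) [Field k] [Ring B] [Algebra k B] extends
    PowerBasis k B where
  gen_pow_dim : gen ^ dim = 0

open Polynomial in
theorem nonempty_truncatedPowerBasis_of_adjoin_eq_top {x : B} (hx : IsNilpotent x)
    (htop : Algebra.adjoin k {x} = ⊤) : Nonempty (TruncatedPowerBasis k B) := by
  classical
  obtain ⟨n, hn⟩ := hx
  have hroot : aeval x (X ^ n : k[X]) = 0 := by rw [map_pow, aeval_X, hn]
  have hint : IsIntegral k x := ⟨X ^ n, monic_X_pow n, hroot⟩
  have hspan : ⊤ ≤ Submodule.span k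
      (Set.range fun i : Fin (minpoly k x).natDegree ↦ x ^ (i : ℕ)) := by
    rw [← Algebra.top_toSubmodule, ← htop,
      ← Submodule.span_range_natDegree_eq_adjoin (minpoly.monic hint) (minpoly.aeval k x)]
    refine Submodule.span_mono fun _ hy ↦ ?_
    obtain ⟨i, hi, rfl⟩ := Finset.mem_image.mp hy
    exact ⟨⟨i, Finset.mem_range.mp hi⟩, rfl⟩
  obtain ⟨m, -, hm⟩ := (dvd_prime_pow prime_X n).mp (minpoly.dvd k x hroot)
  have hmin : minpoly k x = X ^ m :=
    eq_of_monic_of_associated (minpoly.monic hint) (monic_X_pow m) hm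
  exact ⟨{
    gen := x
    dim := (minpoly k x).natDegree
    basis := .mk (linearIndependent_pow x) hspan
    basis_eq_pow i := Module.Basis.mk_apply _ _ i
    gen_pow_dim := by
      have := minpoly.aeval k x
      rwa [hmin, map_pow, aeval_X, ← natDegree_X_pow (R := k) m, ← hmin] at this }⟩

end SplitLocal

/-! ### Representation-finite local algebras -/

section RepresentationFinite

open Module

variable {k B : Type u} [Field k] [Ring B] [Algebra k B]

variable (k B) in
/-- Restricting the scalars of a `B`-module along `k → B` recovers its given structure over `k`. -/
def restrictScalarsOfEquiv (M : Type u) [AddCommGroup M] [Module B M] [Module k M]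
    [IsScalarTower k B M] :
    (ModuleCat.restrictScalars (algebraMap k B)).obj (.of B M) ≃ₗ[k] M :=
  { AddEquiv.refl M with map_smul' := fun c x ↦ algebraMap_smul (M := M) B c x }

theorem finiteDimensional_restrictScalars_iff {M : Type u} [AddCommGroup M] [Module B M]
    [Module k M] [IsScalarTower k B M] :
    FiniteDimensional k ((ModuleCat.restrictScalars (algebraMap k B)).obj (.of B M)) ↔
      FiniteDimensional k M :=
  Module.Finite.equiv_iff (restrictScalarsOfEquiv k B M)

/-- `1 ↦ a` describes an endomorphism of `B ⧸ I`; as one of `a`, `1 - a` is a unit, an idempotent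
endomorphism or its complement is surjective. -/
theorem indec_quotient [IsLocalRing B] {I : Ideal B} (hI : I ≠ ⊤) :
    Indec (ModuleCat.of B (B ⧸ I)) := by
  have surjective_of_isUnit {a : B} (ha : IsUnit a) (f : B ⧸ I →ₗ[B] B ⧸ I)
      (hf : f (I.mkQ 1) = I.mkQ a) : Function.Surjective f := by
    intro y
    obtain ⟨b, rfl⟩ := I.mkQ_surjective y
    obtain ⟨u, rfl⟩ := ha
    refine ⟨I.mkQ (b * ↑u⁻¹), ?_⟩
    rw [← mul_one (b * ↑u⁻¹), ← smul_eq_mul, map_smul, map_smul, hf, ← map_smul, smul_eq_mul,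
      Units.inv_mul_cancel_right]
  constructor
  · rw [ModuleCat.isZero_iff_subsingleton, not_subsingleton_iff_nontrivial]
    exact Submodule.Quotient.nontrivial_iff.mpr hI
  · intro f hf
    obtain ⟨a, ha⟩ := I.mkQ_surjective (f.hom (I.mkQ 1))
    have hf' (x : B ⧸ I) : f.hom (f.hom x) = f.hom x := congr($(hf).hom x)
    rcases IsLocalRing.isUnit_or_isUnit_of_add_one (add_sub_cancel a 1) with hu | hu
    · right
      refine ModuleCat.hom_ext (LinearMap.ext fun x ↦ ?_)
      obtain ⟨y, rfl⟩ := surjective_of_isUnit hu f.hom ha.symm x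
      exact hf' y
    · left
      refine ModuleCat.hom_ext (LinearMap.ext fun x ↦ ?_)
      have h1 : (1 - f.hom) (I.mkQ 1) = I.mkQ (1 - a) := by rw [map_sub, ha]; rfl
      obtain ⟨y, rfl⟩ := surjective_of_isUnit hu _ h1 x
      exact (map_sub f.hom y (f.hom y)).trans (sub_eq_zero.mpr (hf' y).symm)

theorem annihilator_quotient_of_isTwoSided (I : Ideal B) [I.IsTwoSided] :
    Module.annihilator B (B ⧸ I) = I := by
  ext b
  rw [Module.mem_annihilator]
  refine ⟨fun hb ↦ ?_, fun hb x ↦ ?_⟩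
  · have hb1 := hb (I.mkQ 1)
    rwa [← map_smul, ← LinearMap.mem_ker, I.ker_mkQ, smul_eq_mul, mul_one] at hb1
  · obtain ⟨a, rfl⟩ := I.mkQ_surjective x
    rw [← map_smul, ← LinearMap.mem_ker, I.ker_mkQ]
    exact I.mul_mem_right _ hb

namespace IsRepFinite

variable [FiniteDimensional k B]

theorem finite_isTwoSided [IsLocalRing B] (hrf : IsRepFinite k B) :
    {I : Ideal B | I.IsTwoSided ∧ I ≤ Ring.jacobson B}.Finite := by
  obtain ⟨ι, _, rep, hrep⟩ := hrf
  have hex (I : {I : Ideal B | I.IsTwoSided ∧ I ≤ Ring.jacobson B}) :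
      ∃ i, Nonempty (ModuleCat.of B (B ⧸ I.1) ≅ rep i) := by
    refine hrep _ (finiteDimensional_restrictScalars_iff.mpr inferInstance) (indec_quotient ?_)
    exact (I.2.2.trans_lt (Ring.jacobson_lt_top B)).ne
  choose i hi using hex
  refine Set.finite_coe_iff.mp (.of_injective i ?_)
  intro I J hIJ
  have := I.2.1
  have := J.2.1
  obtain ⟨φ⟩ := hi I
  obtain ⟨ψ⟩ := hi J
  apply Subtype.ext
  rw [← annihilator_quotient_of_isTwoSided I.1, ← annihilator_quotient_of_isTwoSided J.1]
  exact (φ ≪≫ eqToIso (congrArg rep hIJ) ≪≫ ψ.symm).toLinearEquiv.annihilator_eq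

theorem nonempty_truncatedPowerBasis [IsAlgClosed k] [Nontrivial B] (hrf : IsRepFinite k B)
    (hB : ∀ f : B, IsIdempotentElem f → f = 0 ∨ f = 1) :
    Nonempty (TruncatedPowerBasis k B) := by
  have hnu := isNilpotent_or_isUnit_of_isIdempotentElem k hB
  have := isLocalRing_of_isNilpotent_or_isUnit hnu
  have : IsArtinianRing B := .of_finite k B
  have hsplit : IsSplitLocal k B := isSplitLocal_of_isNilpotent_or_isUnit hnu
  obtain ⟨x, hx, hJ⟩ := hsplit.exists_jacobson_le_span_sup hrf.finite_isTwoSided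
  have hJx : Ring.jacobson B = Ideal.span {x} :=
    le_antisymm (le_of_le_sup_jacobson_smul (IsNoetherian.noetherian _) hJ)
      ((Ideal.span_singleton_le_iff_mem _).mpr hx)
  have hnil : IsNilpotent x := isNilpotent_of_mem_jacobson hx
  exact nonempty_truncatedPowerBasis_of_adjoin_eq_top hnil (hsplit.adjoin_singleton_eq_top hnil hJx)

end IsRepFinite

end RepresentationFinite

/-! ### Corner algebras and coinduction -/

namespace CornerAlgebra

variable {k A : Type*} [Field k] [Ring A] [Algebra k A] {e : A} (he : IsIdempotentElem e)

theorem mul_val (b : he.Corner) : e * b.1 = b.1 := congrArg Subtype.val (one_mul b)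

theorem val_mul (b : he.Corner) : b.1 * e = b.1 := congrArg Subtype.val (mul_one b)

theorem mul_val_mul (b : he.Corner) : e * b.1 * e = b.1 :=
  (congrArg (· * e) (mul_val he b)).trans (val_mul he b)

instance : SMul k he.Corner where
  smul c b := ⟨c • b.1, c • b.1,
    ((congrArg (· * e) (mul_smul_comm c e b.1)).trans (smul_mul_assoc c _ e)).trans
      (congrArg (c • ·) (mul_val_mul he b))⟩

instance : Module k he.Corner :=
  Function.Injective.module k
    ({ toFun := Subtype.val, map_zero' := rfl, map_add' := fun _ _ ↦ rfl } : he.Corner →+ A)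
    Subtype.val_injective fun _ _ ↦ rfl

instance : Algebra k he.Corner :=
  .ofModule (fun c a b ↦ Subtype.ext (smul_mul_assoc c a.1 b.1))
    (fun c a b ↦ Subtype.ext (mul_smul_comm c a.1 b.1))

variable (k) in
/-- The inclusion of the corner algebra `eAe` into `A`. -/
def subtype : he.Corner →ₗ[k] A where
  toFun := Subtype.val
  map_add' _ _ := rfl
  map_smul' _ _ := rfl

variable (k) in
theorem subtype_injective : Function.Injective (subtype k he) := Subtype.val_injective

instance [FiniteDimensional k A] : FiniteDimensional k he.Corner :=
  .of_injective _ (subtype_injective k he)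

theorem nontrivial (he0 : e ≠ 0) : Nontrivial he.Corner :=
  ⟨⟨1, 0, fun h ↦ he0 (congrArg Subtype.val h)⟩⟩

theorem val_pow (b : he.Corner) (i : ℕ) : (b ^ i).1 = e * b.1 ^ i := by
  induction i with
  | zero =>
    calc (b ^ 0).1 = e := congrArg Subtype.val (pow_zero b)
      _ = e * b.1 ^ 0 := ((congrArg (e * ·) (pow_zero _)).trans (mul_one e)).symm
  | succ i ih =>
    calc (b ^ (i + 1)).1 = (b ^ i).1 * b.1 := congrArg Subtype.val (pow_succ b i)
      _ = e * (b.1 ^ i * b.1) := (congrArg (· * b.1) ih).trans (mul_assoc _ _ _)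
      _ = e * b.1 ^ (i + 1) := congrArg (e * ·) (pow_succ _ _).symm

/-- The compression `a ↦ eae` of `A` to the corner algebra. -/
def compress : A →+ he.Corner where
  toFun a := ⟨e * a * e, a, rfl⟩
  map_zero' := Subtype.ext <| show e * 0 * e = 0 by rw [mul_zero, zero_mul]
  map_add' a b := Subtype.ext <| show e * (a + b) * e = e * a * e + e * b * e by
    rw [mul_add, add_mul]

theorem val_compress (a : A) : (compress he a).1 = e * a * e := rfl

theorem compress_one : compress he 1 = 1 :=
  Subtype.ext <| show e * 1 * e = e by rw [mul_one, he]

theorem compress_corner_mul (b : he.Corner) (a : A) : compress he (b.1 * a) = b * compress he a :=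
  Subtype.ext <|
    calc e * (b.1 * a) * e = b.1 * a * e := by rw [← mul_assoc e, mul_val]
      _ = b.1 * (e * a * e) := by rw [← mul_assoc, ← mul_assoc b.1, val_mul]

theorem compress_mul_corner (a : A) (b : he.Corner) :
    compress he (a * b.1) = compress he a * b :=
  Subtype.ext <|
    calc e * (a * b.1) * e = e * a * b.1 := by rw [mul_assoc, mul_assoc a, val_mul, mul_assoc]
      _ = e * a * e * b.1 := by rw [mul_assoc _ e, mul_val]

theorem eq_zero_or_one_of_isPrimitiveIdem (hprim : IsPrimitiveIdem A e) (f : he.Corner)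
    (hf : IsIdempotentElem f) : f = 0 ∨ f = 1 := by
  let g : he.Corner := 1 - f
  rcases hprim.2.2 f.1 g.1 (congrArg Subtype.val hf)
    (congrArg Subtype.val hf.one_sub) (congrArg Subtype.val hf.mul_one_sub_self)
    (congrArg Subtype.val hf.one_sub_mul_self)
    (congrArg Subtype.val (add_sub_cancel f (1 : he.Corner))) with h | h
  · exact .inl (Subtype.ext h)
  · have hg : (1 : he.Corner) - f = 0 := Subtype.ext h
    exact .inr (sub_eq_zero.mp hg).symm

section Coinduction

variable (L : Type*) [AddCommGroup L] [Module he.Corner L]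

/-- The coinduced module `Hom_{eAe}(eA, L)`. Its elements are encoded as additive maps on all of
`A`, linear for the non-unital left multiplication by `eAe`; they vanish on `(1 - e)A`. -/
def Coinduced : AddSubgroup (A →+ L) where
  carrier := {f | ∀ (b : he.Corner) (a : A), f (b.1 * a) = b • f a}
  zero_mem' b _ := (smul_zero b).symm
  add_mem' {f g} hf hg b a := by
    rw [AddMonoidHom.add_apply, AddMonoidHom.add_apply, hf, hg, smul_add]
  neg_mem' {f} hf b a := by
    rw [AddMonoidHom.neg_apply, AddMonoidHom.neg_apply, hf, smul_neg]

namespace Coinduced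

variable {he L}

theorem map_idem_mul (f : Coinduced he L) (a : A) : f.1 (e * a) = f.1 a :=
  (f.2 1 a).trans (one_smul _ _)

theorem ext {f g : Coinduced he L} (h : ∀ a, f.1 a = g.1 a) : f = g :=
  Subtype.ext (DFunLike.ext _ _ h)

instance : SMul A (Coinduced he L) where
  smul a f := ⟨f.1.comp (AddMonoidHom.mulRight a), fun b x ↦
    (congrArg f.1 (mul_assoc _ x a)).trans (f.2 b (x * a))⟩

instance : Module A (Coinduced he L) where
  one_smul f := ext fun x ↦ congrArg f.1 (mul_one x)
  mul_smul a b f := ext fun x ↦ congrArg f.1 (mul_assoc x a b).symm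
  smul_zero _ := rfl
  smul_add _ _ _ := rfl
  zero_smul f := ext fun x ↦ (congrArg f.1 (mul_zero x)).trans (map_zero f.1)
  add_smul a b f := ext fun x ↦ (congrArg f.1 (mul_add x a b)).trans (map_add f.1 _ _)

theorem smul_apply (a : A) (f : Coinduced he L) (x : A) : (a • f).1 x = f.1 (x * a) := rfl

variable (he L) in
/-- The embedding of `L` in its coinduced module, with image `e • Coinduced he L`. -/
def unit : L →+ Coinduced he L where
  toFun l := ⟨((smulAddHom he.Corner L).flip l).comp (compress he), fun b a ↦
    (congrArg (· • l) (compress_corner_mul he b a)).trans (mul_smul b _ l)⟩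
  map_zero' := ext fun _ ↦ smul_zero _
  map_add' l l' := ext fun _ ↦ smul_add _ l l'

theorem unit_smul (b : he.Corner) (l : L) : unit he L (b • l) = b.1 • unit he L l :=
  ext fun a ↦ ((congrArg (· • l) (compress_mul_corner he a b)).trans (mul_smul _ b l)).symm

theorem unit_apply_one (l : L) : (unit he L l).1 1 = l :=
  (congrArg (· • l) (compress_one he)).trans (one_smul _ l)

theorem idem_smul (f : Coinduced he L) : e • f = unit he L (f.1 1) := by
  refine ext fun a ↦ ?_
  calc f.1 (a * e) = f.1 ((compress he a).1 * 1) := by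
        rw [← map_idem_mul, mul_one, val_compress, mul_assoc]
    _ = compress he a • f.1 1 := f.2 _ 1

theorem map_smul_eq [Module k L] [IsScalarTower k he.Corner L] (f : Coinduced he L) (c : k)
    (a : A) : f.1 (c • a) = c • f.1 a :=
  calc f.1 (c • a) = f.1 (e * (c • a)) := (map_idem_mul f _).symm
    _ = f.1 ((c • (1 : he.Corner)).1 * a) :=
      congrArg f.1 ((mul_smul_comm c e a).trans (smul_mul_assoc c e a).symm)
    _ = c • f.1 a := (f.2 _ a).trans (by rw [smul_assoc, one_smul])

variable (k L) in
theorem finiteDimensional [Module k L] [IsScalarTower k he.Corner L] [Module k (Coinduced he L)]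
    [IsScalarTower k A (Coinduced he L)] [FiniteDimensional k A] [FiniteDimensional k L] :
    FiniteDimensional k (Coinduced he L) := by
  let φ : Coinduced he L →ₗ[k] A →ₗ[k] L :=
    { toFun := fun f ↦ { f.1 with map_smul' := map_smul_eq f }
      map_add' := fun _ _ ↦ rfl
      map_smul' := fun c f ↦ LinearMap.ext fun a ↦ by
        rw [← algebraMap_smul A c f]
        calc f.1 (a * algebraMap k A c) = f.1 (c • a) := by
              rw [← Algebra.commutes, Algebra.smul_def]
          _ = c • f.1 a := map_smul_eq f c a }
  exact .of_injective φ fun f g h ↦ ext fun a ↦ congr($h a)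

end Coinduced

end Coinduction

section CoinductionFunctor

variable {A : Type u} [Ring A] {e : A} (he : IsIdempotentElem e)

/-- Coinduction `L ↦ Hom_{eAe}(eA, L)` from `eAe`-modules to `A`-modules. -/
def coinduction : ModuleCat.{u} he.Corner ⥤ ModuleCat.{u} A where
  obj L := .of A (Coinduced he L)
  map φ := ModuleCat.ofHom
    { toFun := fun f ↦ ⟨φ.hom.toAddMonoidHom.comp f.1, fun b a ↦
        (congrArg φ.hom (f.2 b a)).trans (φ.hom.map_smul b _)⟩
      map_add' := fun f g ↦ Coinduced.ext fun a ↦ φ.hom.map_add (f.1 a) (g.1 a)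
      map_smul' := fun _ _ ↦ rfl }

theorem coinduction_map_apply {L M : ModuleCat.{u} he.Corner} (φ : L ⟶ M) (f : Coinduced he L)
    (a : A) : (((coinduction he).map φ).hom f : Coinduced he M).1 a = φ.hom (f.1 a) := rfl

instance : (coinduction he).Faithful where
  map_injective {L M φ ψ} h := by
    ext l
    have := congr(($h).hom (Coinduced.unit he L l))
    have := congr(($this : Coinduced he M).1 1)
    rwa [coinduction_map_apply, coinduction_map_apply, Coinduced.unit_apply_one] at this

instance : (coinduction he).Full where
  map_surjective {L M} g := by
    let g' : Coinduced he L →ₗ[A] Coinduced he M := g.hom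
    let φ : L →ₗ[he.Corner] M :=
      { toFun := fun l ↦ (g' (Coinduced.unit he L l)).1 1
        map_add' := fun l l' ↦ by rw [map_add, map_add]; rfl
        map_smul' := fun b l ↦ by
          rw [Coinduced.unit_smul, map_smul, Coinduced.smul_apply, one_mul, ← mul_one b.1]
          exact (g' _).2 b 1 }
    have hφ (f : Coinduced he L) : φ (f.1 1) = (g' f).1 1 :=
      calc (g' (Coinduced.unit he L (f.1 1))).1 1
        _ = (g' f).1 (1 * e) := by rw [← Coinduced.idem_smul, map_smul, Coinduced.smul_apply]
        _ = (g' f).1 1 :=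
          (congrArg (g' f).1 ((one_mul e).trans (mul_one e).symm)).trans
            (Coinduced.map_idem_mul _ 1)
    have hφ' (f : Coinduced he L) (a : A) : φ (f.1 a) = (g' f).1 a := by
      have := hφ (a • f)
      rwa [map_smul, Coinduced.smul_apply, Coinduced.smul_apply, one_mul] at this
    exact ⟨ModuleCat.ofHom φ, ModuleCat.hom_ext (LinearMap.ext fun f ↦ Coinduced.ext (hφ' f))⟩

end CoinductionFunctor

end CornerAlgebra

section FullyFaithful

variable {k A B : Type u} [Field k] [Ring A] [Algebra k A] [Ring B] [Algebra k B]

theorem indec_obj_of_fullyFaithful {C D : Type*} [Category C] [Category D]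
    [HasZeroMorphisms C] [HasZeroMorphisms D] (F : C ⥤ D) [F.Full] [F.Faithful] {X : C}
    (hX : Indec X) : Indec (F.obj X) := by
  have := F.preservesZeroMorphisms_of_full
  refine ⟨fun h ↦ hX.1 ?_, fun p hp ↦ ?_⟩
  · rw [IsZero.iff_id_eq_zero] at h ⊢
    exact F.map_injective (by rw [F.map_id, F.map_zero, h])
  · obtain ⟨q, rfl⟩ := F.map_surjective p
    have hq : q ≫ q = q := F.map_injective (by rw [F.map_comp, hp])
    rcases hX.2 q hq with rfl | rfl
    · exact .inl (F.map_zero X X)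
    · exact .inr (F.map_id X)

theorem IsRepFinite.of_fullyFaithful (hA : IsRepFinite k A)
    (F : ModuleCat.{u} B ⥤ ModuleCat.{u} A) [F.Full] [F.Faithful]
    (hF : ∀ M : ModuleCat.{u} B,
      FiniteDimensional k ((ModuleCat.restrictScalars (algebraMap k B)).obj M) →
      FiniteDimensional k ((ModuleCat.restrictScalars (algebraMap k A)).obj (F.obj M))) :
    IsRepFinite k B := by
  obtain ⟨ι, _, rep, hrep⟩ := hA
  let ι' := {i : ι // ∃ M, Nonempty (F.obj M ≅ rep i)}
  refine ⟨ι', inferInstance, fun i ↦ i.2.choose, fun M hfin hM ↦ ?_⟩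
  obtain ⟨i, ⟨φ⟩⟩ := hrep _ (hF M hfin) (indec_obj_of_fullyFaithful F hM)
  let i' : ι' := ⟨i, M, ⟨φ⟩⟩
  exact ⟨i', ⟨F.preimageIso (φ ≪≫ i'.2.choose_spec.some.symm)⟩⟩

theorem IsRepFinite.corner [FiniteDimensional k A] (hA : IsRepFinite k A) {e : A}
    (he : IsIdempotentElem e) : IsRepFinite k he.Corner := by
  refine hA.of_fullyFaithful (CornerAlgebra.coinduction he) fun M hM ↦ ?_
  let : Module k M := Module.compHom M (algebraMap k he.Corner)
  have : IsScalarTower k he.Corner M :=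
    .of_algebraMap_smul (R := k) (A := he.Corner) (M := M) fun _ _ ↦ rfl
  let : Module k (CornerAlgebra.Coinduced he M) := Module.compHom _ (algebraMap k A)
  have : IsScalarTower k A (CornerAlgebra.Coinduced he M) := .of_algebraMap_smul fun _ _ ↦ rfl
  have : FiniteDimensional k M := hM
  have hL : FiniteDimensional k (CornerAlgebra.Coinduced he M) :=
    CornerAlgebra.Coinduced.finiteDimensional k M
  exact hL

end FullyFaithful

/-! ### Complexes of copies of a module -/

section MatrixComplex

variable (A : Type u) [Ring A] (P : Type u) [AddCommGroup P] [Module A P]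
  {ι : Type} (deg : ι → ℤ)

/-- The matrix `M` has degree `r` when its entries `M h g`, the components from the generator `g`
to the generator `h`, vanish unless `deg h = deg g + r`. -/
def HasDegree {R : Type*} [Zero R] (r : ℤ) (M : Matrix ι ι R) : Prop :=
  ∀ h g, deg h ≠ deg g + r → M h g = 0

namespace HasDegree

variable {deg} {r : ℤ}

theorem add {R : Type*} [AddZeroClass R] {M M' : Matrix ι ι R} (hM : HasDegree deg r M)
    (hM' : HasDegree deg r M') : HasDegree deg r (M + M') := fun h g hd ↦ by
  rw [Matrix.add_apply, hM h g hd, hM' h g hd, add_zero]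

theorem sum {R κ : Type*} [AddCommMonoid R] {s : Finset κ} {M : κ → Matrix ι ι R}
    (hM : ∀ j, HasDegree deg r (M j)) : HasDegree deg r (∑ j ∈ s, M j) := fun h g hd ↦ by
  rw [Matrix.sum_apply, Finset.sum_eq_zero fun j _ ↦ hM j h g hd]

theorem single {R : Type*} [Zero R] [DecidableEq ι] {h g : ι} (c : R) (hd : deg h = deg g + r) :
    HasDegree deg r (Matrix.single h g c) := fun _ _ hd' ↦
  Matrix.single_apply_of_ne _ _ _ _ _ fun hh ↦ hd' (hh.1 ▸ hh.2 ▸ hd)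

theorem map {R R' : Type*} [Zero R] [Zero R'] {M : Matrix ι ι R} (hM : HasDegree deg r M)
    {φ : R → R'} (hφ : φ 0 = 0) : HasDegree deg r (M.map φ) := fun h g hd ↦ by
  rw [Matrix.map_apply, hM h g hd, hφ]

end HasDegree

/-- A square-zero matrix of degree `1` over the ring `E`. -/
structure MatrixDifferential [Fintype ι] (E : Type*) [Ring E] where
  /-- The underlying matrix, acting on column vectors. -/
  matrix : Matrix ι ι E
  hasDegree : HasDegree deg 1 matrix
  mul_self : matrix * matrix = 0

/-- The submodule of `P ^ ι` spanned by the copies of `P` of degree `i`. -/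
def gradedPart (i : ℤ) : Submodule A (ι → P) := .pi {g | deg g ≠ i} fun _ ↦ ⊥

variable {A P deg}

theorem mem_gradedPart {i : ℤ} {v : ι → P} :
    v ∈ gradedPart A P deg i ↔ ∀ g, deg g ≠ i → v g = 0 := Submodule.mem_pi

variable (P deg) in
/-- The projection of `P ^ ι` onto its part of degree `i`. -/
def toGradedPart (i : ℤ) : (ι → P) →ₗ[A] gradedPart A P deg i :=
  LinearMap.codRestrict _
    (.pi fun g ↦ if deg g = i then .proj g else 0)
    fun v ↦ mem_gradedPart.mpr fun g hg ↦ by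
      rw [LinearMap.pi_apply, if_neg hg, LinearMap.zero_apply]

theorem toGradedPart_apply (i : ℤ) (v : ι → P) (g : ι) :
    (toGradedPart (A := A) P deg i v).1 g = if deg g = i then v g else 0 := by
  change (if deg g = i then LinearMap.proj (R := A) (φ := fun _ : ι ↦ P) g else 0) v = _
  split_ifs <;> rfl

theorem toGradedPart_coe {i : ℤ} (v : gradedPart A P deg i) : toGradedPart P deg i v.1 = v := by
  ext g
  rw [toGradedPart_apply, ite_eq_left_iff]
  exact fun hg ↦ (mem_gradedPart.mp v.2 g hg).symm

theorem toGradedPart_of_ne {i j : ℤ} (hij : i ≠ j) {v : ι → P} (hv : v ∈ gradedPart A P deg i) :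
    toGradedPart (A := A) P deg j v = 0 := by
  ext g
  refine (toGradedPart_apply j v g).trans (ite_eq_right_iff.mpr ?_)
  rintro rfl
  exact mem_gradedPart.mp hv g hij.symm

instance [Finite ι] [Module.Projective A P] (i : ℤ) :
    Module.Projective A (gradedPart A P deg i) :=
  have := Fintype.ofFinite ι
  have : Module.Projective A (ι → P) := .of_equiv DFinsupp.linearEquivFunOnFintype
  .of_split (gradedPart A P deg i).subtype (toGradedPart P deg i)
    (LinearMap.ext toGradedPart_coe)

theorem single_mem_gradedPart [DecidableEq ι] (g : ι) (y : P) :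
    Pi.single g y ∈ gradedPart A P deg (deg g) :=
  mem_gradedPart.mpr fun _ hh ↦
    Pi.single_eq_of_ne (M := fun _ ↦ P) (ne_of_apply_ne deg hh) y

theorem linearMap_ext_gradedPart [Finite ι] {M : Type*} [AddCommGroup M] [Module A M]
    {f f' : (ι → P) →ₗ[A] M} (h : ∀ i, ∀ v ∈ gradedPart A P deg i, f v = f' v) : f = f' := by
  classical
  exact LinearMap.pi_ext fun g y ↦ h (deg g) _ (single_mem_gradedPart g y)

variable [Fintype ι] [DecidableEq ι]

namespace MatrixDifferential

variable (D D' D'' : MatrixDifferential deg (Module.End A P))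

/-- The differential as an endomorphism of `P ^ ι`. -/
def toEnd : Module.End A (ι → P) := (endVecRingEquivMatrixEnd ι A P).symm D.matrix

theorem toEnd_apply (v : ι → P) (h : ι) : D.toEnd v h = ∑ g, D.matrix h g (v g) := rfl

theorem toEnd_single (g : ι) (y : P) (h : ι) : D.toEnd (Pi.single g y) h = D.matrix h g y := by
  rw [toEnd_apply, Finset.sum_eq_single g, Pi.single_eq_same]
  · exact fun g' _ hg ↦ by rw [Pi.single_eq_of_ne hg, map_zero]
  · exact fun hg ↦ absurd (Finset.mem_univ g) hg

theorem toEnd_toEnd (v : ι → P) : D.toEnd (D.toEnd v) = 0 := by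
  rw [← Module.End.mul_apply, toEnd, ← map_mul, D.mul_self, map_zero, LinearMap.zero_apply]

theorem toEnd_mem {i : ℤ} {v : ι → P} (hv : v ∈ gradedPart A P deg i) :
    D.toEnd v ∈ gradedPart A P deg (i + 1) := by
  refine mem_gradedPart.mpr fun h hh ↦ Finset.sum_eq_zero fun g _ ↦ ?_
  by_cases hg : deg g = i
  · rw [D.hasDegree h g (hg ▸ hh), LinearMap.zero_apply]
  · rw [mem_gradedPart.mp hv g hg, map_zero]

/-- The complex `⨁ P[-deg g]` with differential `D`. -/
noncomputable def complex : CochainComplex (ModuleCat.{u} A) ℤ :=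
  .of (fun i ↦ .of A (gradedPart A P deg i))
    (fun i ↦ ModuleCat.ofHom (D.toEnd.restrict fun _ ↦ D.toEnd_mem (i := i)))
    fun _ ↦ ModuleCat.hom_ext (LinearMap.ext fun v ↦ Subtype.ext (D.toEnd_toEnd v.1))

theorem complex_d (i : ℤ) :
    D.complex.d i (i + 1) = ModuleCat.ofHom (D.toEnd.restrict fun _ ↦ D.toEnd_mem (i := i)) :=
  CochainComplex.of_d (fun i ↦ ModuleCat.of A (gradedPart A P deg i))
    (fun i ↦ ModuleCat.ofHom (D.toEnd.restrict fun _ ↦ D.toEnd_mem (i := i))) i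

variable {D D' D''}

/-- The component of degree `i` of a chain map. -/
noncomputable def component (f : D.complex ⟶ D'.complex) (i : ℤ) :
    gradedPart A P deg i →ₗ[A] gradedPart A P deg i := (f.f i).hom

theorem component_toEnd (f : D.complex ⟶ D'.complex) {i : ℤ} (v : gradedPart A P deg i) :
    (component f (i + 1) ⟨D.toEnd v.1, D.toEnd_mem v.2⟩).1 = D'.toEnd (component f i v).1 := by
  have hcomm := f.comm i (i + 1)
  rw [complex_d, complex_d] at hcomm
  exact congr(($hcomm.symm).hom v |>.1)

/-- The endomorphism of `P ^ ι` assembled from the components of a chain map. -/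
noncomputable def total (f : D.complex ⟶ D'.complex) : Module.End A (ι → P) :=
  .pi fun g ↦ .proj g ∘ₗ (gradedPart A P deg (deg g)).subtype ∘ₗ component f (deg g) ∘ₗ
    toGradedPart P deg (deg g)

theorem total_apply (f : D.complex ⟶ D'.complex) {i : ℤ} {v : ι → P}
    (hv : v ∈ gradedPart A P deg i) : total f v = (component f i ⟨v, hv⟩).1 := by
  ext g
  change (component f (deg g) (toGradedPart P deg (deg g) v)).1 g = _
  by_cases hg : deg g = i
  · subst hg
    rw [toGradedPart_coe ⟨v, hv⟩]
  · rw [toGradedPart_of_ne (Ne.symm hg) hv, map_zero]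
    exact (mem_gradedPart.mp (component f i ⟨v, hv⟩).2 g hg).symm

theorem total_id : total (𝟙 D.complex) = 1 :=
  linearMap_ext_gradedPart (deg := deg) fun _ _ hv ↦ total_apply (𝟙 D.complex) hv

theorem total_comp (f : D.complex ⟶ D'.complex) (f' : D'.complex ⟶ D''.complex) :
    total (f ≫ f') = total f' * total f :=
  linearMap_ext_gradedPart (deg := deg) fun i v hv ↦ by
    rw [Module.End.mul_apply, total_apply f hv, total_apply f' (Subtype.prop _),
      total_apply (f ≫ f') hv]
    rfl

theorem total_comm (f : D.complex ⟶ D'.complex) : D'.toEnd * total f = total f * D.toEnd :=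
  linearMap_ext_gradedPart (deg := deg) fun i v hv ↦ by
    rw [Module.End.mul_apply, Module.End.mul_apply, total_apply f hv,
      total_apply f (D.toEnd_mem hv), component_toEnd f ⟨v, hv⟩]

theorem total_injective : Function.Injective (total (D := D) (D' := D')) := by
  intro f f' h
  ext i v
  exact Subtype.ext <|
    ((total_apply f (Subtype.prop v)).symm.trans congr($h v.1)).trans
      (total_apply f' (Subtype.prop v))

/-- The matrix of a chain map. -/
noncomputable def homMatrix (f : D.complex ⟶ D'.complex) : Matrix ι ι (Module.End A P) :=
  endVecRingEquivMatrixEnd ι A P (total f)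

theorem homMatrix_injective : Function.Injective (homMatrix (D := D) (D' := D')) :=
  (endVecRingEquivMatrixEnd ι A P).injective.comp total_injective

theorem homMatrix_comp (f : D.complex ⟶ D'.complex) (f' : D'.complex ⟶ D''.complex) :
    homMatrix (f ≫ f') = homMatrix f' * homMatrix f := by
  rw [homMatrix, total_comp, map_mul, homMatrix, homMatrix]

theorem homMatrix_comm (f : D.complex ⟶ D'.complex) :
    D'.matrix * homMatrix f = homMatrix f * D.matrix := by
  have := congrArg (endVecRingEquivMatrixEnd ι A P) (total_comm f)
  rwa [map_mul, map_mul, toEnd, toEnd, RingEquiv.apply_symm_apply, RingEquiv.apply_symm_apply]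
    at this

theorem hasDegree_homMatrix (f : D.complex ⟶ D'.complex) : HasDegree deg 0 (homMatrix f) := by
  intro h g hd
  refine LinearMap.ext fun y ↦ ?_
  change total f (Pi.single g y) h = 0
  rw [total_apply f (single_mem_gradedPart g y)]
  exact mem_gradedPart.mp (Subtype.prop _) h (by rwa [add_zero] at hd)

section Algebra

open scoped ModuleCat.Algebra

variable {k : Type u} [Field k] [Algebra k A] [Module k P] [IsScalarTower k A P]

variable (k) in
theorem total_smul (c : k) (f : D.complex ⟶ D'.complex) : total (c • f) = c • total f := by
  refine linearMap_ext_gradedPart (deg := deg) fun i v hv ↦ ?_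
  rw [LinearMap.smul_apply, total_apply f hv, total_apply (c • f) hv]
  exact algebraMap_smul A c (component f i ⟨v, hv⟩).1

variable (k D) in
/-- The matrix representation of the endomorphism algebra of the complex. -/
noncomputable def endMatrix : End D.complex →ₐ[k] Matrix ι ι (Module.End A P) :=
  .comp (endVecAlgEquivMatrixEnd ι k A P : _ →ₐ[k] _) <| .ofLinearMap
    { toFun := total
      map_add' := fun _ _ ↦ rfl
      map_smul' := total_smul k }
    total_id
    fun f f' ↦ total_comp f' f

theorem endMatrix_apply (f : End D.complex) : endMatrix D k f = homMatrix f := rfl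

variable (k) in
theorem isNilpotent_of_endMatrix {f : End D.complex} (hf : IsNilpotent (endMatrix D k f)) :
    IsNilpotent f :=
  (IsNilpotent.map_iff (show Function.Injective (endMatrix D k) from homMatrix_injective)).mp hf

end Algebra

end MatrixDifferential

end MatrixComplex

namespace TruncatedPowerBasis

variable {k B : Type*} [Field k] [Ring B] [Algebra k B] (pb : TruncatedPowerBasis k B)

/-- The coefficient of `gen ^ j`, which is `0` for `j ≥ dim`. -/
noncomputable def coeff (j : ℕ) : B →ₗ[k] k :=
  if h : j < pb.dim then pb.basis.coord ⟨j, h⟩ else 0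

variable {pb} in
theorem coeff_gen_pow {j : ℕ} (hj : j < pb.dim) (n : ℕ) :
    pb.coeff j (pb.gen ^ n) = if n = j then 1 else 0 := by
  rw [coeff, dif_pos hj]
  by_cases hn : n < pb.dim
  · rw [← Fin.val_mk hn, ← pb.basis_eq_pow, Module.Basis.coord_apply, Module.Basis.repr_self,
      Finsupp.single_apply]
    exact if_congr Fin.ext_iff rfl rfl
  · rw [pow_eq_zero_of_le (not_lt.mp hn) pb.gen_pow_dim, map_zero, if_neg (by omega)]

variable {pb} in
theorem coeff_gen_pow_mul {j : ℕ} (hj : j < pb.dim) (r : ℕ) (y : B) :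
    pb.coeff j (pb.gen ^ r * y) = if r ≤ j then pb.coeff (j - r) y else 0 := by
  suffices h : pb.coeff j ∘ₗ LinearMap.mulLeft k (pb.gen ^ r) =
      if r ≤ j then pb.coeff (j - r) else 0 by
    refine congr($h y).trans ?_
    split_ifs <;> rfl
  refine pb.basis.ext fun i ↦ ?_
  rw [LinearMap.comp_apply, LinearMap.mulLeft_apply, pb.basis_eq_pow, ← pow_add,
    coeff_gen_pow hj]
  split_ifs with h₁ h₂ h₂
  · rw [coeff_gen_pow (by omega), if_pos (by omega)]
  · omega
  · rw [coeff_gen_pow (by omega), if_neg (by omega)]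
  · rfl

theorem commute_gen (y : B) : Commute pb.gen y :=
  Algebra.commute_of_mem_adjoin_self (by rw [pb.adjoin_gen_eq_top]; exact Algebra.mem_top)

section Residue

variable [Nontrivial B]

theorem exists_eq_coeff_zero_add_gen_mul (y : B) :
    ∃ z, y = algebraMap k B (pb.coeff 0 y) + pb.gen * z := by
  let f : B →ₗ[k] B := .id - Algebra.linearMap k B ∘ₗ pb.coeff 0
  suffices h : ⊤ ≤ (LinearMap.range (LinearMap.mulLeft k pb.gen)).comap f by
    obtain ⟨z, hz⟩ := h (Submodule.mem_top (x := y))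
    exact ⟨z, eq_add_of_sub_eq' hz.symm⟩
  rw [← pb.basis.span_eq, Submodule.span_le]
  rintro _ ⟨⟨i, hi⟩, rfl⟩
  rw [SetLike.mem_coe, Submodule.mem_comap, pb.basis_eq_pow]
  change pb.gen ^ i - algebraMap k B (pb.coeff 0 (pb.gen ^ i)) ∈ _
  rw [coeff_gen_pow pb.dim_pos]
  cases i with
  | zero => simp
  | succ i => exact ⟨pb.gen ^ i, by simp [pow_succ']⟩

/-- The quotient map `k[x]/(x ^ dim) → k`. -/
noncomputable def residue : B →ₐ[k] k :=
  .ofLinearMap (pb.coeff 0) ((congrArg _ (pow_zero _).symm).trans (coeff_gen_pow pb.dim_pos 0))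
    fun y z ↦ by
      obtain ⟨w, hw⟩ := pb.exists_eq_coeff_zero_add_gen_mul y
      have hgen : pb.coeff 0 (pb.gen * (w * z)) = 0 := by
        simpa using coeff_gen_pow_mul pb.dim_pos 1 (w * z)
      calc pb.coeff 0 (y * z) = pb.coeff 0 (pb.coeff 0 y • z + pb.gen * (w * z)) := by
            rw [Algebra.smul_def, ← mul_assoc, ← add_mul, ← hw]
        _ = pb.coeff 0 y * pb.coeff 0 z := by rw [map_add, map_smul, hgen, add_zero, smul_eq_mul]

variable {pb} in
theorem exists_eq_gen_mul_of_residue_eq_zero {y : B} (hy : pb.residue y = 0) :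
    ∃ z, y = pb.gen * z := by
  obtain ⟨z, hz⟩ := pb.exists_eq_coeff_zero_add_gen_mul y
  exact ⟨z, hz.trans (by rw [show pb.coeff 0 y = 0 from hy, map_zero, zero_add])⟩

variable {pb} in
theorem isNilpotent_of_residue {ι : Type*} [Fintype ι] [DecidableEq ι] {M : Matrix ι ι B}
    (hM : IsNilpotent (pb.residue.mapMatrix M)) : IsNilpotent M := by
  obtain ⟨n, hn⟩ := hM
  rw [← map_pow] at hn
  choose M' hM' using fun h g ↦ exists_eq_gen_mul_of_residue_eq_zero (congr($hn h g))
  have hpow : M ^ n = Matrix.scalar ι pb.gen * .of M' := by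
    ext h g
    rw [hM', Matrix.scalar_apply, Matrix.diagonal_mul, Matrix.of_apply]
  refine ⟨n * pb.dim, ?_⟩
  rw [pow_mul, hpow, (Matrix.scalar_commute _ pb.commute_gen _).mul_pow, ← map_pow,
    pb.gen_pow_dim, map_zero, zero_mul]

end Residue

end TruncatedPowerBasis

/-! ### A one-parameter family of square-zero matrices -/

section Family

open Matrix

theorem single_mul_eq_ite {ι R : Type*} [Fintype ι] [DecidableEq ι] [Semiring R] (i j : ι)
    (c : R) (M : Matrix ι ι R) (h g : ι) :
    (single i j c * M) h g = if h = i then c * M j g else 0 := by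
  split_ifs with hi
  · rw [hi, single_mul_apply_same]
  · exact single_mul_apply_of_ne _ _ _ _ _ hi _

theorem mul_single_eq_ite {ι R : Type*} [Fintype ι] [DecidableEq ι] [Semiring R] (i j : ι)
    (c : R) (M : Matrix ι ι R) (h g : ι) :
    (M * single i j c) h g = if g = j then M h i * c else 0 := by
  split_ifs with hj
  · rw [hj, mul_single_apply_same]
  · exact mul_single_apply_of_ne _ _ _ _ _ hj _

/-- The generators of the complexes of the family: nine core ones and a tail of length `N + 1`. -/
abbrev Generator (N : ℕ) := Fin 9 ⊕ Fin (N + 1)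

/-- The cohomological degrees of the generators. -/
def Generator.degree (N : ℕ) : Generator N → ℤ :=
  Sum.elim ![-1, 0, 0, 1, 1, 2, 2, 3, 3] fun j ↦ 4 + j

theorem Generator.degree_mem_Icc {N : ℕ} (g : Generator N) :
    degree N g ∈ Set.Icc (-1) (4 + N : ℤ) := by
  rcases g with a | j
  · have degree_core : ∀ a : Fin 9,
        (![-1, 0, 0, 1, 1, 2, 2, 3, 3] : Fin 9 → ℤ) a ∈ Set.Icc (-1) 4 := by decide
    exact ⟨(degree_core a).1, (degree_core a).2.trans (by omega)⟩
  · simp only [degree, Sum.elim_inr, Set.mem_Icc]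
    omega

theorem Generator.eq_or_of_degree_eq {N : ℕ} {h g : Generator N}
    (hd : degree N h = degree N g) : h = g ∨
      h = .inl 1 ∧ g = .inl 2 ∨ h = .inl 2 ∧ g = .inl 1 ∨
      h = .inl 3 ∧ g = .inl 4 ∨ h = .inl 4 ∧ g = .inl 3 ∨
      h = .inl 5 ∧ g = .inl 6 ∨ h = .inl 6 ∧ g = .inl 5 ∨
      h = .inl 7 ∧ g = .inl 8 ∨ h = .inl 8 ∧ g = .inl 7 := by
  have degree_core : ∀ a : Fin 9, (![-1, 0, 0, 1, 1, 2, 2, 3, 3] : Fin 9 → ℤ) a < 4 := by decide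
  rcases h with a | j <;> rcases g with b | j'
  · simp only [Sum.inl.injEq]
    revert a b
    unfold degree
    simp only [Sum.elim_inl]
    decide
  · exact absurd (degree_core a) (by simp only [degree, Sum.elim_inl, Sum.elim_inr] at hd; omega)
  · exact absurd (degree_core b) (by simp only [degree, Sum.elim_inl, Sum.elim_inr] at hd; omega)
  · exact .inl (congrArg _ (Fin.ext (by simp only [degree, Sum.elim_inr] at hd; omega)))

variable (R : Type*) [CommRing R] (N : ℕ)

/-- The coefficient matrix of `x` in the differentials of the family. With `s = x ^ (m - 1)` and
the generators `0, …, 8` and `0', …, N'`, the whole differential is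
```
0 -x→ 1 -s→ 3 -ts→ 5 -s→ 8 -x→ 0' -s→ 1' -s→ ⋯ -s→ N'
            3 -s→ 6 -x→ 7
      2 -x→ 4 -s→ 5
            4 -s→ 6
```
-/
def genPart : Matrix (Generator N) (Generator N) R :=
  single (.inl 1) (.inl 0) 1 + single (.inl 4) (.inl 2) 1 + single (.inl 7) (.inl 6) 1 +
    single (.inr 0) (.inl 8) 1

variable {R} in
/-- The coefficient matrix of `x ^ (m - 1)` in the differential with parameter `t`. -/
def soclePart (t : R) : Matrix (Generator N) (Generator N) R :=
  single (.inl 3) (.inl 1) 1 + single (.inl 5) (.inl 3) t + single (.inl 6) (.inl 3) 1 +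
    single (.inl 5) (.inl 4) 1 + single (.inl 6) (.inl 4) 1 + single (.inl 8) (.inl 5) 1 +
    ∑ j : Fin N, single (.inr j.succ) (.inr j.castSucc) 1

theorem genPart_mul_genPart : genPart R N * genPart R N = 0 := by
  simp [genPart, add_mul, mul_add]

variable {R N} in
theorem single_add_single_mul (δ ε δ' ε' : R) :
    (single (.inl 1) (.inl 2) δ + single (.inl 7) (.inl 8) ε) *
      (single (.inl 1) (.inl 2) δ' + single (.inl 7) (.inl 8) ε') =
        (0 : Matrix (Generator N) (Generator N) R) := by
  simp [add_mul, mul_add]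

theorem hasDegree_genPart : HasDegree (Generator.degree N) 1 (genPart R N) := by
  refine .add (.add (.add ?_ ?_) ?_) ?_ <;> exact .single _ (by simp [Generator.degree])

variable {R} in
theorem hasDegree_soclePart (t : R) : HasDegree (Generator.degree N) 1 (soclePart N t) := by
  refine .add (.add (.add (.add (.add (.add ?_ ?_) ?_) ?_) ?_) ?_) (.sum fun j ↦ ?_) <;>
    exact .single _ (by simp [Generator.degree, add_assoc])

section Entries

variable {R N}

@[simp]
theorem genPart_mul_apply (M : Matrix (Generator N) (Generator N) R) (h g : Generator N) :
    (genPart R N * M) h g =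
      (if h = .inl 1 then M (.inl 0) g else 0) + (if h = .inl 4 then M (.inl 2) g else 0) +
      (if h = .inl 7 then M (.inl 6) g else 0) + (if h = .inr 0 then M (.inl 8) g else 0) := by
  simp only [genPart, add_mul, Matrix.add_apply, single_mul_eq_ite, one_mul]

@[simp]
theorem mul_genPart_apply (M : Matrix (Generator N) (Generator N) R) (h g : Generator N) :
    (M * genPart R N) h g =
      (if g = .inl 0 then M h (.inl 1) else 0) + (if g = .inl 2 then M h (.inl 4) else 0) +
      (if g = .inl 6 then M h (.inl 7) else 0) + (if g = .inl 8 then M h (.inr 0) else 0) := by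
  simp only [genPart, mul_add, Matrix.add_apply, mul_single_eq_ite, mul_one]

@[simp]
theorem soclePart_mul_apply (t : R) (M : Matrix (Generator N) (Generator N) R)
    (h g : Generator N) :
    (soclePart N t * M) h g =
      (if h = .inl 3 then M (.inl 1) g else 0) + (if h = .inl 5 then t * M (.inl 3) g else 0) +
      (if h = .inl 6 then M (.inl 3) g else 0) + (if h = .inl 5 then M (.inl 4) g else 0) +
      (if h = .inl 6 then M (.inl 4) g else 0) + (if h = .inl 8 then M (.inl 5) g else 0) +
      ∑ j : Fin N, if h = .inr j.succ then M (.inr j.castSucc) g else 0 := by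
  simp only [soclePart, add_mul, Finset.sum_mul, Matrix.add_apply, Matrix.sum_apply,
    single_mul_eq_ite, one_mul]

@[simp]
theorem mul_soclePart_apply (t : R) (M : Matrix (Generator N) (Generator N) R)
    (h g : Generator N) :
    (M * soclePart N t) h g =
      (if g = .inl 1 then M h (.inl 3) else 0) + (if g = .inl 3 then M h (.inl 5) * t else 0) +
      (if g = .inl 3 then M h (.inl 6) else 0) + (if g = .inl 4 then M h (.inl 5) else 0) +
      (if g = .inl 4 then M h (.inl 6) else 0) + (if g = .inl 5 then M h (.inl 8) else 0) +
      ∑ j : Fin N, if g = .inr j.castSucc then M h (.inr j.succ) else 0 := by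
  simp only [soclePart, mul_add, Finset.mul_sum, Matrix.add_apply, Matrix.sum_apply,
    mul_single_eq_ite, mul_one]

end Entries

section Intertwiner

variable {R N} {s t : R} {F S : Matrix (Generator N) (Generator N) R}
  (h₁ : genPart R N * F = F * genPart R N)
  (h₂ : genPart R N * S + soclePart N t * F = S * genPart R N + F * soclePart N s)

include h₁ h₂

theorem intertwiner_offDiag_core : F (.inl 2) (.inl 1) = 0 ∧ F (.inl 8) (.inl 7) = 0 ∧
    F (.inl 3) (.inl 4) = 0 ∧ F (.inl 4) (.inl 3) = 0 ∧
    F (.inl 5) (.inl 6) = 0 ∧ F (.inl 6) (.inl 5) = 0 := by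
  have F₂₁ : 0 = F (.inl 2) (.inl 1) := by simpa using congr($h₁ (.inl 2) (.inl 0))
  have F₈₇ : 0 = F (.inl 8) (.inl 7) := by simpa using congr($h₁ (.inl 8) (.inl 6))
  have F₃₄ : 0 = F (.inl 3) (.inl 4) := by simpa using congr($h₁ (.inl 3) (.inl 2))
  have F₆₅ : F (.inl 6) (.inl 5) = 0 := by simpa using congr($h₁ (.inl 7) (.inl 5))
  have S₂₁ : 0 = S (.inl 2) (.inl 1) := by simpa using congr($h₂ (.inl 2) (.inl 0))
  have S₈₇ : S (.inl 8) (.inl 7) = 0 := by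
    simpa [(Fin.succ_ne_zero _).symm] using congr($h₂ (.inr 0) (.inl 7))
  have F₄₃ : S (.inl 2) (.inl 1) = F (.inl 4) (.inl 3) := by
    simpa using congr($h₂ (.inl 4) (.inl 1))
  have F₅₆ : F (.inl 5) (.inl 6) = S (.inl 8) (.inl 7) := by
    simpa using congr($h₂ (.inl 8) (.inl 6))
  exact ⟨F₂₁.symm, F₈₇.symm, F₃₄.symm, F₄₃.symm.trans S₂₁.symm, F₅₆.trans S₈₇, F₆₅⟩

theorem intertwiner_diag_core (a : Fin 9) :
    F (.inl a) (.inl a) = F (.inr 0) (.inr 0) := by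
  obtain ⟨-, -, F₃₄, F₄₃, F₅₆, F₆₅⟩ := intertwiner_offDiag_core h₁ h₂
  have h₀₁ : F (.inl 0) (.inl 0) = F (.inl 1) (.inl 1) := by
    simpa using congr($h₁ (.inl 1) (.inl 0))
  have h₂₄ : F (.inl 2) (.inl 2) = F (.inl 4) (.inl 4) := by
    simpa using congr($h₁ (.inl 4) (.inl 2))
  have h₆₇ : F (.inl 6) (.inl 6) = F (.inl 7) (.inl 7) := by
    simpa using congr($h₁ (.inl 7) (.inl 6))
  have h₈ : F (.inl 8) (.inl 8) = F (.inr 0) (.inr 0) := by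
    simpa using congr($h₁ (.inr 0) (.inl 8))
  have h₁₃ : F (.inl 1) (.inl 1) = F (.inl 3) (.inl 3) := by
    simpa using congr($h₂ (.inl 3) (.inl 1))
  have h₃₆ : F (.inl 3) (.inl 3) = F (.inl 6) (.inl 6) := by
    simpa [F₄₃, F₆₅] using congr($h₂ (.inl 6) (.inl 3))
  have h₄₆ : F (.inl 4) (.inl 4) = F (.inl 6) (.inl 6) := by
    simpa [F₃₄, F₆₅] using congr($h₂ (.inl 6) (.inl 4))
  have h₄₅ : F (.inl 4) (.inl 4) = F (.inl 5) (.inl 5) := by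
    simpa [F₃₄, F₅₆] using congr($h₂ (.inl 5) (.inl 4))
  have h₅₈ : F (.inl 5) (.inl 5) = F (.inl 8) (.inl 8) := by
    simpa using congr($h₂ (.inl 8) (.inl 5))
  fin_cases a <;> grind

omit h₁ in
theorem intertwiner_diag_tail (j : Fin (N + 1)) :
    F (.inr j) (.inr j) = F (.inr 0) (.inr 0) := by
  induction j using Fin.induction with
  | zero => rfl
  | succ j ih =>
    have hj : F (.inr j.castSucc) (.inr j.castSucc) = F (.inr j.succ) (.inr j.succ) := by
      simpa using congr($h₂ (.inr j.succ) (.inr j.castSucc))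
    exact hj.symm.trans ih

theorem intertwiner_mul_sub : F (.inr 0) (.inr 0) * (t - s) = 0 := by
  obtain ⟨-, -, -, F₄₃, F₅₆, -⟩ := intertwiner_offDiag_core h₁ h₂
  have h₅₃ : t * F (.inr 0) (.inr 0) = F (.inr 0) (.inr 0) * s := by
    simpa [F₄₃, F₅₆, intertwiner_diag_core h₁ h₂] using congr($h₂ (.inl 5) (.inl 3))
  rw [mul_sub, mul_comm, h₅₃, sub_self]

theorem exists_intertwiner_eq (hF : HasDegree (Generator.degree N) 0 F) :
    ∃ c δ ε : R, c * (t - s) = 0 ∧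
      F = c • 1 + (single (.inl 1) (.inl 2) δ + single (.inl 7) (.inl 8) ε) := by
  refine ⟨_, F (.inl 1) (.inl 2), F (.inl 7) (.inl 8), intertwiner_mul_sub h₁ h₂, ?_⟩
  obtain ⟨F₂₁, F₈₇, F₃₄, F₄₃, F₅₆, F₆₅⟩ := intertwiner_offDiag_core h₁ h₂
  ext h g
  by_cases hd : Generator.degree N h = Generator.degree N g
  · rcases Generator.eq_or_of_degree_eq hd with rfl | hhg
    · have hdiag : F h h = F (.inr 0) (.inr 0) :=
        h.casesOn (intertwiner_diag_core h₁ h₂) (intertwiner_diag_tail h₂)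
      have hsingle {i j : Generator N} (hij : i ≠ j) (c : R) : single i j c h h = 0 :=
        single_apply_of_ne _ _ _ _ _ fun hh ↦ hij (hh.1.trans hh.2.symm)
      simp [hdiag, hsingle]
    · rcases hhg with ⟨rfl, rfl⟩ | ⟨rfl, rfl⟩ | ⟨rfl, rfl⟩ | ⟨rfl, rfl⟩ | ⟨rfl, rfl⟩ | ⟨rfl, rfl⟩ |
        ⟨rfl, rfl⟩ | ⟨rfl, rfl⟩ <;> simp [*]
  · have hd' : Generator.degree N h ≠ Generator.degree N g + 0 := by rwa [add_zero]
    have hE : HasDegree (Generator.degree N) 0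
        (single (.inl 1) (.inl 2) (F (.inl 1) (.inl 2)) +
          single (.inl 7) (.inl 8) (F (.inl 7) (.inl 8))) :=
      .add (.single _ (by simp [Generator.degree])) (.single _ (by simp [Generator.degree]))
    rw [hF h g hd', Matrix.add_apply, hE h g hd', Matrix.smul_apply,
      one_apply_ne (ne_of_apply_ne _ hd), smul_zero, add_zero]

end Intertwiner

end Family

namespace TruncatedPowerBasis

section Differential

open Matrix

variable {k B : Type*} [Field k] [Ring B] [Algebra k B] (pb : TruncatedPowerBasis k B)

section MapCoeff

variable {pb} {ι : Type*} [Fintype ι] {j : ℕ} (hj : j < pb.dim) (r : ℕ) (M : Matrix ι ι k)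
  (Φ : Matrix ι ι B)

include hj

theorem map_coeff_smul_gen_pow_mul : (M.map (· • pb.gen ^ r) * Φ).map (pb.coeff j) =
    if r ≤ j then M * Φ.map (pb.coeff (j - r)) else 0 := by
  ext h g
  simp only [map_apply, mul_apply, map_sum, smul_mul_assoc, map_smul, coeff_gen_pow_mul hj]
  split_ifs <;> simp [mul_apply]

theorem map_coeff_mul_smul_gen_pow : (Φ * M.map (· • pb.gen ^ r)).map (pb.coeff j) =
    if r ≤ j then Φ.map (pb.coeff (j - r)) * M else 0 := by
  ext h g
  simp only [map_apply, mul_apply, map_sum, mul_smul_comm, map_smul,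
    ← ((pb.commute_gen _).pow_left r).eq, coeff_gen_pow_mul hj]
  split_ifs <;> simp [mul_apply, mul_comm]

end MapCoeff

/-- The differential of the member with parameters `N` and `t` of the family of complexes. -/
def familyDifferential (hdim : 2 ≤ pb.dim) (N : ℕ) (t : k) :
    MatrixDifferential (Generator.degree N) B where
  matrix := (genPart k N).map (· • pb.gen ^ 1) + (soclePart N t).map (· • pb.gen ^ (pb.dim - 1))
  hasDegree := .add ((hasDegree_genPart k N).map (zero_smul k _))
    ((hasDegree_soclePart N t).map (zero_smul k _))
  mul_self := by
    have hmul (M M' : Matrix (Generator N) (Generator N) k) (r r' : ℕ) :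
        M.map (· • pb.gen ^ r) * M'.map (· • pb.gen ^ r') =
          (M * M').map (· • pb.gen ^ (r + r')) := by
      ext h g
      simp only [mul_apply, map_apply, smul_mul_smul_comm, ← pow_add, Finset.sum_smul]
    have hpow {r : ℕ} (hr : pb.dim ≤ r) : pb.gen ^ r = 0 := pow_eq_zero_of_le hr pb.gen_pow_dim
    rw [mul_add, add_mul, add_mul, hmul, hmul, hmul, hmul, genPart_mul_genPart,
      hpow (r := 1 + (pb.dim - 1)) (by omega), hpow (r := pb.dim - 1 + 1) (by omega),
      hpow (r := pb.dim - 1 + (pb.dim - 1)) (by omega)]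
    ext h g
    simp

variable {pb} in
theorem exists_residue_eq [Nontrivial B] (hdim : 3 ≤ pb.dim) {N : ℕ} {s t : k}
    {Φ : Matrix (Generator N) (Generator N) B} (hΦ : HasDegree (Generator.degree N) 0 Φ)
    (hcomm : (pb.familyDifferential (by omega) N t).matrix * Φ =
      Φ * (pb.familyDifferential (by omega) N s).matrix) :
    ∃ c δ ε : k, c * (t - s) = 0 ∧ pb.residue.mapMatrix Φ =
      c • 1 + (single (.inl 1) (.inl 2) δ + single (.inl 7) (.inl 8) ε) := by
  have hcoeff (j : ℕ) := congrArg (Matrix.map · (pb.coeff j)) hcomm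
  simp only [familyDifferential, add_mul, mul_add, Matrix.map_add _ (map_add (pb.coeff _))]
    at hcoeff
  refine exists_intertwiner_eq (S := Φ.map (pb.coeff (pb.dim - 2))) ?_ ?_ (hΦ.map (map_zero _))
  · have := hcoeff 1
    rw [map_coeff_smul_gen_pow_mul (by omega), map_coeff_smul_gen_pow_mul (by omega),
      map_coeff_mul_smul_gen_pow (by omega), map_coeff_mul_smul_gen_pow (by omega),
      if_pos le_rfl, if_neg (by omega), if_pos le_rfl, if_neg (by omega), add_zero,
      add_zero] at this
    exact this
  · have := hcoeff (pb.dim - 1)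
    rw [map_coeff_smul_gen_pow_mul (by omega), map_coeff_smul_gen_pow_mul (by omega),
      map_coeff_mul_smul_gen_pow (by omega), map_coeff_mul_smul_gen_pow (by omega),
      if_pos le_rfl, if_pos (by omega), if_pos le_rfl, if_pos (by omega), Nat.sub_self] at this
    exact this

end Differential

section FamilyComplex

open MatrixDifferential
open scoped ModuleCat.Algebra

variable {k A : Type u} [Field k] [Ring A] [Algebra k A] {P : Type u} [AddCommGroup P]
  [Module A P] [Module k P] [IsScalarTower k A P] [Nontrivial P]
  (pb : TruncatedPowerBasis k (Module.End A P))

/-- The complex over `A` with terms sums of copies of `P` and differential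
`familyDifferential`. -/
noncomputable abbrev familyComplex (hdim : 2 ≤ pb.dim) (N : ℕ) (t : k) :
    CochainComplex (ModuleCat.{u} A) ℤ := (pb.familyDifferential hdim N t).complex

variable {pb} (hdim : 3 ≤ pb.dim) {N : ℕ}

include hdim

theorem isUnit_or_isNilpotent_end_familyComplex (t : k)
    (f : End (pb.familyComplex (by omega) N t)) : IsUnit f ∨ IsNilpotent f := by
  obtain ⟨c, δ, ε, -, hres⟩ := exists_residue_eq hdim (hasDegree_homMatrix f) (homMatrix_comm f)
  have hnil : IsNilpotent (f - algebraMap k _ c) := by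
    refine isNilpotent_of_endMatrix k (pb.isNilpotent_of_residue ?_)
    rw [map_sub, map_sub, AlgHom.commutes, AlgHom.commutes, Algebra.algebraMap_eq_smul_one,
      endMatrix_apply, hres, add_sub_cancel_left]
    exact ⟨2, by rw [pow_two, single_add_single_mul]⟩
  by_cases hc : c = 0
  · rw [hc, map_zero, sub_zero] at hnil
    exact .inr hnil
  · have hunit : IsUnit (algebraMap k (End (pb.familyComplex (by omega) N t)) c) :=
      (IsUnit.mk0 c hc).map _
    rw [← add_sub_cancel (algebraMap k _ c) f]
    exact .inl (hnil.isUnit_add_left_of_commute hunit (Algebra.commutes' c _).symm)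

theorem isNilpotent_comp_familyComplex {s t : k} (hst : s ≠ t)
    (f : pb.familyComplex (by omega) N s ⟶ pb.familyComplex (by omega) N t)
    (f' : pb.familyComplex (by omega) N t ⟶ pb.familyComplex (by omega) N s) :
    IsNilpotent (End.of (f ≫ f')) := by
  obtain ⟨c, δ, ε, hc, hres⟩ := exists_residue_eq hdim (hasDegree_homMatrix f) (homMatrix_comm f)
  obtain ⟨c', δ', ε', hc', hres'⟩ :=
    exists_residue_eq hdim (hasDegree_homMatrix f') (homMatrix_comm f')
  obtain rfl := (mul_eq_zero.mp hc).resolve_right (sub_ne_zero.mpr hst.symm)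
  obtain rfl := (mul_eq_zero.mp hc').resolve_right (sub_ne_zero.mpr hst)
  refine isNilpotent_of_endMatrix k (pb.isNilpotent_of_residue ?_)
  have hmul : homMatrix (f ≫ f') = homMatrix f' * homMatrix f := homMatrix_comp f f'
  change IsNilpotent (pb.residue.mapMatrix (homMatrix (f ≫ f')))
  rw [hmul, map_mul, hres, hres', zero_smul, zero_add, zero_add,
    single_add_single_mul]
  exact .zero

end FamilyComplex

end TruncatedPowerBasis

section Rank

variable (k : Type u) {A : Type u} [Field k] [Ring A] [Algebra k A]

theorem rank_restrictScalars_le_of_mono {M N : ModuleCat.{u} A} (f : M ⟶ N) [Mono f] :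
    Module.rank k ((ModuleCat.restrictScalars (algebraMap k A)).obj M) ≤
      Module.rank k ((ModuleCat.restrictScalars (algebraMap k A)).obj N) :=
  LinearMap.rank_le_of_injective ((ModuleCat.restrictScalars (algebraMap k A)).map f).hom
    ((ModuleCat.mono_iff_injective f).mp inferInstance)

theorem rank_restrictScalars_le_of_epi {M N : ModuleCat.{u} A} (f : M ⟶ N) [Epi f] :
    Module.rank k ((ModuleCat.restrictScalars (algebraMap k A)).obj N) ≤
      Module.rank k ((ModuleCat.restrictScalars (algebraMap k A)).obj M) :=
  LinearMap.rank_le_of_surjective ((ModuleCat.restrictScalars (algebraMap k A)).map f).hom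
    ((ModuleCat.epi_iff_surjective f).mp inferInstance)

end Rank

namespace MatrixDifferential

variable {A : Type u} [Ring A] {P : Type u} [AddCommGroup P] [Module A P]
  {ι : Type} [Fintype ι] [DecidableEq ι] {deg : ι → ℤ}
  (D : MatrixDifferential deg (Module.End A P))

theorem isKProjective_complex [Module.Projective A P] : D.complex.IsKProjective := by
  obtain ⟨b, hb⟩ := (Set.finite_range deg).bddAbove
  have : D.complex.IsStrictlyLE b := by
    refine (CochainComplex.isStrictlyLE_iff _ _).mpr fun i hi ↦ ?_
    have : Subsingleton (gradedPart A P deg i) :=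
      Submodule.subsingleton_iff_eq_bot.mpr <| (Submodule.eq_bot_iff _).mpr fun v hv ↦
        funext fun g ↦ mem_gradedPart.mp hv g ((hb ⟨g, rfl⟩).trans_lt hi).ne
    exact ModuleCat.isZero_of_subsingleton (.of A (gradedPart A P deg i))
  have (i : ℤ) : Projective (D.complex.X i) :=
    (IsProjective.iff_projective (gradedPart A P deg i)).mp inferInstance
  exact CochainComplex.isKProjective_of_projective _ b

theorem isZero_homology_complex_iff {i j : ℤ} (hij : i + 1 = j) :
    IsZero (D.complex.homology j) ↔
      ∀ v ∈ gradedPart A P deg j, D.toEnd v = 0 → ∃ w ∈ gradedPart A P deg i, D.toEnd w = v := by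
  subst hij
  rw [← HomologicalComplex.exactAt_iff_isZero_homology,
    HomologicalComplex.exactAt_iff' _ i (i + 1) (i + 1 + 1) (by simp) (by simp),
    ShortComplex.moduleCat_exact_iff]
  have hd (i : ℤ) (v : gradedPart A P deg i) :
      (show gradedPart A P deg (i + 1) from D.complex.d i (i + 1) v).1 = D.toEnd v.1 := by
    rw [complex_d]
    rfl
  constructor
  · intro h v hv hv0
    obtain ⟨w, hw⟩ := h (⟨v, hv⟩ : gradedPart A P deg (i + 1)) (Subtype.ext ((hd _ _).trans hv0))
    exact ⟨_, w.2, (hd _ _).symm.trans (congrArg Subtype.val hw)⟩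
  · intro h v hv0
    obtain ⟨w, hw, hwv⟩ := h v.1 v.2 ((hd _ _).symm.trans (congrArg Subtype.val hv0))
    exact ⟨(⟨w, hw⟩ : gradedPart A P deg i), Subtype.ext ((hd _ _).trans hwv)⟩

theorem rank_homology_complex_le (k : Type u) [Field k] [Algebra k A] [Module k P]
    [IsScalarTower k A P] (i : ℤ) :
    Module.rank k ((ModuleCat.restrictScalars (algebraMap k A)).obj (D.complex.homology i)) ≤
      Module.rank k (ι → P) := by
  let inclusion : D.complex.X i ⟶ .of A (ι → P) :=
    ModuleCat.ofHom (gradedPart A P deg i).subtype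
  have : Mono inclusion := (ModuleCat.mono_iff_injective _).mpr Subtype.val_injective
  calc
    _ ≤ _ := rank_restrictScalars_le_of_epi k (D.complex.homologyπ i)
    _ ≤ _ := rank_restrictScalars_le_of_mono k (D.complex.iCycles i)
    _ ≤ _ := rank_restrictScalars_le_of_mono k inclusion
    _ = _ := (restrictScalarsOfEquiv k A (ι → P)).rank_eq

end MatrixDifferential

namespace TruncatedPowerBasis

variable {k A : Type u} [Field k] [Ring A] [Algebra k A] {P : Type u} [AddCommGroup P]
  [Module A P] [Module k P] [IsScalarTower k A P]
  {pb : TruncatedPowerBasis k (Module.End A P)} (hdim : 2 ≤ pb.dim) (N : ℕ) (t : k)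

variable {N t} in
theorem gradedPart_degree_eq_bot {i : ℤ} (hi : i ∉ Set.Icc (-1) (4 + N : ℤ)) :
    gradedPart A P (Generator.degree N) i = ⊥ :=
  (Submodule.eq_bot_iff _).mpr fun _ hv ↦ funext fun g ↦
    mem_gradedPart.mp hv g fun hg ↦ hi (hg ▸ Generator.degree_mem_Icc g)

theorem gen_pow_mul_familyDifferential (h g : Generator N) :
    pb.gen ^ (pb.dim - 1) * (pb.familyDifferential hdim N t).matrix h g = 0 := by
  change _ * (genPart k N h g • pb.gen ^ 1 + soclePart N t h g • pb.gen ^ (pb.dim - 1)) = 0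
  rw [mul_add, mul_smul_comm, mul_smul_comm, ← pow_add, ← pow_add,
    pow_eq_zero_of_le (by omega) pb.gen_pow_dim, pow_eq_zero_of_le (by omega) pb.gen_pow_dim,
    smul_zero, smul_zero, add_zero]

theorem exists_gen_pow_apply_ne_zero (hdim : 0 < pb.dim) :
    ∃ y : P, (pb.gen ^ (pb.dim - 1)) y ≠ 0 := by
  by_contra! h
  exact pb.basis.ne_zero ⟨pb.dim - 1, by omega⟩
    ((pb.basis_eq_pow _).trans (LinearMap.ext h))

theorem isZero_homology_familyComplex {i : ℤ} (hi : i ∉ Set.Icc (-1) (4 + N : ℤ)) :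
    IsZero ((pb.familyComplex hdim N t).homology i) := by
  refine ((pb.familyDifferential hdim N t).isZero_homology_complex_iff (sub_add_cancel i 1)).mpr
    fun v hv _ ↦ ⟨0, zero_mem _, ?_⟩
  rw [gradedPart_degree_eq_bot hi, Submodule.mem_bot] at hv
  rw [hv, map_zero]

theorem not_isZero_homology_bot : ¬ IsZero ((pb.familyComplex hdim N t).homology (-1)) := by
  intro hzero
  obtain ⟨y, hy⟩ := exists_gen_pow_apply_ne_zero (pb := pb) (by omega)
  set D := pb.familyDifferential hdim N t
  let v : Generator N → P := Pi.single (.inl 0) ((pb.gen ^ (pb.dim - 1)) y)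
  have hv0 : v (.inl 0) = (pb.gen ^ (pb.dim - 1)) y := Pi.single_eq_same _ _
  have hcocycle : D.toEnd v = 0 := by
    funext h
    have hcomm := ((pb.commute_gen (D.matrix h (.inl 0))).pow_left (pb.dim - 1)).eq
    rw [gen_pow_mul_familyDifferential hdim] at hcomm
    exact (D.toEnd_single _ _ h).trans congr($hcomm.symm y)
  obtain ⟨w, hw, hwv⟩ := (D.isZero_homology_complex_iff (i := -2) (j := -1) rfl).mp hzero v
    (single_mem_gradedPart (ι := Generator N) (.inl 0) _) hcocycle
  rw [gradedPart_degree_eq_bot (by simp), Submodule.mem_bot] at hw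
  rw [hw, map_zero] at hwv
  exact hy (hv0.symm.trans (congrFun hwv.symm _))

theorem not_isZero_homology_top : ¬ IsZero ((pb.familyComplex hdim N t).homology (4 + N)) := by
  intro hzero
  obtain ⟨y, hy⟩ := exists_gen_pow_apply_ne_zero (pb := pb) (by omega)
  set D := pb.familyDifferential hdim N t
  let v : Generator N → P := Pi.single (.inr (.last N)) y
  have hv0 : v (.inr (.last N)) = y := Pi.single_eq_same _ _
  have hv : v ∈ gradedPart A P (Generator.degree N) (4 + N) :=
    single_mem_gradedPart (ι := Generator N) (.inr (.last N)) y
  have hcocycle : D.toEnd v = 0 := by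
    have := D.toEnd_mem hv
    rwa [gradedPart_degree_eq_bot (by simp), Submodule.mem_bot] at this
  obtain ⟨w, -, hwv⟩ := (D.isZero_homology_complex_iff (sub_add_cancel _ 1)).mp hzero v hv hcocycle
  refine hy ?_
  calc (pb.gen ^ (pb.dim - 1)) y
    _ = (pb.gen ^ (pb.dim - 1)) (D.toEnd w (.inr (.last N))) := by rw [hwv, hv0]
    _ = ∑ g, (pb.gen ^ (pb.dim - 1) * D.matrix (.inr (.last N)) g) (w g) := by
      rw [D.toEnd_apply, map_sum]
      rfl
    _ = 0 := Finset.sum_eq_zero fun g _ ↦ by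
      rw [gen_pow_mul_familyDifferential hdim, LinearMap.zero_apply]

end TruncatedPowerBasis

/-! ### Indecomposable objects of the derived category -/

section DerivedCategory

variable {A : Type u} [Ring A] [HasDerivedCategory.{u} (ModuleCat.{u} A)]

theorem Q_map_surjective (K L : CochainComplex (ModuleCat.{u} A) ℤ) [K.IsKProjective] :
    Function.Surjective (DerivedCategory.Q.map (X := K) (Y := L)) := by
  intro φ
  let α := DerivedCategory.quotientCompQhIso (ModuleCat.{u} A)
  obtain ⟨g, hg⟩ := (CochainComplex.IsKProjective.Qh_map_bijective K _).surjective
    (α.hom.app K ≫ φ ≫ α.inv.app L)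
  obtain ⟨f, rfl⟩ := (HomotopyCategory.quotient _ _).map_surjective g
  refine ⟨f, ?_⟩
  have hnat := DerivedCategory.quotientCompQhIso_hom_naturality f
  rw [hg, Category.assoc, Category.assoc, cancel_epi, Iso.inv_hom_id_app] at hnat
  exact hnat.symm.trans (Category.comp_id φ)

variable {K L : CochainComplex (ModuleCat.{u} A) ℤ} [K.IsKProjective]

theorem indec_Q_obj (hK : ¬ IsZero (DerivedCategory.Q.obj K))
    (hend : ∀ f : End K, IsUnit f ∨ IsNilpotent f) : Indec (DerivedCategory.Q.obj K) := by
  refine ⟨hK, fun φ hφ ↦ ?_⟩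
  obtain ⟨(f : End K), rfl⟩ := Q_map_surjective K K φ
  let toEnd : End K →* End (DerivedCategory.Q.obj K) := DerivedCategory.Q.mapEnd K
  have hidem : IsIdempotentElem (toEnd f) := hφ
  rcases hend f with hunit | ⟨n, hn⟩
  · exact .inr ((IsIdempotentElem.iff_eq_one_of_isUnit (hunit.map toEnd)).mp hidem)
  · left
    calc toEnd f
      _ = toEnd f ^ (n + 1) := (hidem.pow_succ_eq n).symm
      _ = toEnd (f ^ (n + 1)) := (map_pow toEnd f _).symm
      _ = 0 := by
        rw [pow_succ, hn, zero_mul]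
        exact DerivedCategory.Q.map_zero K K

theorem isEmpty_Q_obj_iso [L.IsKProjective] (hK : ¬ IsZero (DerivedCategory.Q.obj K))
    (hcomp : ∀ (f : K ⟶ L) (f' : L ⟶ K), IsNilpotent (End.of (f ≫ f'))) :
    IsEmpty (DerivedCategory.Q.obj K ≅ DerivedCategory.Q.obj L) := by
  refine ⟨fun φ ↦ hK ?_⟩
  obtain ⟨f, hf⟩ := Q_map_surjective K L φ.hom
  obtain ⟨f', hf'⟩ := Q_map_surjective L K φ.inv
  obtain ⟨n, hn⟩ := hcomp f f'
  let toEnd : End K →* End (DerivedCategory.Q.obj K) := DerivedCategory.Q.mapEnd K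
  have hone : toEnd (End.of (f ≫ f')) = 1 := by
    refine (DerivedCategory.Q.map_comp f f').trans ?_
    rw [hf, hf']
    exact φ.hom_inv_id
  refine (IsZero.iff_id_eq_zero _).mpr ?_
  calc (1 : End (DerivedCategory.Q.obj K))
    _ = toEnd (End.of (f ≫ f') ^ n) := by rw [map_pow, hone, one_pow]
    _ = 0 := by
      rw [hn]
      exact DerivedCategory.Q.map_zero K K

/-- The cohomology of the image of a complex in the derived category. -/
noncomputable def hobjQIso (K : CochainComplex (ModuleCat.{u} A) ℤ) (i : ℤ) :
    Hobj A i (DerivedCategory.Q.obj K) ≅ K.homology i :=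
  (DerivedCategory.homologyFunctorFactors (ModuleCat.{u} A) i).app K

/-- The cohomology of a shift. -/
noncomputable def hobjShiftIso (X : DerivedCategory (ModuleCat.{u} A)) (n i : ℤ) :
    Hobj A i (X⟦n⟧) ≅ Hobj A (n + i) X :=
  ((DerivedCategory.homologyFunctor (ModuleCat.{u} A) 0).shiftIso n i (n + i) rfl).app X

/-- The cohomology of `X` is concentrated in `[a, b]` and nonzero in degrees `a` and `b`. -/
structure HasAmplitude (X : DerivedCategory (ModuleCat.{u} A)) (a b : ℤ) : Prop where
  not_isZero_left : ¬ IsZero (Hobj A a X)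
  not_isZero_right : ¬ IsZero (Hobj A b X)
  isZero : ∀ i, i ∉ Set.Icc a b → IsZero (Hobj A i X)

namespace HasAmplitude

variable {X Y : DerivedCategory (ModuleCat.{u} A)} {a b : ℤ}

theorem mem_Icc (hX : HasAmplitude X a b) {i : ℤ} (hi : ¬ IsZero (Hobj A i X)) :
    i ∈ Set.Icc a b := by
  by_contra h
  exact hi (hX.isZero i h)

theorem not_isZero_obj (hX : HasAmplitude X a b) : ¬ IsZero X := fun h ↦
  hX.not_isZero_left ((DerivedCategory.homologyFunctor (ModuleCat.{u} A) a).map_isZero h)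

theorem bdd (hX : HasAmplitude X a b) : Bdd A X :=
  ⟨a, b, fun i hi ↦ hX.isZero i fun h ↦ hi.elim h.1.not_gt h.2.not_gt⟩

theorem hw_eq (hX : HasAmplitude X a b) : hw A X = (b - a + 1).toNat := by
  have hab : a ≤ b := (hX.mem_Icc hX.not_isZero_left).2
  refine IsGreatest.csSup_eq ⟨⟨a, b, hX.not_isZero_left, hX.not_isZero_right, ?_⟩, ?_⟩
  · exact Int.toNat_of_nonneg (by omega)
  · rintro n ⟨i, j, hi, hj, hn⟩
    have := (hX.mem_Icc hi).1
    have := (hX.mem_Icc hj).2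
    omega

theorem isEmpty_iso_shift (hX : HasAmplitude X a b) (hY : HasAmplitude Y a b) {n : ℤ}
    (hn : n ≠ 0) : IsEmpty (X ≅ Y⟦n⟧) := by
  refine ⟨fun φ ↦ hn ?_⟩
  have hφ {i : ℤ} (hi : ¬ IsZero (Hobj A i X)) : n + i ∈ Set.Icc a b :=
    hY.mem_Icc fun h ↦ hi <| h.of_iso <|
      (DerivedCategory.homologyFunctor (ModuleCat.{u} A) i).mapIso φ ≪≫ hobjShiftIso Y n i
  have := (hφ hX.not_isZero_left).1
  have := (hφ hX.not_isZero_right).2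
  omega

end HasAmplitude

section Range

variable {k : Type u} [Field k] [Algebra k A] {X : DerivedCategory (ModuleCat.{u} A)}
  {d : ℕ}
  (hd : ∀ i, Module.rank k ((ModuleCat.restrictScalars (algebraMap k A)).obj (Hobj A i X)) ≤ d)

include hd

theorem hl_le : hl k A X ≤ d := by
  refine csSup_le' ?_
  rintro n ⟨i, rfl⟩
  exact Module.finrank_le_of_rank_le (hd i)

theorem finCoh_of_rank_le : FinCoh k A X := fun i ↦
  Module.rank_lt_aleph0_iff.mp ((hd i).trans_lt (Cardinal.natCast_lt_aleph0 (n := d)))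

theorem one_le_hl {i : ℤ} (hi : ¬ IsZero (Hobj A i X)) : 1 ≤ hl k A X := by
  have := finCoh_of_rank_le hd i
  have : Nontrivial ((ModuleCat.restrictScalars (algebraMap k A)).obj (Hobj A i X)) := by
    by_contra! h
    have : Subsingleton (Hobj A i X) := h
    exact hi <| ModuleCat.isZero_of_subsingleton _
  have hbdd : BddAbove (Set.range fun i ↦ hdim k A i X) := by
    refine ⟨d, ?_⟩
    rintro n ⟨i, rfl⟩
    exact Module.finrank_le_of_rank_le (hd i)
  exact Nat.lt_of_lt_of_le Module.finrank_pos (le_csSup hbdd ⟨i, rfl⟩)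

end Range

end DerivedCategory

theorem StronglyDerivedUnbounded.of_family {k A : Type u} [Field k] [Ring A] [Algebra k A]
    [HasDerivedCategory.{u} (ModuleCat.{u} A)] {T : Type*} [Infinite T]
    {X : ℕ → T → DerivedCategory (ModuleCat.{u} A)} {b : ℕ → ℕ}
    (hindec : ∀ N t, Indec (X N t)) (hDb : ∀ N t, InDb k A (X N t))
    (hle : ∀ N t, N ≤ hr k A (X N t)) (hbound : ∀ N t, hr k A (X N t) ≤ b N)
    (hiso : ∀ N s t, s ≠ t → ∀ n : ℤ, IsEmpty (X N s ≅ (X N t)⟦n⟧)) :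
    StronglyDerivedUnbounded k A := by
  have hfiber (N : ℕ) : ∃ r, N ≤ r ∧ {t : T | hr k A (X N t) = r}.Infinite := by
    obtain ⟨r, hr⟩ := Finite.exists_infinite_fiber
      fun t ↦ (⟨hr k A (X N t), Nat.lt_succ_of_le (hbound N t)⟩ : Fin (b N + 1))
    have hinf := (Set.infinite_coe_iff.mp hr).mono fun t ht ↦ congrArg Fin.val ht
    obtain ⟨t, ht⟩ := hinf.nonempty
    exact ⟨r, (hle N t).trans_eq ht, hinf⟩
  choose r hr hinf using hfiber
  have hrange : (Set.range r).Infinite :=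
    Set.infinite_of_forall_exists_gt fun N ↦ ⟨r (N + 1), ⟨_, rfl⟩, hr (N + 1)⟩
  refine ⟨Nat.nth (· ∈ Set.range r), Nat.nth_strictMono hrange, fun i ↦ ?_⟩
  obtain ⟨N, hN⟩ : Nat.nth (· ∈ Set.range r) i ∈ Set.range r := Nat.nth_mem_of_infinite hrange i
  let τ := (hinf N).natEmbedding
  exact ⟨fun j ↦ X N (τ j), fun j ↦ ⟨hindec N _, hDb N _, (τ j).2.trans hN⟩,
    fun j j' hj n ↦ hiso N _ _ (fun h ↦ hj (τ.injective (Subtype.ext h))) n⟩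

namespace TruncatedPowerBasis

variable {k A : Type u} [Field k] [Ring A] [Algebra k A]
  [HasDerivedCategory.{u} (ModuleCat.{u} A)] {P : Type u} [AddCommGroup P] [Module A P]
  [Module k P] [IsScalarTower k A P] {pb : TruncatedPowerBasis k (Module.End A P)}

section

variable (hdim : 2 ≤ pb.dim) (N : ℕ) (t : k)

theorem hasAmplitude_familyComplex :
    HasAmplitude (DerivedCategory.Q.obj (pb.familyComplex hdim N t)) (-1) (4 + N) where
  not_isZero_left h := not_isZero_homology_bot hdim N t (h.of_iso (hobjQIso _ _).symm)
  not_isZero_right h := not_isZero_homology_top hdim N t (h.of_iso (hobjQIso _ _).symm)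
  isZero _ hi := (isZero_homology_familyComplex hdim N t hi).of_iso (hobjQIso _ _)

theorem rank_hobj_familyComplex_le [FiniteDimensional k P] (i : ℤ) :
    Module.rank k ((ModuleCat.restrictScalars (algebraMap k A)).obj
      (Hobj A i (DerivedCategory.Q.obj (pb.familyComplex hdim N t)))) ≤
        Module.finrank k (Generator N → P) := by
  rw [Module.finrank_eq_rank]
  exact (rank_restrictScalars_le_of_mono k (hobjQIso _ i).hom).trans
    ((pb.familyDifferential hdim N t).rank_homology_complex_le k i)

theorem hw_familyComplex :
    hw A (DerivedCategory.Q.obj (pb.familyComplex hdim N t)) = N + 6 := by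
  rw [(hasAmplitude_familyComplex hdim N t).hw_eq]
  omega

end

theorem stronglyDerivedUnbounded [Infinite k] [FiniteDimensional k P] [Module.Projective A P]
    [Nontrivial P] (pb : TruncatedPowerBasis k (Module.End A P)) (hdim : 3 ≤ pb.dim) :
    StronglyDerivedUnbounded k A := by
  have h₂ : 2 ≤ pb.dim := by omega
  have hproj (N : ℕ) (t : k) : (pb.familyComplex h₂ N t).IsKProjective :=
    (pb.familyDifferential h₂ N t).isKProjective_complex
  have hamp (N : ℕ) (t : k) := hasAmplitude_familyComplex h₂ N t
  have hrank (N : ℕ) (t : k) := rank_hobj_familyComplex_le h₂ N t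
  refine .of_family (T := k) (X := fun N t ↦ DerivedCategory.Q.obj (pb.familyComplex h₂ N t))
    (b := fun N ↦ (N + 6) * Module.finrank k (Generator N → P)) ?_ ?_ ?_ ?_ ?_
  · exact fun N t ↦ indec_Q_obj (hamp N t).not_isZero_obj
      (isUnit_or_isNilpotent_end_familyComplex hdim t)
  · exact fun N t ↦ ⟨(hamp N t).bdd, finCoh_of_rank_le (hrank N t)⟩
  · intro N t
    calc N ≤ (N + 6) * 1 := by omega
      _ ≤ hr k A _ := Nat.mul_le_mul (hw_familyComplex h₂ N t).ge
        (one_le_hl (hrank N t) (hamp N t).not_isZero_left)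
  · exact fun N t ↦ Nat.mul_le_mul (hw_familyComplex h₂ N t).le (hl_le (hrank N t))
  · intro N s t hst n
    obtain rfl | hn := eq_or_ne n 0
    · have := isEmpty_Q_obj_iso (hamp N s).not_isZero_obj
        (isNilpotent_comp_familyComplex hdim (N := N) hst)
      exact ⟨fun φ ↦ this.false (φ ≪≫ (shiftFunctorZero _ ℤ).app _)⟩
    · exact (hamp N s).isEmpty_iso_shift (hamp N t) hn

end TruncatedPowerBasis

/-! ### The projective module of an idempotent -/

namespace TruncatedPowerBasis

variable {k B B' : Type*} [Field k] [Ring B] [Algebra k B] [Ring B'] [Algebra k B']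

/-- The truncated power basis of the opposite algebra. -/
noncomputable def op (pb : TruncatedPowerBasis k B) : TruncatedPowerBasis k Bᵐᵒᵖ where
  gen := .op pb.gen
  dim := pb.dim
  basis := pb.basis.map (MulOpposite.opLinearEquiv k)
  basis_eq_pow i := by simp
  gen_pow_dim := by rw [← MulOpposite.op_pow, pb.gen_pow_dim, MulOpposite.op_zero]

/-- The transport of a truncated power basis along an isomorphism of algebras. -/
noncomputable def map (pb : TruncatedPowerBasis k B) (φ : B ≃ₐ[k] B') :
    TruncatedPowerBasis k B' where
  gen := φ pb.gen
  dim := pb.dim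
  basis := pb.basis.map φ.toLinearEquiv
  basis_eq_pow i := by simp
  gen_pow_dim := by rw [← map_pow, pb.gen_pow_dim, map_zero]

end TruncatedPowerBasis

namespace CornerAlgebra

section ProjectiveModule

variable {k A : Type*} [Field k] [Ring A] [Algebra k A] {e : A} (he : IsIdempotentElem e)

include he in
theorem mem_span_singleton_iff {v : A} : v ∈ Submodule.span A {e} ↔ v * e = v := by
  rw [Submodule.mem_span_singleton]
  constructor
  · rintro ⟨a, rfl⟩
    rw [smul_eq_mul, mul_assoc, he.eq]
  · exact fun hv ↦ ⟨v, hv⟩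

include he in
theorem projective_span_singleton : Module.Projective A (Submodule.span A {e}) := by
  refine .of_split (M := A) (Submodule.subtype _)
    (LinearMap.toSpanSingleton A _ ⟨e, Submodule.mem_span_singleton_self e⟩) ?_
  ext v
  exact (mem_span_singleton_iff he).mp v.2

variable (k) in
/-- Right multiplication by elements of `eAe` on the left module `Ae`. -/
def opToEnd : he.Cornerᵐᵒᵖ →ₐ[k] Module.End A (Submodule.span A {e}) :=
  .ofLinearMap
    { toFun b := (LinearMap.toSpanSingleton A A b.unop.1).restrict fun v _ ↦
        (mem_span_singleton_iff he).mpr ((mul_assoc v _ e).trans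
          (congrArg (v * ·) (val_mul he b.unop)))
      map_add' b b' := LinearMap.ext fun v ↦ Subtype.ext (mul_add v.1 b.unop.1 b'.unop.1)
      map_smul' c b := LinearMap.ext fun v ↦ Subtype.ext (mul_smul_comm c v.1 b.unop.1) }
    (LinearMap.ext fun v ↦ Subtype.ext ((mem_span_singleton_iff he).mp v.2))
    fun b b' ↦ LinearMap.ext fun v ↦ Subtype.ext (mul_assoc v.1 b'.unop.1 b.unop.1).symm

theorem opToEnd_bijective : Function.Bijective (opToEnd k he) := by
  let generator : Submodule.span A {e} := ⟨e, Submodule.mem_span_singleton_self e⟩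
  constructor
  · intro b b' h
    refine MulOpposite.unop_injective (Subtype.ext ?_)
    rw [← mul_val he b.unop, ← mul_val he b'.unop]
    exact congr(($h generator).1)
  · intro f
    have hf (v : Submodule.span A {e}) : (f v).1 = v.1 * (f generator).1 := by
      have hv : v.1 • generator = v := Subtype.ext ((mem_span_singleton_iff he).mp v.2)
      calc (f v).1 = (f (v.1 • generator)).1 := by rw [hv]
        _ = v.1 * (f generator).1 := by rw [map_smul]; rfl
    have hmem : (f generator).1 ∈ Subsemigroup.corner e :=
      (Subsemigroup.mem_corner_iff he).mpr
        ⟨(hf generator).symm, (mem_span_singleton_iff he).mp (f generator).2⟩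
    exact ⟨.op ⟨(f generator).1, hmem⟩, LinearMap.ext fun v ↦ Subtype.ext (hf v).symm⟩

variable (k) in
/-- The isomorphism `(eAe)ᵒᵖ ≃ End(Ae)` given by right multiplication. -/
noncomputable def opEquivEnd : he.Cornerᵐᵒᵖ ≃ₐ[k] Module.End A (Submodule.span A {e}) :=
  .ofBijective (opToEnd k he) (opToEnd_bijective he)

theorem nontrivial_span_singleton (he0 : e ≠ 0) : Nontrivial (Submodule.span A {e}) :=
  Submodule.nontrivial_iff_ne_bot.mpr (Submodule.span_singleton_eq_bot.not.mpr he0)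

end ProjectiveModule

section Powers

variable {k A : Type*} [Field k] [Ring A] [Algebra k A] {e : A} {he : IsIdempotentElem e}
  (pb : TruncatedPowerBasis k he.Corner)

theorem subtype_basis (i : Fin pb.dim) :
    subtype k he (pb.basis i) = e * pb.gen.1 ^ (i : ℕ) :=
  (congrArg Subtype.val (pb.basis_eq_pow i)).trans (val_pow he _ _)

theorem linearIndependent_mul_gen_pow :
    LinearIndependent k fun i : Fin pb.dim ↦ e * pb.gen.1 ^ (i : ℕ) := by
  simp only [← subtype_basis]
  exact pb.basis.linearIndependent.map' _ (LinearMap.ker_eq_bot.mpr (subtype_injective k he))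

theorem val_mem_span_mul_gen_pow (b : he.Corner) :
    b.1 ∈ Submodule.span k (Set.range fun i : Fin pb.dim ↦ e * pb.gen.1 ^ (i : ℕ)) := by
  simp only [← subtype_basis]
  rw [← Function.comp_def, Set.range_comp, Submodule.span_image, pb.basis.span_eq]
  exact ⟨b, trivial, rfl⟩

theorem val_gen_pow_dim (hdim : 1 ≤ pb.dim) : pb.gen.1 ^ pb.dim = 0 := by
  obtain ⟨n, hn⟩ := Nat.exists_eq_add_of_le' hdim
  calc pb.gen.1 ^ pb.dim = e * pb.gen.1 ^ pb.dim := by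
        rw [hn, pow_succ', ← mul_assoc, mul_val]
    _ = 0 := by rw [← val_pow, pb.gen_pow_dim]; rfl

end Powers

end CornerAlgebra

theorem StronglyDerivedUnbounded.of_corner {k A : Type u} [Field k] [Infinite k] [Ring A]
    [Algebra k A] [FiniteDimensional k A] [HasDerivedCategory.{u} (ModuleCat.{u} A)] {e : A}
    {he : IsIdempotentElem e} (he0 : e ≠ 0) (pb : TruncatedPowerBasis k he.Corner)
    (hdim : 3 ≤ pb.dim) : StronglyDerivedUnbounded k A := by
  have := CornerAlgebra.projective_span_singleton he
  have := CornerAlgebra.nontrivial_span_singleton he0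
  have : FiniteDimensional k (Submodule.span A {e}) :=
    .of_injective ((Submodule.subtype _).restrictScalars k) Subtype.val_injective
  exact (pb.op.map (CornerAlgebra.opEquivEnd k he)).stronglyDerivedUnbounded hdim

theorem corner_algebra_uniserial_of_repFinite
    (hrf : IsRepFinite k A) (e : A) (he : IsPrimitiveIdem A e) :
    ∃ (m : ℕ) (x : A), 1 ≤ m ∧
      e * x * e = x ∧ x ^ m = 0 ∧
      LinearIndependent k (fun i : Fin m => e * x ^ (i : ℕ)) ∧
      (∀ y : A, e * y * e ∈ Submodule.span k (Set.range fun i : Fin m => e * x ^ (i : ℕ))) ∧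
      (¬ StronglyDerivedUnbounded k A → m ≤ 2) := by
  have hidem : IsIdempotentElem e := he.1
  have := CornerAlgebra.nontrivial hidem he.2.1
  obtain ⟨pb⟩ := (hrf.corner hidem).nonempty_truncatedPowerBasis
    (CornerAlgebra.eq_zero_or_one_of_isPrimitiveIdem hidem he)
  have hdim : 1 ≤ pb.dim := Nat.one_le_iff_ne_zero.mpr pb.dim_ne_zero
  refine ⟨pb.dim, pb.gen.1, hdim, CornerAlgebra.mul_val_mul hidem pb.gen,
    CornerAlgebra.val_gen_pow_dim pb hdim, CornerAlgebra.linearIndependent_mul_gen_pow pb,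
    fun y ↦ CornerAlgebra.val_mem_span_mul_gen_pow pb (CornerAlgebra.compress hidem y),
    fun hsdu ↦ ?_⟩
  contrapose! hsdu
  exact .of_corner he.2.1 pb hsdu

end
end
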